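/- arXiv:1006.5285 — 12 statements merged into one kernel-verified Lean document; each statement's English description precedes it below -/
import Mathlib

section
/- Let K be a compact Hausdorff abelian topological group, G a subgroup of K, and N a closed subgroup of K such that the quotient group K/N is NSS. Then G is locally essential in K if and only if G ∩ N is locally essential in N. -/
/-- A subgroup `H` of a topological abelian group `G` is *locally essential* if there is a
neighborhood `V` of `0` such that every closed subgroup `N ⊆ V` with `H ⊓ N = ⊥` is
trivial. (In an abelian group all subgroups are normal.) -/
def LocallyEssential {G : Type*} [AddCommGroup G] [TopologicalSpace G]
    (H : AddSubgroup G) : Prop :=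
  ∃ V ∈ nhds (0 : G), ∀ N : AddSubgroup G, IsClosed (N : Set G) →
    (N : Set G) ⊆ V → H ⊓ N = ⊥ → N = ⊥

/-- A topological abelian group is *NSS* (has no small subgroups) if some neighborhood
of `0` contains no nontrivial subgroup. -/
def IsNSS (G : Type*) [AddCommGroup G] [TopologicalSpace G] : Prop :=
  ∃ V ∈ nhds (0 : G), ∀ N : AddSubgroup G, (N : Set G) ⊆ V → N = ⊥

/-- Let `K` be a compact Hausdorff abelian topological group, `G` a subgroup of `K`, and
`N` a closed subgroup such that `K/N` is NSS. Then `G` is locally essential in `K` iff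
`G ∩ N` is locally essential in `N`. -/
theorem locallyEssential_iff_inter_locallyEssential {K : Type*} [AddCommGroup K]
    [TopologicalSpace K] [IsTopologicalAddGroup K] [T2Space K] [CompactSpace K]
    (G N : AddSubgroup K) (hN : IsClosed (N : Set K)) (hNSS : IsNSS (K ⧸ N)) :
    LocallyEssential G ↔ LocallyEssential (G.addSubgroupOf N) := by
  constructor
  · rintro ⟨V, hV, h⟩
    refine ⟨(fun x : N => (x : K)) ⁻¹' V, continuous_subtype_val.continuousAt.preimage_mem_nhds (by simpa using hV), ?_⟩
    intro M hM hMV hGM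
    have hcl : IsClosed ((M.map N.subtype : AddSubgroup K) : Set K) := by
      rw [AddSubgroup.coe_map]
      exact hN.isClosedEmbedding_subtypeVal.isClosedMap _ hM
    have h1 := h (M.map N.subtype) hcl (by
      rintro _ ⟨x, hx, rfl⟩
      exact hMV hx) (by
      rw [eq_bot_iff]
      rintro _ ⟨hg, x, hx, rfl⟩
      have : x ∈ G.addSubgroupOf N ⊓ M := ⟨hg, hx⟩
      rw [hGM, AddSubgroup.mem_bot] at this
      simp [this])
    exact (AddSubgroup.map_eq_bot_iff_of_injective M N.subtype_injective).1 h1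
  · rintro ⟨W, hW, h⟩
    obtain ⟨V₀, hV₀, h₀⟩ := hNSS
    rw [nhds_subtype_eq_comap] at hW
    obtain ⟨U, hU, hUW⟩ := hW
    have hπ : (QuotientAddGroup.mk : K → K ⧸ N) ⁻¹' V₀ ∈ nhds (0 : K) :=
      QuotientAddGroup.continuous_mk.continuousAt.preimage_mem_nhds (by simpa using hV₀)
    refine ⟨U ∩ (QuotientAddGroup.mk : K → K ⧸ N) ⁻¹' V₀, Filter.inter_mem (by simpa using hU) hπ, ?_⟩
    intro M hM hMV hGM
    have hMN : M ≤ N := by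
      have h1 := h₀ (M.map (QuotientAddGroup.mk' N)) (by
        rintro _ ⟨x, hx, rfl⟩
        exact (hMV hx).2)
      rwa [AddSubgroup.map_eq_bot_iff, QuotientAddGroup.ker_mk'] at h1
    have h2 := h (M.addSubgroupOf N) (hM.preimage continuous_subtype_val)
      (fun x hx => hUW (hMV hx).1) (by
      rw [eq_bot_iff]
      rintro x ⟨hg, hx⟩
      have : (x : K) ∈ G ⊓ M := ⟨hg, hx⟩
      rw [hGM, AddSubgroup.mem_bot] at this
      exact Subtype.ext this)
    rw [eq_bot_iff]
    intro x hx
    have : (⟨x, hMN hx⟩ : N) ∈ M.addSubgroupOf N := hx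
    rw [h2, AddSubgroup.mem_bot] at this
    exact congrArg Subtype.val this
end

section
/- Let K be a compact Hausdorff abelian topological group, d a natural number, and N a closed subgroup of K such that K/N is topologically isomorphic to the torus 𝕋^d (where 𝕋 = ℝ/ℤ). Let G be a dense subgroup of K. Then G (with the subspace topology) is locally minimal if and only if G ∩ N is locally essential in N. -/
/-- A Hausdorff topological abelian group `(G, τ)` is *locally minimal* if there exists a
neighborhood `V` of `0` such that the only Hausdorff group topology `σ` coarser than `τ`
for which `V` is still a `σ`-neighborhood of `0` is `τ` itself. -/
def LocallyMinimal (G : Type*) [AddGroup G] [τ : TopologicalSpace G] : Prop :=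
  ∃ V ∈ nhds (0 : G), ∀ σ : TopologicalSpace G, τ ≤ σ →
    @IsTopologicalAddGroup G σ _ → @T2Space G σ → V ∈ @nhds G σ 0 → σ = τ

open Topology Pointwise in
lemma aux_group_facts {A : Type*} [AddCommGroup A] [TopologicalSpace A] [IsTopologicalAddGroup A]
    [T2Space A] :
    (∀ U ∈ 𝓝 (0 : A), ∃ W ∈ 𝓝 (0 : A), ∀ a ∈ W, ∀ b ∈ W, a - b ∈ U) ∧
    (∀ g : A, g ≠ 0 → {g}ᶜ ∈ 𝓝 (0 : A)) ∧
    (∀ g : A, ∀ W ∈ 𝓝 (0 : A), {x | x - g ∈ W} ∈ 𝓝 g) := by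
  refine ⟨fun U hU => ?_, fun g hg => ?_, fun g W hW => ?_⟩
  · obtain ⟨W, hW, h⟩ := exists_nhds_half_neg hU
    exact ⟨W, hW, fun a ha b hb => h a ha b hb⟩
  · exact isOpen_compl_singleton.mem_nhds (by simpa using hg.symm)
  · have : Filter.Tendsto (fun x : A => x - g) (𝓝 g) (𝓝 0) := by
      have h : Continuous (fun x : A => x - g) := by fun_prop
      simpa using h.tendsto g
    exact this hW

open Topology in
lemma aux_filter {K : Type*} [AddCommGroup K]
    [TopologicalSpace K] [IsTopologicalAddGroup K] [T2Space K] [CompactSpace K]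
    (G : AddSubgroup K) (V : Set K)
    (hV : ∀ N : AddSubgroup K, IsClosed (N : Set K) → (N : Set K) ⊆ V → G ⊓ N = ⊥ → N = ⊥)
    (V1 : Set K) (hV1 : IsClosed V1) (hV1V : V1 ⊆ V)
    (F : Filter G)
    (hsub : ∀ U ∈ F, ∃ W ∈ F, ∀ a ∈ W, ∀ b ∈ W, a - b ∈ U)
    (hsep : ∀ g : G, g ≠ 0 → {g}ᶜ ∈ F)
    (htr : ∀ g : G, ∀ W ∈ F, {x | x - g ∈ W} ∈ 𝓝 g)
    (h0 : ∀ U ∈ F, (0 : G) ∈ U)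
    (hVF : ((↑) : G → K) ⁻¹' V1 ∈ F) : F ≤ 𝓝 0 := by
  let C : Set G → Set K := fun U => closure (((↑) : G → K) '' U)
  have hC : ∀ U W : Set G, (∀ a ∈ W, ∀ b ∈ W, a - b ∈ U) → ∀ x ∈ C W, ∀ y ∈ C W, x - y ∈ C U := by
    intro U W h x hx y hy
    refine map_mem_closure₂ (f := fun x y : K => x - y) continuous_sub hx hy ?_
    rintro _ ⟨a, ha, rfl⟩ _ ⟨b, hb, rfl⟩
    exact ⟨a - b, h a ha b hb, by simp⟩
  have hz : ∀ U ∈ F, (0 : K) ∈ C U := fun U hU => subset_closure ⟨0, h0 U hU, rfl⟩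
  have hs : ∀ x y : K, (∀ U ∈ F, x ∈ C U) → (∀ U ∈ F, y ∈ C U) → ∀ U ∈ F, x - y ∈ C U := by
    intro x y hx hy U hU
    obtain ⟨W, hW, h⟩ := hsub U hU
    exact hC U W h x (hx W hW) y (hy W hW)
  have hn : ∀ x : K, (∀ U ∈ F, x ∈ C U) → ∀ U ∈ F, -x ∈ C U := by
    intro x hx U hU
    simpa using hs 0 x hz hx U hU
  let M : AddSubgroup K :=
    { carrier := {x | ∀ U ∈ F, x ∈ C U}
      zero_mem' := hz
      add_mem' := by
        intro x y hx hy U hU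
        simpa using hs x (-y) hx (hn y hy) U hU
      neg_mem' := by
        intro x hx
        exact hn x hx }
  have hMcl : IsClosed (M : Set K) := by
    have : (M : Set K) = ⋂ U ∈ F, C U := by
      ext x; simp [M]
    rw [this]
    exact isClosed_biInter fun U _ => isClosed_closure
  have hMV : (M : Set K) ⊆ V := by
    intro x hx
    apply hV1V
    have := hx _ hVF
    exact closure_minimal (Set.image_preimage_subset _ _) hV1 this
  have hGM : G ⊓ M = ⊥ := by
    rw [eq_bot_iff]
    rintro x ⟨hxG, hxM⟩
    by_contra hne
    have hg : (⟨x, hxG⟩ : G) ≠ 0 := fun h => hne (by simpa using congrArg Subtype.val h)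
    obtain ⟨W, hW, h⟩ := hsub _ (hsep _ hg)
    have h1 : (⟨x, hxG⟩ : G) ∈ closure W := by
      rw [Topology.IsInducing.subtypeVal.closure_eq_preimage_closure_image]
      exact hxM W hW
    obtain ⟨u, hu1, hu2⟩ := mem_closure_iff_nhds.1 h1 _ (htr _ W hW)
    have := h u hu2 _ hu1
    simp at this
  have hM := hV M hMcl hMV hGM
  intro O hO
  obtain ⟨O', hO', hOO⟩ := mem_nhds_induced _ _ _ |>.1 hO
  have : Nonempty {U // U ∈ F} := ⟨⟨_, Filter.univ_mem⟩⟩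
  obtain ⟨⟨U, hU⟩, hUO⟩ := exists_subset_nhds_of_isCompact' (V := fun U : {U // U ∈ F} => C U.1)
    (U := O') (by
      rintro ⟨U, hU⟩ ⟨W, hW⟩
      exact ⟨⟨U ∩ W, Filter.inter_mem hU hW⟩,
        closure_mono (Set.image_mono Set.inter_subset_left),
        closure_mono (Set.image_mono Set.inter_subset_right)⟩)
    (fun _ => isClosed_closure.isCompact) (fun _ => isClosed_closure) (by
      intro x hx
      have hxM : x ∈ M := fun U hU => Set.mem_iInter.1 hx ⟨U, hU⟩
      rw [hM, AddSubgroup.mem_bot] at hxM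
      subst hxM
      exact hO')
  refine Filter.mem_of_superset hU fun u hu => hOO ?_
  exact hUO (subset_closure ⟨u, hu, rfl⟩)

open Topology in
lemma aux_criterion {K : Type*} [AddCommGroup K]
    [TopologicalSpace K] [IsTopologicalAddGroup K] [T2Space K] [CompactSpace K]
    (G : AddSubgroup K) (hG : Dense (G : Set K)) :
    LocallyMinimal ↥G ↔ LocallyEssential G := by
  constructor
  · rintro ⟨V, hV, hmin⟩
    obtain ⟨V', hV', hVV⟩ := mem_nhds_induced _ _ _ |>.1 hV
    obtain ⟨W, hW, hWV⟩ := exists_nhds_zero_half hV'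
    refine ⟨W, hW, fun M hMc hMW hGM => ?_⟩
    have : IsClosed (M : Set K) := hMc
    let q : G →+ K ⧸ M := (QuotientAddGroup.mk' M).comp G.subtype
    have hqc : Continuous q := by
      exact (continuous_quotient_mk').comp continuous_subtype_val
    have hqi : Function.Injective q := by
      rw [injective_iff_map_eq_zero]
      intro a ha
      have h1 : (a : K) ∈ M := (QuotientAddGroup.eq_zero_iff _).1 ha
      have h2 : (a : K) ∈ G ⊓ M := ⟨a.2, h1⟩
      rw [hGM, AddSubgroup.mem_bot] at h2
      exact Subtype.ext h2
    have hcont : ∀ B : Set K, IsOpen B → (0 : K) ∈ B → ((↑) : G → K) ⁻¹' B ∈ 𝓝 (0 : G) :=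
      fun B hB h0B => continuous_subtype_val.continuousAt.preimage_mem_nhds (hB.mem_nhds h0B)
    let σ : TopologicalSpace G := TopologicalSpace.induced q inferInstance
    have hσ := hmin σ (continuous_iff_le_induced.1 hqc) (topologicalAddGroup_induced q)
      (@T2Space.of_injective_continuous _ _ σ _ _ _ hqi continuous_induced_dom) (by
        rw [mem_nhds_induced]
        refine ⟨((↑) : K → K ⧸ M) '' W, ?_, ?_⟩
        · have := (QuotientAddGroup.isOpenMap_coe (N := M)).image_mem_nhds hW
          rw [map_zero]
          exact this
        · rintro g ⟨w, hw, hwg⟩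
          apply hVV
          have h1 : -w + (g : K) ∈ M := QuotientAddGroup.eq.1 hwg
          have := hWV w hw _ (hMW h1)
          simpa using this)
    rw [eq_bot_iff]
    intro m hm
    rw [AddSubgroup.mem_bot]
    by_contra hne
    obtain ⟨A, B, hA, hB, hmA, h0B, hAB⟩ := t2_separation hne
    have hB' : ((↑) : G → K) ⁻¹' B ∈ @nhds G σ 0 := by
      rw [hσ]
      exact hcont B hB h0B
    rw [mem_nhds_induced] at hB'
    obtain ⟨D, hD, hDB⟩ := hB'
    rw [map_zero] at hD
    have hD' : ((↑) : K → K ⧸ M) ⁻¹' D ∈ 𝓝 m := by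
      apply (continuous_quotient_mk').continuousAt.preimage_mem_nhds
      have : ((m : K) : K ⧸ M) = 0 := (QuotientAddGroup.eq_zero_iff _).2 hm
      change D ∈ 𝓝 ((m : K) : K ⧸ M)
      rw [this]; exact hD
    obtain ⟨g, ⟨hgA, hgD⟩, hgG⟩ := mem_closure_iff_nhds.1 (hG m) _
      (Filter.inter_mem (hA.mem_nhds hmA) hD')
    have hgB : g ∈ B := hDB (show (⟨g, hgG⟩ : G) ∈ q ⁻¹' D from hgD)
    exact Set.disjoint_left.1 hAB hgA hgB
  · rintro ⟨V, hV, hess⟩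
    obtain ⟨V1, hV1, hV1c, hV1V⟩ := exists_mem_nhds_isClosed_subset hV
    refine ⟨((↑) : G → K) ⁻¹' V1,
      continuous_subtype_val.continuousAt.preimage_mem_nhds hV1, ?_⟩
    intro σ hle hgr ht2 hVσ
    obtain ⟨f1, f2, f3⟩ := @aux_group_facts G _ σ hgr ht2
    have hle' : ∀ x : G, @nhds G instTopologicalSpaceSubtype x ≤ @nhds G σ x := fun x => nhds_mono hle
    have key := aux_filter G V hess V1 hV1c hV1V (@nhds G σ 0) f1 f2
      (fun g W hW => hle' g (f3 g W hW)) (fun U hU => @mem_of_mem_nhds _ σ _ _ hU) hVσ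
    exact IsTopologicalAddGroup.ext hgr inferInstance (le_antisymm key (hle' 0))

lemma aux_double (x : UnitAddCircle) (hx : ‖x‖ < 1 / 4) : ‖x + x‖ = 2 * ‖x‖ := by
  induction x using QuotientAddGroup.induction_on with
  | H r =>
    have h1 : ‖(r : UnitAddCircle)‖ = |r - round r| := UnitAddCircle.norm_eq
    have h2 : (r : UnitAddCircle) = ((r - round r : ℝ) : UnitAddCircle) := by
      have h3 : (((round r : ℤ) : ℝ) : UnitAddCircle) = 0 :=
        (AddCircle.coe_eq_zero_iff 1).2 ⟨round r, by simp⟩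
      rw [AddCircle.coe_sub, h3, sub_zero]
    change ‖(r : UnitAddCircle)‖ < 1 / 4 at hx
    change ‖(r : UnitAddCircle) + (r : UnitAddCircle)‖ = 2 * ‖(r : UnitAddCircle)‖
    rw [h1] at hx ⊢
    rw [h2, ← AddCircle.coe_add]
    rw [(AddCircle.norm_coe_eq_abs_iff (1 : ℝ) one_ne_zero).2]
    · rw [← two_mul, abs_mul]; norm_num
    · rw [← two_mul, abs_mul]; norm_num; linarith

lemma aux_nss (x : UnitAddCircle) (hx : ∀ n : ℕ, ‖n • x‖ < 1 / 4) : x = 0 := by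
  have h : ∀ k : ℕ, ‖(2 ^ k) • x‖ = 2 ^ k * ‖x‖ := by
    intro k
    induction k with
    | zero => simp
    | succ k ih =>
      rw [pow_succ, mul_comm, mul_smul, two_nsmul, aux_double _ (hx _), ih]
      ring
  by_contra hne
  have hpos : 0 < ‖x‖ := norm_pos_iff.2 hne
  obtain ⟨k, hk⟩ := pow_unbounded_of_one_lt (1 / ‖x‖) (one_lt_two : (1 : ℝ) < 2)
  have h1 := hx (2 ^ k)
  rw [h] at h1
  rw [div_lt_iff₀ hpos] at hk
  linarith

/-- Let `K` be a compact Hausdorff abelian group, `N` a closed subgroup with `K/N`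
topologically isomorphic to the torus `𝕋^d`, and `G` a dense subgroup of `K`. Then `G` is
locally minimal iff `G ∩ N` is locally essential in `N`. -/
theorem denseSubgroup_locallyMinimal_iff_inter_locallyEssential {K : Type*} [AddCommGroup K]
    [TopologicalSpace K] [IsTopologicalAddGroup K] [T2Space K] [CompactSpace K]
    (d : ℕ) (N : AddSubgroup K) (hN : IsClosed (N : Set K))
    (e : (K ⧸ N) ≃+ (Fin d → UnitAddCircle)) (he : Continuous e) (he' : Continuous e.symm)
    (G : AddSubgroup K) (hG : Dense (G : Set K)) :
    LocallyMinimal ↥G ↔ LocallyEssential (G.addSubgroupOf N) := by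
  rw [aux_criterion G hG]
  constructor
  · rintro ⟨V, hV, h⟩
    refine ⟨((↑) : N → K) ⁻¹' V, continuous_subtype_val.continuousAt.preimage_mem_nhds hV, ?_⟩
    intro M hMc hMV hGM
    have := h (M.map N.subtype) (hN.isClosedEmbedding_subtypeVal.isClosedMap _ hMc)
      (by rintro _ ⟨m, hm, rfl⟩; exact hMV hm) (by
        rw [eq_bot_iff]
        rintro _ ⟨hxG, ⟨m, hm, rfl⟩⟩
        have h1 : m ∈ G.addSubgroupOf N ⊓ M := ⟨hxG, hm⟩
        rw [hGM, AddSubgroup.mem_bot] at h1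
        simp [h1])
    exact (AddSubgroup.map_eq_bot_iff_of_injective _ Subtype.val_injective).1 this
  · rintro ⟨V, hV, h⟩
    obtain ⟨V', hV', hVV⟩ := mem_nhds_induced _ _ _ |>.1 hV
    let π : K →+ (Fin d → UnitAddCircle) := e.toAddMonoidHom.comp (QuotientAddGroup.mk' N)
    have hπ : Continuous π := he.comp continuous_quotient_mk'
    have hU : π ⁻¹' Metric.ball 0 (1 / 4) ∈ nhds (0 : K) := by
      apply hπ.continuousAt.preimage_mem_nhds
      rw [map_zero]
      exact Metric.ball_mem_nhds _ (by norm_num)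
    refine ⟨V' ∩ π ⁻¹' Metric.ball 0 (1 / 4), Filter.inter_mem hV' hU, ?_⟩
    intro M hMc hMV hGM
    have hMN : M ≤ N := by
      intro m hm
      have h0 : π m = 0 := by
        funext i
        apply aux_nss
        intro n
        have h1 := (hMV (M.nsmul_mem hm n)).2
        rw [Set.mem_preimage, mem_ball_zero_iff, map_nsmul] at h1
        exact lt_of_le_of_lt (norm_le_pi_norm (n • π m) i) h1
      have h2 : ((m : K) : K ⧸ N) = 0 := e.injective (h0.trans (map_zero e).symm)
      exact (QuotientAddGroup.eq_zero_iff _).1 h2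
    have := h (M.addSubgroupOf N) (hMc.preimage continuous_subtype_val)
      (fun m hm => hVV (hMV hm).1) (by
        rw [eq_bot_iff]
        rintro x ⟨hxG, hxM⟩
        have h1 : (x : K) ∈ G ⊓ M := ⟨hxG, hxM⟩
        rw [hGM, AddSubgroup.mem_bot] at h1
        exact Subtype.ext h1)
    rw [eq_bot_iff]
    intro m hm
    have h1 : (⟨m, hMN hm⟩ : N) ∈ M.addSubgroupOf N := hm
    rw [this, AddSubgroup.mem_bot] at h1
    exact congrArg Subtype.val h1
end

section
/- Let K be a compact Hausdorff abelian topological group and let G be a dense subgroup of K whose subspace topology is linear, i.e. G has a neighborhood basis at 0 consisting of open subgroups. Then G is locally minimal if and only if G has an open subgroup which is minimal. -/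
/-- A Hausdorff topological abelian group `(G, τ)` is *minimal* if there is no Hausdorff
group topology on `G` strictly coarser than `τ`. -/
def IsMinimal (G : Type*) [AddGroup G] [τ : TopologicalSpace G] : Prop :=
  ∀ σ : TopologicalSpace G, τ ≤ σ →
    @IsTopologicalAddGroup G σ _ → @T2Space G σ → σ = τ

open Topology in
/-- Extension of a group topology from a subgroup, with the subgroup open. -/
theorem exists_ext_topology {A : Type*} [AddCommGroup A] (W : AddSubgroup A)
    (σ : TopologicalSpace W) (hσ : @IsTopologicalAddGroup W σ _) :
    ∃ ρ : TopologicalSpace A, @IsTopologicalAddGroup A ρ _ ∧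
      @nhds A ρ 0 = Filter.map (Subtype.val : W → A) (@nhds W σ 0) := by
  let B : AddGroupFilterBasis A := addGroupFilterBasisOfComm
    {S : Set A | ∃ U ∈ 𝓝 (0 : W), S = Subtype.val '' U}
    ⟨_, Set.univ, Filter.univ_mem, rfl⟩
    (by
      rintro _ _ ⟨U, hU, rfl⟩ ⟨U', hU', rfl⟩
      refine ⟨_, ⟨U ∩ U', Filter.inter_mem hU hU', rfl⟩, ?_⟩
      exact Set.image_inter_subset _ _ _)
    (by
      rintro _ ⟨U, hU, rfl⟩
      exact ⟨0, mem_of_mem_nhds hU, rfl⟩)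
    (by
      rintro _ ⟨U, hU, rfl⟩
      obtain ⟨V, hV, h⟩ := exists_nhds_zero_half hU
      refine ⟨_, ⟨V, hV, rfl⟩, ?_⟩
      rintro _ ⟨_, ⟨a, ha, rfl⟩, _, ⟨b, hb, rfl⟩, rfl⟩
      exact ⟨a + b, h a ha b hb, rfl⟩)
    (by
      rintro _ ⟨U, hU, rfl⟩
      have h : (fun x : W => -x) ⁻¹' U ∈ 𝓝 (0 : W) :=
        continuous_neg.continuousAt.preimage_mem_nhds (by simpa using hU)
      refine ⟨_, ⟨_, h, rfl⟩, ?_⟩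
      rintro _ ⟨a, ha, rfl⟩
      exact ⟨-a, ha, rfl⟩)
  refine ⟨B.topology, B.isTopologicalAddGroup, ?_⟩
  ext S
  rw [B.nhds_zero_hasBasis.mem_iff, Filter.mem_map]
  constructor
  · rintro ⟨_, ⟨U, hU, rfl⟩, h⟩
    exact Filter.mem_of_superset hU (Set.image_subset_iff.1 h)
  · intro h
    exact ⟨_, ⟨_, h, rfl⟩, Set.image_preimage_subset _ _⟩

theorem le_of_nhds_zero_le {A : Type*} [AddGroup A] {τ σ : TopologicalSpace A}
    (hτ : @IsTopologicalAddGroup A τ _) (hσ : @IsTopologicalAddGroup A σ _)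
    (h : @nhds A τ 0 ≤ @nhds A σ 0) : τ ≤ σ := by
  refine le_of_nhds_le_nhds fun x => ?_
  rw [← @map_add_left_nhds_zero A τ _ _ x, ← @map_add_left_nhds_zero A σ _ _ x]
  exact Filter.map_mono h

theorem nhds_zero_eq_map {A : Type*} [AddCommGroup A] [TopologicalSpace A]
    (W : AddSubgroup A) (hW : IsOpen (W : Set A)) :
    nhds (0 : A) = Filter.map (Subtype.val : W → A) (nhds 0) :=
  (hW.isOpenEmbedding_subtypeVal.map_nhds_eq (0 : W)).symm

theorem locMin_iff {A : Type*} [AddCommGroup A] [τ : TopologicalSpace A]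
    [hτ : IsTopologicalAddGroup A]
    (hlin : ∀ V ∈ nhds (0 : A), ∃ W : AddSubgroup A,
      IsOpen (W : Set A) ∧ (W : Set A) ⊆ V) :
    LocallyMinimal A ↔
      ∃ W : AddSubgroup A, IsOpen (W : Set A) ∧ IsMinimal ↥W := by
  constructor
  · rintro ⟨V, hV, hmin⟩
    obtain ⟨W, hWo, hWV⟩ := hlin V hV
    refine ⟨W, hWo, fun σ hle hσ hT => ?_⟩
    have key := nhds_zero_eq_map W hWo
    obtain ⟨ρ, hρ, hn⟩ := exists_ext_topology W σ hσ
    have e : ρ = τ := by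
      refine hmin ρ (le_of_nhds_zero_le hτ hρ ?_) hρ ?_ ?_
      · rw [hn, key]
        exact Filter.map_mono (nhds_mono hle)
      · refine @IsTopologicalAddGroup.t2Space_of_zero_sep A ρ _ hρ fun x hx => ?_
        rw [hn]
        by_cases hxW : x ∈ W
        · have hne : (0 : W) ≠ ⟨x, hxW⟩ := fun h => hx (congrArg Subtype.val h).symm
          refine ⟨Subtype.val '' ({⟨x, hxW⟩}ᶜ : Set W),
            Filter.image_mem_map (@IsOpen.mem_nhds W σ 0 _ (@isOpen_compl_singleton W σ _ _) hne), ?_⟩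
          rintro ⟨y, hy, h⟩
          exact hy (Subtype.ext h)
        · refine ⟨W, ?_, hxW⟩
          rw [Filter.mem_map]
          exact Filter.univ_mem' fun y => y.2
      · rw [hn, Filter.mem_map]
        exact Filter.univ_mem' fun y => hWV y.2
    subst e
    refine IsTopologicalAddGroup.ext hσ inferInstance ?_
    exact Filter.map_injective Subtype.val_injective (hn.symm.trans key)
  · rintro ⟨W, hWo, hmin⟩
    refine ⟨W, hWo.mem_nhds W.zero_mem, fun σ hle hσ hT hW => ?_⟩
    have hWσ : @IsOpen A σ (W : Set A) := @AddSubgroup.isOpen_of_mem_nhds A _ σ _ W 0 hW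
    have e := hmin (@instTopologicalSpaceSubtype A _ σ) (induced_mono hle)
      (@AddSubgroup.instIsTopologicalAddGroupSubtypeMem A σ _ _ W) (@instT2SpaceSubtype A σ _ hT)
    refine IsTopologicalAddGroup.ext hσ hτ ?_
    rw [@nhds_zero_eq_map A _ τ W hWo, @nhds_zero_eq_map A _ σ W hWσ, e]

/-- Let `K` be a compact Hausdorff abelian group and `G` a dense subgroup whose subspace
topology is linear (it has a neighborhood basis at `0` of open subgroups). Then `G` is
locally minimal iff `G` has an open minimal subgroup. -/
theorem linear_denseSubgroup_locallyMinimal_iff {K : Type*} [AddCommGroup K]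
    [TopologicalSpace K] [IsTopologicalAddGroup K] [T2Space K] [CompactSpace K]
    (G : AddSubgroup K) (hG : Dense (G : Set K))
    (hlin : ∀ V ∈ nhds (0 : ↥G), ∃ W : AddSubgroup ↥G,
      IsOpen (W : Set ↥G) ∧ (W : Set ↥G) ⊆ V) :
    LocallyMinimal ↥G ↔
      ∃ W : AddSubgroup ↥G, IsOpen (W : Set ↥G) ∧ IsMinimal ↥W := by
  exact locMin_iff hlin
end

section
/- Let K be a compact Hausdorff abelian topological group and G a dense subgroup of K. If there exists an infinite totally disconnected closed subgroup N of K with G ∩ N = {0}, then G (with the subspace topology) is not locally minimal. -/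
/-- Let `K` be a compact Hausdorff abelian group and `G` a dense subgroup. If there is an
infinite totally disconnected closed subgroup `N` of `K` with `G ⊓ N = {0}`, then `G` is
not locally minimal. -/
theorem not_locallyMinimal_of_disjoint_totallyDisconnected {K : Type*} [AddCommGroup K]
    [TopologicalSpace K] [IsTopologicalAddGroup K] [T2Space K] [CompactSpace K]
    (G N : AddSubgroup K) (hG : Dense (G : Set K)) (hN : IsClosed (N : Set K))
    (hinf : (N : Set K).Infinite) (htd : TotallyDisconnectedSpace ↥N)
    (hdisj : G ⊓ N = ⊥) :
    ¬ LocallyMinimal ↥G := by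
  rintro ⟨V, hV, hmin⟩
  obtain ⟨U, hU, hUV⟩ := (mem_nhds_subtype _ _ _).1 hV
  have hU0 : U ∈ nhds (0 : K) := hU
  obtain ⟨W, hWo, hW0, hWU⟩ := exists_open_nhds_zero_add_subset hU0
  have : CompactSpace ↥N := isCompact_iff_compactSpace.1 hN.isCompact
  obtain ⟨H, hH⟩ := ProfiniteGrp.exist_openNormalAddSubgroup_sub_open_nhds_of_zero
    (G := ↥N) (U := (Subtype.val ⁻¹' W : Set ↥N)) (hWo.preimage continuous_subtype_val)
    (by simpa using hW0)
  have hHop : IsOpen (H.toAddSubgroup : Set ↥N) := H.isOpen'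
  have hHcl : IsClosed (H.toAddSubgroup : Set ↥N) := AddSubgroup.isClosed_of_isOpen _ hHop
  let M : AddSubgroup K := H.toAddSubgroup.map N.subtype
  have hMcl : IsClosed (M : Set K) := by
    have := hN.isClosedEmbedding_subtypeVal.isClosedMap _ hHcl
    exact this
  have hMW : ∀ x ∈ M, x ∈ W := by
    rintro _ ⟨y, hy, rfl⟩
    exact hH hy
  have hMN : ∀ x ∈ M, x ∈ N := by
    rintro _ ⟨y, hy, rfl⟩
    exact y.2
  have hMne : ∃ m ∈ M, m ≠ 0 := by
    by_contra! hc
    have hs : (H.toAddSubgroup : Set ↥N) = {0} := by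
      ext y
      constructor
      · intro hy
        have := hc y.1 ⟨y, hy, rfl⟩
        exact Subtype.ext this
      · intro hy
        rw [Set.mem_singleton_iff.1 hy]
        exact H.toAddSubgroup.zero_mem
    rw [hs] at hHop
    have : DiscreteTopology ↥N := discreteTopology_of_isOpen_singleton_zero hHop
    have : Finite ↥N := finite_of_compact_of_discrete
    exact hinf (Set.toFinite _)
  obtain ⟨m, hmM, hm0⟩ := hMne
  have := hMcl
  let f : ↥G →+ K ⧸ M := (QuotientAddGroup.mk' M).comp G.subtype
  have hfinj : Function.Injective f := by
    rw [injective_iff_map_eq_zero]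
    intro g hg
    have h1 : (g : K) ∈ M := (QuotientAddGroup.eq_zero_iff _).1 hg
    have h2 : (g : K) ∈ G ⊓ N := ⟨g.2, hMN _ h1⟩
    rw [hdisj] at h2
    exact Subtype.ext h2
  have hfc : Continuous f := QuotientAddGroup.continuous_mk.comp continuous_subtype_val
  have hσ := hmin (TopologicalSpace.induced f inferInstance) hfc.le_induced
    (topologicalAddGroup_induced f)
    (@T2Space.of_injective_continuous _ _ (TopologicalSpace.induced f inferInstance) _ _ f
      hfinj continuous_induced_dom) (by
      rw [nhds_induced, Filter.mem_comap]
      refine ⟨(fun x : K => (x : K ⧸ M)) '' W,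
        (QuotientAddGroup.isOpenMap_coe _ hWo).mem_nhds ⟨0, hW0, rfl⟩, ?_⟩
      rintro g ⟨w, hw, hwg⟩
      apply hUV
      have h1 : -w + (g : K) ∈ M := QuotientAddGroup.eq.1 hwg
      have := hWU (Set.add_mem_add hw (hMW _ h1))
      simpa using this)
  obtain ⟨O, O2, hO, hO2, h0O, hmO2, hd⟩ := t2_separation hm0.symm
  have hOn : (Subtype.val ⁻¹' O : Set ↥G) ∈ nhds (0 : ↥G) :=
    (hO.preimage continuous_subtype_val).mem_nhds h0O
  rw [← hσ, nhds_induced, Filter.mem_comap] at hOn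
  obtain ⟨P, hP, hPO⟩ := hOn
  have hQ : (fun x : K => (x : K ⧸ M)) ⁻¹' P ∈ nhds m := by
    apply QuotientAddGroup.continuous_mk.continuousAt.preimage_mem_nhds
    have : ((m : K) : K ⧸ M) = f 0 := by
      rw [map_zero]
      exact (QuotientAddGroup.eq_zero_iff _).2 hmM
    rw [this]
    exact hP
  obtain ⟨x, hx, hxG⟩ := mem_closure_iff_nhds.1 (hG m) _
    (Filter.inter_mem hQ (hO2.mem_nhds hmO2))
  exact Set.disjoint_left.1 hd (hPO (a := ⟨x, hxG⟩) hx.1) hx.2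
end

section
/- Let K be a compact Hausdorff abelian topological group which is torsion (every element has finite order), and let G be a subgroup of K. Then G (with the subspace topology) is locally minimal if and only if G has an open subgroup which is minimal. -/
open Finset in
theorem bogo_parseval {F : Type*} [AddCommGroup F] [Fintype F] (B : Finset F) :
    ∑ χ : AddChar F ℂ, ‖∑ b ∈ B, χ b‖ ^ 2 = (Fintype.card F : ℝ) * #B := by
  classical
  have h : ∑ χ : AddChar F ℂ, ((‖∑ b ∈ B, χ b‖ : ℂ)) ^ 2 = (Fintype.card F : ℂ) * #B := by
    have : ∀ χ : AddChar F ℂ, ((‖∑ b ∈ B, χ b‖ : ℂ)) ^ 2 = ∑ a ∈ B, ∑ b ∈ B, χ (a - b) := by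
      intro χ
      rw [← Complex.mul_conj', map_sum, sum_mul_sum]
      refine sum_congr rfl fun a _ => sum_congr rfl fun b _ => ?_
      rw [sub_eq_add_neg, AddChar.map_add_eq_mul, AddChar.map_neg_eq_conj]
    simp_rw [this]
    rw [sum_comm]
    simp_rw [sum_comm (s := univ), AddChar.sum_apply_eq_ite, sub_eq_zero]
    simp [mul_comm]
  exact_mod_cast h

open Finset in
theorem bogo_four {F : Type*} [AddCommGroup F] [Fintype F] (B : Finset F) (h : F)
    (hh : ¬ ∃ a ∈ B, ∃ b ∈ B, ∃ c ∈ B, ∃ d ∈ B, h = a + b - c - d) :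
    ∑ χ : AddChar F ℂ, ‖∑ b ∈ B, χ b‖ ^ 4 * (χ h).re = 0 := by
  classical
  have H : ∑ χ : AddChar F ℂ, ((‖∑ b ∈ B, χ b‖ : ℂ)) ^ 4 * χ h = 0 := by
    have : ∀ χ : AddChar F ℂ, ((‖∑ b ∈ B, χ b‖ : ℂ)) ^ 4 * χ h =
        ∑ a ∈ B, ∑ b ∈ B, ∑ c ∈ B, ∑ d ∈ B, χ (a - b + (c - d) + h) := by
      intro χ
      have h2 : ((‖∑ b ∈ B, χ b‖ : ℂ)) ^ 2 = ∑ a ∈ B, ∑ b ∈ B, χ (a - b) := by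
        rw [← Complex.mul_conj', map_sum, sum_mul_sum]
        refine sum_congr rfl fun a _ => sum_congr rfl fun b _ => ?_
        rw [sub_eq_add_neg, AddChar.map_add_eq_mul, AddChar.map_neg_eq_conj]
      rw [show ((‖∑ b ∈ B, χ b‖ : ℂ)) ^ 4 =
        ((‖∑ b ∈ B, χ b‖ : ℂ)) ^ 2 * ((‖∑ b ∈ B, χ b‖ : ℂ)) ^ 2 by ring, h2]
      simp_rw [AddChar.map_add_eq_mul, sum_mul, mul_sum, sum_mul]
    simp_rw [this]
    rw [sum_comm]
    refine sum_eq_zero fun a ha => ?_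
    rw [sum_comm]
    refine sum_eq_zero fun b hb => ?_
    rw [sum_comm]
    refine sum_eq_zero fun c hc => ?_
    rw [sum_comm]
    refine sum_eq_zero fun d hd => ?_
    rw [AddChar.sum_apply_eq_ite, if_neg]
    intro h0
    refine hh ⟨b, hb, d, hd, a, ha, c, hc, ?_⟩
    rw [← sub_eq_zero, ← h0]
    abel
  have := congrArg Complex.re H
  rw [Complex.re_sum] at this
  rw [← Complex.zero_re, ← this]
  refine sum_congr rfl fun χ _ => ?_
  rw [← Complex.ofReal_pow, Complex.re_ofReal_mul]

open Finset in
theorem bogo {F : Type*} [AddCommGroup F] [Fintype F] (n m : ℕ) (hn : 0 < n)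
    (htor : ∀ x : F, n • x = 0) (B : Finset F) (hB : Fintype.card F ≤ m * #B) :
    ∃ H : AddSubgroup F,
      (∀ h ∈ H, ∃ a ∈ B, ∃ b ∈ B, ∃ c ∈ B, ∃ d ∈ B, h = a + b - c - d) ∧
      ∀ g : Fin (n ^ (m ^ 2) + 1) → F, ∃ i j, i ≠ j ∧ g i - g j ∈ H := by
  classical
  let f : AddChar F ℂ → ℝ := fun χ => ‖∑ b ∈ B, χ b‖ ^ 2
  set β : ℝ := (#B : ℝ) with hβ
  set N : ℝ := (Fintype.card F : ℝ) with hN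
  have hNpos : 0 < N := by
    rw [hN]; exact_mod_cast Fintype.card_pos
  have hNm : N ≤ m * β := by rw [hN, hβ]; exact_mod_cast hB
  have hβpos : 0 < β := by
    rcases (Nat.cast_nonneg (α := ℝ) #B).eq_or_lt with h | h
    · rw [← hβ] at h; rw [← h] at hNm; simp at hNm; linarith
    · exact h
  have hβN : β ≤ N := by rw [hN, hβ]; exact_mod_cast card_le_univ B
  have hpars : ∑ χ, f χ = N * β := bogo_parseval B
  have hf0 : ∀ χ, 0 ≤ f χ := fun χ => by positivity
  have hf1 : f 0 = β ^ 2 := by simp [f, hβ]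
  let θ : ℝ := β ^ 3 / N
  have hθ : 0 < θ := by positivity
  have hθβ : θ ≤ β ^ 2 := by
    rw [div_le_iff₀ hNpos]; nlinarith [sq_nonneg β]
  let Λ : Finset (AddChar F ℂ) := univ.filter fun χ => θ ≤ f χ
  have h0Λ : (0 : AddChar F ℂ) ∈ Λ := by simp [Λ, hf1, hθβ]
  have hΛcard : #Λ ≤ m ^ 2 := by
    have h1 : (#Λ : ℝ) * θ ≤ N * β := by
      rw [← hpars, ← nsmul_eq_mul, ← sum_const]
      calc ∑ _χ ∈ Λ, θ ≤ ∑ χ ∈ Λ, f χ := sum_le_sum fun χ hχ => (mem_filter.1 hχ).2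
        _ ≤ _ := sum_le_univ_sum_of_nonneg hf0
    have h2 : (#Λ : ℝ) * β ^ 2 ≤ (m : ℝ) ^ 2 * β ^ 2 := by
      have h3 : (#Λ : ℝ) * β ^ 3 ≤ N * β * N := by
        rw [← mul_div_assoc, div_le_iff₀ hNpos] at h1; exact h1
      have h4 : (#Λ : ℝ) * β ^ 2 ≤ N ^ 2 := by
        refine le_of_mul_le_mul_right ?_ hβpos
        nlinarith
      calc _ ≤ N ^ 2 := h4
        _ ≤ (m * β) ^ 2 := by gcongr
        _ = _ := by ring
    have := le_of_mul_le_mul_right h2 (by positivity)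
    exact_mod_cast this
  let H : AddSubgroup F :=
    { carrier := {x | ∀ χ ∈ Λ, χ x = 1}
      zero_mem' := fun χ _ => χ.map_zero_eq_one
      add_mem' := fun {a b} ha hb χ hχ => by
        rw [AddChar.map_add_eq_mul, ha χ hχ, hb χ hχ, one_mul]
      neg_mem' := fun {a} ha χ hχ => by
        rw [AddChar.map_neg_eq_inv, ha χ hχ, inv_one] }
  refine ⟨H, ?_, ?_⟩
  · intro h hh
    by_contra hcon
    have key := bogo_four B h hcon
    have key' : ∑ χ : AddChar F ℂ, f χ ^ 2 * (χ h).re = 0 := by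
      rw [← key]; refine sum_congr rfl fun χ _ => ?_
      simp only [f]; ring
    rw [← sum_add_sum_compl Λ] at key'
    have hbig : β ^ 4 ≤ ∑ χ ∈ Λ, f χ ^ 2 * (χ h).re := by
      have e : ∑ χ ∈ Λ, f χ ^ 2 * (χ h).re = ∑ χ ∈ Λ, f χ ^ 2 :=
        sum_congr rfl fun χ hχ => by rw [hh χ hχ]; simp
      rw [e]
      calc β ^ 4 = f 0 ^ 2 := by rw [hf1]; ring
        _ ≤ _ := single_le_sum (f := fun χ => f χ ^ 2) (fun χ _ => sq_nonneg _) h0Λ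
    have hsmall : -(θ * (N * β - β ^ 2)) ≤ ∑ χ ∈ Λᶜ, f χ ^ 2 * (χ h).re := by
      have h1 : ∑ χ ∈ Λᶜ, f χ ≤ N * β - β ^ 2 := by
        have := sum_add_sum_compl Λ f
        have h2 : f 0 ≤ ∑ χ ∈ Λ, f χ := single_le_sum (fun χ _ => hf0 χ) h0Λ
        rw [hpars] at this
        linarith
      calc -(θ * (N * β - β ^ 2)) ≤ -(θ * ∑ χ ∈ Λᶜ, f χ) := by gcongr
        _ = ∑ χ ∈ Λᶜ, -(θ * f χ) := by rw [mul_sum, sum_neg_distrib]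
        _ ≤ _ := by
          refine sum_le_sum fun χ hχ => ?_
          have h3 : f χ < θ := by
            rw [mem_compl, mem_filter] at hχ; simpa using hχ
          have h4 : -1 ≤ (χ h).re := by
            have := Complex.abs_re_le_norm (χ h)
            rw [AddChar.norm_apply] at this
            exact (abs_le.1 this).1
          have h5 : f χ ^ 2 ≤ θ * f χ := by nlinarith [hf0 χ]
          nlinarith [sq_nonneg (f χ)]
    have : θ * (N * β - β ^ 2) < β ^ 4 := by
      have : θ * N = β ^ 3 := div_mul_cancel₀ _ hNpos.ne'
      have h6 : 0 < θ * β ^ 2 := by positivity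
      nlinarith
    linarith
  · intro g
    let T : Finset (Λ → ℂ) := Fintype.piFinset fun _ => Polynomial.nthRootsFinset n (1 : ℂ)
    have hT : #T ≤ n ^ (m ^ 2) := by
      rw [Fintype.card_piFinset, prod_const, card_univ, Fintype.card_coe]
      have h1 : #(Polynomial.nthRootsFinset n (1 : ℂ)) ≤ n := by
        rw [Polynomial.nthRootsFinset_def]
        exact (Multiset.toFinset_card_le _).trans (Polynomial.card_nthRoots n 1)
      calc _ ≤ n ^ #Λ := by gcongr
        _ ≤ _ := Nat.pow_le_pow_right hn hΛcard
    obtain ⟨i, -, j, -, hij, he⟩ := exists_ne_map_eq_of_card_lt_of_maps_to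
      (s := (univ : Finset (Fin (n ^ (m ^ 2) + 1)))) (t := T)
      (f := fun i (χ : Λ) => χ.1 (g i)) (by simpa using Nat.lt_succ_of_le hT) (by
        intro i _
        simp only [T, Finset.mem_coe, Fintype.mem_piFinset]
        intro χ
        rw [Polynomial.mem_nthRootsFinset hn, ← AddChar.map_nsmul_eq_pow, htor,
          AddChar.map_zero_eq_one])
    refine ⟨i, j, hij, fun χ hχ => ?_⟩
    have := congrFun he ⟨χ, hχ⟩
    simp only at this
    rw [AddChar.map_sub_eq_div, this, div_self]
    have := AddChar.norm_apply χ (g j)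
    intro h0
    simp [h0] at this

theorem torsion_bdd {K : Type*} [AddCommGroup K]
    [TopologicalSpace K] [IsTopologicalAddGroup K] [T2Space K] [CompactSpace K]
    (htor : ∀ x : K, IsOfFinAddOrder x) : ∃ n : ℕ, 0 < n ∧ ∀ x : K, n • x = 0 := by
  let S : ℕ → AddSubgroup K := fun n => (nsmulAddMonoidHom (α := K) (n + 1)).ker
  have hS : ∀ n x, x ∈ S n ↔ (n + 1) • x = 0 := fun n x => by
    simp [S, AddMonoidHom.mem_ker]
  have hcl : ∀ n, IsClosed (S n : Set K) := fun n => by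
    have : (S n : Set K) = (fun x : K => (n + 1) • x) ⁻¹' {0} := by
      ext x; simp only [SetLike.mem_coe, hS]; rfl
    rw [this]
    exact isClosed_singleton.preimage (by fun_prop)
  obtain ⟨n, x, hx⟩ := nonempty_interior_of_iUnion_of_closed hcl (by
    rw [Set.eq_univ_iff_forall]
    intro x
    obtain ⟨k, hk, hkx⟩ := isOfFinAddOrder_iff_nsmul_eq_zero.1 (htor x)
    refine Set.mem_iUnion.2 ⟨k - 1, ?_⟩
    rw [SetLike.mem_coe, hS, Nat.sub_add_cancel hk, hkx])
  have hopen : IsOpen (S n : Set K) :=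
    (S n).isOpen_of_mem_nhds (mem_interior_iff_mem_nhds.1 hx)
  have hfin : Finite (K ⧸ S n) := AddSubgroup.quotient_finite_of_isOpen _ hopen
  have hfi : (S n).FiniteIndex := AddSubgroup.finiteIndex_of_finite_quotient
  refine ⟨(n + 1) * (S n).index, Nat.mul_pos n.succ_pos (Nat.pos_of_ne_zero hfi.index_ne_zero), ?_⟩
  intro x
  rw [mul_nsmul', ← hS]
  exact (S n).nsmul_index_mem x

open Topology Filter in
theorem exists_open_sub {K : Type*} [AddCommGroup K]
    [TopologicalSpace K] [IsTopologicalAddGroup K] [T2Space K] [CompactSpace K]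
    (htor : ∀ x : K, IsOfFinAddOrder x) (U : Set K) (hU : U ∈ 𝓝 (0 : K)) :
    ∃ L : AddSubgroup K, IsOpen (L : Set K) ∧ (L : Set K) ⊆ U := by
  classical
  obtain ⟨n, hn, hnx⟩ := torsion_bdd htor
  obtain ⟨U', hU', hU'c, hUU⟩ := exists_mem_nhds_isClosed_subset hU
  obtain ⟨A, hA, hAU⟩ : ∃ A ∈ 𝓝 (0 : K), ∀ a ∈ A, ∀ b ∈ A, ∀ c ∈ A, ∀ d ∈ A,
      a + b - c - d ∈ U' := by
    obtain ⟨V, hV, hVU⟩ := exists_nhds_half_neg hU'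
    obtain ⟨A, hA, hAV⟩ := exists_nhds_half_neg hV
    refine ⟨A, hA, fun a ha b hb c hc d hd => ?_⟩
    have := hVU _ (hAV a ha c hc) _ (hAV d hd b hb)
    convert this using 1
    abel
  obtain ⟨t, ht⟩ := compact_covered_by_add_left_translates (isCompact_univ (X := K))
    (V := A) ⟨0, mem_interior_iff_mem_nhds.2 hA⟩
  set M := n ^ (t.card ^ 2) with hM
  have step : ∀ F : AddSubgroup K, Finite F → ∃ H : AddSubgroup K, (H : Set K) ⊆ U' ∧
      ∀ g : Fin (M + 1) → K, (∀ i, g i ∈ F) → ∃ i j, i ≠ j ∧ g i - g j ∈ H := by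
    intro F hF
    have := Fintype.ofFinite F
    let B : K → Finset F := fun x => Finset.univ.filter fun y => x + (y : K) ∈ A
    have hcov : (Finset.univ : Finset F) ⊆ t.biUnion B := by
      intro y _
      have := ht (Set.mem_univ (y : K))
      simpa [B] using this
    obtain ⟨x, hx⟩ : ∃ x, Fintype.card F ≤ t.card * (B x).card := by
      by_contra! hcon
      have h1 : Fintype.card F ≤ ∑ x ∈ t, (B x).card :=
        (Finset.card_le_card hcov).trans Finset.card_biUnion_le
      have htn : t.Nonempty := by
        by_contra h0
        rw [Finset.not_nonempty_iff_eq_empty] at h0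
        have := hcov (Finset.mem_univ (0 : F))
        simp [h0] at this
      have h2 : t.card * ∑ x ∈ t, (B x).card < ∑ x ∈ t, Fintype.card F := by
        rw [Finset.mul_sum]
        exact Finset.sum_lt_sum_of_nonempty htn fun x _ => hcon x
      rw [Finset.sum_const, smul_eq_mul] at h2
      exact absurd (Nat.mul_le_mul_left t.card h1) (not_le.2 h2)
    obtain ⟨H, hH1, hH2⟩ := bogo n t.card hn (fun y : F => Subtype.ext (by simpa using hnx y))
      (B x) hx
    refine ⟨H.map F.subtype, ?_, ?_⟩
    · rintro _ ⟨h, hh, rfl⟩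
      obtain ⟨a, ha, b, hb, c, hc, d, hd, rfl⟩ := hH1 h hh
      simp only [B, Finset.mem_filter, Finset.mem_univ, true_and] at ha hb hc hd
      have := hAU _ ha _ hb _ hc _ hd
      convert this using 1
      simp only [AddSubgroup.coe_subtype, AddSubgroup.coe_sub, AddSubgroup.coe_add]
      abel
    · intro g hg
      obtain ⟨i, j, hij, h⟩ := hH2 fun i => ⟨g i, hg i⟩
      exact ⟨i, j, hij, _, h, rfl⟩
  have hfin : ∀ s : Finset K, Finite (AddSubgroup.closure (s : Set K)) := by
    intro s
    have : AddGroup.FG (AddSubgroup.closure (s : Set K)) := 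
      (AddGroup.fg_iff_addSubgroup_fg _).2 ⟨s, rfl⟩
    apply AddCommGroup.finite_of_fg_isAddTorsion
    intro x
    exact isOfFinAddOrder_iff_nsmul_eq_zero.2 ⟨n, hn, Subtype.ext (by simpa using hnx x)⟩
  choose Hs hs1 hs2 using fun s : Finset K => step _ (hfin s)
  let 𝒰 : Ultrafilter (Finset K) := Ultrafilter.of atTop
  have h𝒰 : (𝒰 : Filter (Finset K)) ≤ atTop := Ultrafilter.of_le _
  let H : AddSubgroup K :=
    { carrier := {x | ∀ᶠ s in (𝒰 : Filter (Finset K)), x ∈ Hs s}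
      zero_mem' := Eventually.of_forall fun s => (Hs s).zero_mem
      add_mem' := fun {a b} ha hb => by
        filter_upwards [ha, hb] with s h1 h2 using (Hs s).add_mem h1 h2
      neg_mem' := fun {a} ha => by
        filter_upwards [ha] with s h1 using (Hs s).neg_mem h1 }
  have hHU : (H : Set K) ⊆ U' := by
    intro x hx
    obtain ⟨s, hs⟩ := Eventually.exists (f := (𝒰 : Filter (Finset K))) hx
    exact hs1 s hs
  have hpig : ∀ g : Fin (M + 1) → K, ∃ i j, i ≠ j ∧ g i - g j ∈ H := by
    intro g
    by_contra! hcon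
    have h1 : ∀ᶠ s in (𝒰 : Filter (Finset K)), ∀ i j, i ≠ j → g i - g j ∉ Hs s := by
      rw [eventually_all]; intro i
      rw [eventually_all]; intro j
      by_cases hij : i = j
      · simp [hij]
      · have : ∀ᶠ s in (𝒰 : Filter (Finset K)), g i - g j ∉ Hs s :=
          Ultrafilter.eventually_not.2 (hcon i j hij)
        filter_upwards [this] with s hs _ using hs
    have h2 : ∀ᶠ s in (𝒰 : Filter (Finset K)), Finset.univ.image g ≤ s :=
      h𝒰 (eventually_ge_atTop _)
    obtain ⟨s, hs, hs'⟩ := (h1.and h2).exists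
    obtain ⟨i, j, hij, h⟩ := hs2 s g fun i =>
      AddSubgroup.subset_closure (hs' (Finset.mem_image_of_mem g (Finset.mem_univ i)))
    exact hs i j hij h
  have hfq : Finite (K ⧸ H) := by
    by_contra hinf
    rw [not_finite_iff_infinite] at hinf
    let e := Infinite.natEmbedding (K ⧸ H)
    obtain ⟨i, j, hij, h⟩ := hpig fun i => (e i).out
    apply hij
    have : e i = e j := by
      rw [← QuotientAddGroup.out_eq' (e i), ← QuotientAddGroup.out_eq' (e j), eq_comm,
        QuotientAddGroup.eq, neg_add_eq_sub]
      exact h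
    exact Fin.ext (e.injective this)
  have hfi : H.FiniteIndex := AddSubgroup.finiteIndex_of_finite_quotient
  have hfi' : H.topologicalClosure.FiniteIndex :=
    AddSubgroup.finiteIndex_of_le H.le_topologicalClosure
  refine ⟨H.topologicalClosure, AddSubgroup.isOpen_of_isClosed_of_finiteIndex _
    H.isClosed_topologicalClosure, ?_⟩
  exact (closure_minimal hHU hU'c).trans hUU

theorem sub_tag {G : Type*} [AddCommGroup G] (t : TopologicalSpace G) (W : AddSubgroup G)
    (h : IsTopologicalAddGroup G) : @IsTopologicalAddGroup W (t.induced Subtype.val) _ :=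
  inferInstanceAs (IsTopologicalAddGroup W)

theorem sub_t2 {G : Type*} [AddCommGroup G] (t : TopologicalSpace G) (W : AddSubgroup G)
    (h : T2Space G) : @T2Space W (t.induced Subtype.val) :=
  inferInstanceAs (T2Space W)

theorem nhds_sub_eq {G : Type*} [AddCommGroup G] (t : TopologicalSpace G) (W : AddSubgroup G)
    (h : (W : Set G) ∈ @nhds G t 0) :
    Filter.map (Subtype.val : W → G) (@nhds W (t.induced Subtype.val) 0) = @nhds G t 0 :=
  map_nhds_subtype_coe_eq_nhds (p := (· ∈ W)) (x := (0 : G)) W.zero_mem h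

open Topology Filter Pointwise in
theorem min_of_open_sub {G : Type*} [AddCommGroup G] [τ : TopologicalSpace G]
    [IsTopologicalAddGroup G] (V : Set G)
    (hV : ∀ σ : TopologicalSpace G, τ ≤ σ →
      @IsTopologicalAddGroup G σ _ → @T2Space G σ → V ∈ @nhds G σ 0 → σ = τ)
    (W : AddSubgroup G) (hW : IsOpen (W : Set G)) (hWV : (W : Set G) ⊆ V) : IsMinimal W := by
  intro σ hσ hg h2
  let N : Filter G := map (Subtype.val : W → G) (@nhds W σ 0)
  have hN : ∀ S, S ∈ N ↔ (Subtype.val : W → G) ⁻¹' S ∈ @nhds W σ 0 := fun S => Iff.rfl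
  let B : AddGroupFilterBasis G := addGroupFilterBasisOfComm N.sets ⟨_, univ_mem⟩
    (fun x y hx hy => ⟨x ∩ y, inter_mem hx hy, subset_rfl⟩)
    (fun U hU => by
      have := @mem_of_mem_nhds W σ 0 _ ((hN U).1 hU)
      exact this)
    (fun U hU => by
      obtain ⟨S, hS, hSU⟩ := @exists_nhds_zero_half W σ _ _ _ ((hN U).1 hU)
      refine ⟨Subtype.val '' S, image_mem_map hS, ?_⟩
      rintro _ ⟨_, ⟨a, ha, rfl⟩, _, ⟨b, hb, rfl⟩, rfl⟩
      exact hSU a ha b hb)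
    (fun U hU => by
      refine ⟨-U, ?_, subset_rfl⟩
      have h := @continuous_neg W σ _ _
      have h3 := (@Continuous.tendsto W W σ σ _ h 0)
      rw [neg_zero] at h3
      exact h3 ((hN U).1 hU))
  have hnh : @nhds G B.topology 0 = N := by
    rw [B.nhds_zero_eq]
    ext S
    rw [FilterBasis.mem_filter_iff]
    exact ⟨fun ⟨T, hT, hTS⟩ => mem_of_superset (f := N) hT hTS, fun h => ⟨S, h, subset_rfl⟩⟩
  have htau : map (Subtype.val : W → G) (@nhds W (τ.induced Subtype.val) 0) = 𝓝 (0 : G) :=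
    nhds_sub_eq τ W (hW.mem_nhds W.zero_mem)
  have hBg : @IsTopologicalAddGroup G B.topology _ := B.isTopologicalAddGroup
  have hle : τ ≤ B.topology := by
    have h0 : @nhds G τ 0 ≤ @nhds G B.topology 0 := by
      rw [hnh, ← htau]
      exact map_mono (nhds_mono hσ)
    refine le_of_nhds_le_nhds fun x => ?_
    rw [← @map_add_left_nhds_zero G τ _ _ x, ← @map_add_left_nhds_zero G B.topology _ _ x]
    exact map_mono h0
  have hB2 : @T2Space G B.topology := by
    refine @IsTopologicalAddGroup.t2Space_of_zero_sep G B.topology _ _ fun x hx => ?_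
    rw [hnh]
    by_cases hxW : x ∈ W
    · have : ({⟨x, hxW⟩}ᶜ : Set W) ∈ @nhds W σ 0 := by
        refine @compl_singleton_mem_nhds W σ _ _ _ ?_
        intro h
        exact hx (congrArg Subtype.val h).symm
      refine ⟨Subtype.val '' ({⟨x, hxW⟩}ᶜ : Set W), image_mem_map this, ?_⟩
      rintro ⟨y, hy, hyx⟩
      exact hy (Subtype.ext hyx)
    · refine ⟨W, ?_, hxW⟩
      rw [hN]
      exact mem_of_superset univ_mem fun y _ => y.2
  have hVB : V ∈ @nhds G B.topology 0 := by
    rw [hnh, hN]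
    exact mem_of_superset univ_mem fun y _ => hWV y.2
  have heq := hV _ hle hBg hB2 hVB
  rw [heq, ← htau] at hnh
  exact IsTopologicalAddGroup.ext hg
    (sub_tag τ W inferInstance) (map_injective Subtype.val_injective hnh.symm)

open Topology Filter in
theorem locMin_of_open_min {G : Type*} [AddCommGroup G] [τ : TopologicalSpace G]
    [IsTopologicalAddGroup G]
    (W : AddSubgroup G) (hW : IsOpen (W : Set G)) (hm : IsMinimal W) : LocallyMinimal G := by
  have h1 := nhds_sub_eq τ W (hW.mem_nhds W.zero_mem)
  have hτ : IsTopologicalAddGroup G := inferInstance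
  refine ⟨W, hW.mem_nhds W.zero_mem, fun σ hσ hg h2 hV => ?_⟩
  have h := hm (σ.induced Subtype.val) (induced_mono hσ) (sub_tag σ W hg) (sub_t2 σ W h2)
  have h3 := nhds_sub_eq σ W hV
  refine IsTopologicalAddGroup.ext hg hτ ?_
  rw [← h1, ← h3, h]

theorem subgroup_of_torsion_compact_locallyMinimal_iff {K : Type*} [AddCommGroup K]
    [TopologicalSpace K] [IsTopologicalAddGroup K] [T2Space K] [CompactSpace K]
    (htor : ∀ x : K, IsOfFinAddOrder x) (G : AddSubgroup K) :
    LocallyMinimal ↥G ↔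
      ∃ W : AddSubgroup ↥G, IsOpen (W : Set ↥G) ∧ IsMinimal ↥W := by
  constructor
  · rintro ⟨V, hV, h⟩
    obtain ⟨U, hU, hUV⟩ := mem_nhds_induced _ _ _ |>.1 hV
    obtain ⟨L, hL, hLU⟩ := exists_open_sub htor U hU
    refine ⟨L.comap G.subtype, hL.preimage continuous_subtype_val, ?_⟩
    exact min_of_open_sub V h _ (hL.preimage continuous_subtype_val)
      fun x hx => hUV (hLU hx)
  · rintro ⟨W, hW, hm⟩
    exact locMin_of_open_min W hW hm
end

section
/- Let p be a prime, let K be a compact Hausdorff abelian topological group containing a closed subgroup N topologically isomorphic to the group ℤ_p of p-adic integers, and let G be a dense locally minimal subgroup of K. Then G ∩ N ≠ {0}; in particular, G contains an element of infinite order. -/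
theorem aux_small {K : Type*} [AddCommGroup K]
    [TopologicalSpace K] [IsTopologicalAddGroup K]
    (p : ℕ) [Fact p.Prime] (N : AddSubgroup K)
    (e : ↥N ≃+ ℤ_[p]) (he' : Continuous e.symm) (W : Set K) (hW : W ∈ nhds (0 : K)) :
    ∃ n : ℕ, ∀ y ∈ N, p ^ n • y ∈ W := by
  have hc : Continuous (fun z : ℤ_[p] => ((e.symm z : N) : K)) :=
    continuous_subtype_val.comp he'
  have h1 : (fun z : ℤ_[p] => ((e.symm z : N) : K)) ⁻¹' W ∈ nhds (0 : ℤ_[p]) := by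
    apply hc.continuousAt
    simpa using hW
  obtain ⟨ε, hε, hb⟩ := Metric.mem_nhds_iff.1 h1
  obtain ⟨n, hn⟩ := PadicInt.exists_pow_neg_lt p hε
  refine ⟨n, fun y hy => ?_⟩
  have h2 : (p : ℤ_[p]) ^ n * e ⟨y, hy⟩ ∈ Metric.ball (0 : ℤ_[p]) ε := by
    rw [mem_ball_zero_iff, norm_mul, PadicInt.norm_p_pow]
    refine lt_of_le_of_lt ?_ hn
    exact mul_le_of_le_one_right (by positivity) (PadicInt.norm_le_one _)
  have h3 := hb h2
  have h4 : (p : ℤ_[p]) ^ n * e ⟨y, hy⟩ = e (p ^ n • ⟨y, hy⟩) := by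
    rw [map_nsmul, nsmul_eq_mul]; push_cast; rfl
  rw [h4] at h3
  simpa using h3

theorem aux_inf {K : Type*} [AddCommGroup K] (p : ℕ) [Fact p.Prime] (N : AddSubgroup K)
    (e : ↥N ≃+ ℤ_[p]) (x : K) (hx : x ∈ N) (n : ℕ) (hn : n ≠ 0) (h : n • x = 0) : x = 0 := by
  have h1 : n • (⟨x, hx⟩ : N) = 0 := Subtype.ext (by simpa using h)
  have h2 : n • e ⟨x, hx⟩ = 0 := by rw [← map_nsmul, h1, map_zero]
  rw [nsmul_eq_mul, mul_eq_zero] at h2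
  have h3 : e ⟨x, hx⟩ = 0 := h2.resolve_left (by exact_mod_cast hn)
  have h4 : (⟨x, hx⟩ : N) = 0 := by simpa using h3
  exact congrArg Subtype.val h4

theorem aux_main {K : Type*} [AddCommGroup K]
    [TopologicalSpace K] [IsTopologicalAddGroup K] [T2Space K] [CompactSpace K]
    (p : ℕ) [Fact p.Prime] (N : AddSubgroup K) (hN : IsClosed (N : Set K))
    (e : ↥N ≃+ ℤ_[p]) (he' : Continuous e.symm)
    (G : AddSubgroup K) (hG : Dense (G : Set K)) (hmin : LocallyMinimal ↥G) :
    G ⊓ N ≠ ⊥ := by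
  intro hbot
  obtain ⟨V, hV, hmin⟩ := hmin
  obtain ⟨U, hU, hUV⟩ := (mem_nhds_subtype _ _ _).1 hV
  obtain ⟨W, hW, hWU⟩ := exists_nhds_zero_half (show U ∈ nhds (0 : K) from hU)
  obtain ⟨n, hn⟩ := aux_small p N e he' W hW
  let M : AddSubgroup K := N.map (nsmulAddMonoidHom (p ^ n))
  have hMN : M ≤ N := by
    rintro _ ⟨y, hy, rfl⟩
    exact N.nsmul_mem hy _
  have hMW : ∀ x ∈ M, x ∈ W := by
    rintro _ ⟨y, hy, rfl⟩
    exact hn y hy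
  have hMc : IsClosed (M : Set K) := by
    have : IsCompact ((fun x : K => p ^ n • x) '' (N : Set K)) :=
      hN.isCompact.image (continuous_nsmul _)
    exact this.isClosed
  have hpn : p ^ n ≠ 0 := pow_ne_zero _ (Fact.out : p.Prime).ne_zero
  obtain ⟨x, hxM, hx0⟩ : ∃ x ∈ M, x ≠ 0 := by
    refine ⟨p ^ n • (e.symm 1 : N), ⟨_, (e.symm 1 : N).2, rfl⟩, fun h => ?_⟩
    have := aux_inf p N e _ (e.symm 1 : N).2 _ hpn h
    have h2 : (e.symm 1 : N) = 0 := Subtype.ext this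
    simp at h2
  haveI : IsClosed (M : Set K) := hMc
  let q : G →+ K ⧸ M := (QuotientAddGroup.mk' M).comp G.subtype
  have hq : Function.Injective q := by
    rw [injective_iff_map_eq_zero]
    intro g hg
    have h1 : (g : K) ∈ M := (QuotientAddGroup.eq_zero_iff _).1 hg
    have h2 : (g : K) ∈ G ⊓ N := ⟨g.2, hMN h1⟩
    rw [hbot] at h2
    exact Subtype.ext (by simpa using h2)
  have hqc : Continuous q := continuous_quotient_mk'.comp continuous_subtype_val
  obtain ⟨A, B, hA, hB, h0A, hxB, hAB⟩ := t2_separation (Ne.symm hx0)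
  have h1' : (Subtype.val ⁻¹' A : Set G) ∈ nhds (0 : G) :=
    (hA.preimage continuous_subtype_val).mem_nhds h0A
  let σ : TopologicalSpace G := TopologicalSpace.induced q inferInstance
  have hσ := hmin σ (continuous_iff_le_induced.1 hqc) (topologicalAddGroup_induced q)
    (by
      letI := σ
      exact T2Space.of_injective_continuous hq continuous_induced_dom)
    (by
      rw [nhds_induced, map_zero, Filter.mem_comap]
      refine ⟨(QuotientAddGroup.mk : K → K ⧸ M) '' W,
        QuotientAddGroup.isOpenMap_coe.image_mem_nhds hW, ?_⟩
      rintro g ⟨w, hw, hwg⟩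
      apply hUV
      have h1 : -w + (g : K) ∈ M := QuotientAddGroup.eq.1 hwg
      have h2 := hWU w hw _ (hMW _ h1)
      simpa using h2)
  have h1 : (Subtype.val ⁻¹' A : Set G) ∈ @nhds G σ 0 := by
    rw [hσ]
    exact h1'
  rw [nhds_induced, map_zero, Filter.mem_comap] at h1
  obtain ⟨t, ht, htA⟩ := h1
  have h2 : (QuotientAddGroup.mk : K → K ⧸ M) ⁻¹' t ∈ nhds x := by
    apply (QuotientAddGroup.continuous_mk (N := M)).continuousAt
    rwa [(QuotientAddGroup.eq_zero_iff x).2 hxM]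
  obtain ⟨g, ⟨hg1, hg2⟩, hgG⟩ := mem_closure_iff_nhds.1 (hG x) _
    (Filter.inter_mem h2 (hB.mem_nhds hxB))
  exact Set.disjoint_left.1 hAB (@htA ⟨g, hgG⟩ hg1) hg2


/-- Let `p` be a prime, `K` a compact Hausdorff abelian group containing a closed
subgroup `N` topologically isomorphic to the `p`-adic integers `ℤ_p`, and `G` a dense
locally minimal subgroup of `K`. Then `G ⊓ N ≠ {0}`; in particular, `G` contains an
element of infinite order. -/
theorem inter_padic_ne_bot_of_locallyMinimal {K : Type*} [AddCommGroup K]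
    [TopologicalSpace K] [IsTopologicalAddGroup K] [T2Space K] [CompactSpace K]
    (p : ℕ) [Fact p.Prime] (N : AddSubgroup K) (hN : IsClosed (N : Set K))
    (e : ↥N ≃+ ℤ_[p]) (he : Continuous e) (he' : Continuous e.symm)
    (G : AddSubgroup K) (hG : Dense (G : Set K)) (hmin : LocallyMinimal ↥G) :
    G ⊓ N ≠ ⊥ ∧ ∃ x ∈ G, ¬ IsOfFinAddOrder x := by
  have h := aux_main p N hN e he' G hG hmin
  refine ⟨h, ?_⟩
  obtain ⟨x, hx, hx0⟩ := (AddSubgroup.ne_bot_iff_exists_ne_zero).1 h |>.elim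
    fun a ha => (⟨a.1, a.2, fun h => ha (Subtype.ext h)⟩ : ∃ x ∈ G ⊓ N, x ≠ 0)
  refine ⟨x, hx.1, fun hf => hx0 ?_⟩
  obtain ⟨n, hn, hnx⟩ := isOfFinAddOrder_iff_nsmul_eq_zero.1 hf
  exact aux_inf p N e x hx.2 n hn.ne' hnx
end

section
/- Let p be a prime, let K be a compact Hausdorff abelian topological group containing a closed subgroup topologically isomorphic to ℤ_p², and let G be a dense locally minimal subgroup of K. Then the free rank of G is at least 𝔠 = 2^ℵ₀; in particular, G has cardinality at least 𝔠. -/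
open scoped TensorProduct

theorem LM_essential {K : Type*} [AddCommGroup K]
    [TopologicalSpace K] [IsTopologicalAddGroup K] [T2Space K]
    (G : AddSubgroup K) (hG : Dense (G : Set K)) (hmin : LocallyMinimal ↥G) :
    ∃ V ∈ nhds (0 : K), ∀ H : AddSubgroup K, IsClosed (H : Set K) → (H : Set K) ⊆ V →
      (∀ x ∈ H, x ∈ G → x = 0) → ∀ h ∈ H, h = 0 := by
  obtain ⟨V0, hV0, hσ⟩ := hmin
  rw [nhds_subtype_eq_comap, Filter.mem_comap] at hV0
  obtain ⟨W, hW, hWV⟩ := hV0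
  obtain ⟨V, hV, hVW⟩ := exists_nhds_zero_half hW
  refine ⟨V, hV, fun H hHc hHV hHG h hh => ?_⟩
  have : IsClosed (H : Set K) := hHc
  let f : G →+ K ⧸ H := (QuotientAddGroup.mk' H).comp G.subtype
  have hfc : Continuous f := QuotientAddGroup.continuous_mk.comp continuous_subtype_val
  have hfinj : Function.Injective f := by
    rw [injective_iff_map_eq_zero]
    intro a ha
    have : (a : K) ∈ H := (QuotientAddGroup.eq_zero_iff _).1 ha
    exact Subtype.ext (hHG _ this a.2)
  let σ : TopologicalSpace G := TopologicalSpace.induced f inferInstance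
  have hnσ : @nhds G σ 0 = Filter.comap f (nhds 0) := by
    rw [nhds_induced, map_zero]
  have key : σ = instTopologicalSpaceSubtype := by
    refine hσ σ (continuous_iff_le_induced.1 hfc) (topologicalAddGroup_induced f) ?_ ?_
    · letI := σ
      exact T2Space.of_injective_continuous hfinj continuous_induced_dom
    · rw [hnσ]
      refine Filter.mem_comap.2 ⟨(QuotientAddGroup.mk' H) '' V, ?_, ?_⟩
      · have := (QuotientAddGroup.isOpenMap_coe (N := H)).image_mem_nhds hV
        simpa using this
      · rintro a ⟨v, hv, hva⟩
        apply hWV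
        have h1 : -v + (a : K) ∈ H := QuotientAddGroup.eq.1 hva
        have := hVW v hv _ (hHV h1)
        simpa using this
  have hne : (Filter.comap ((↑) : G → K) (nhds h)).NeBot := by
    rw [← mem_closure_iff_comap_neBot]
    exact hG h
  have h1 : Filter.comap ((↑) : G → K) (nhds h) ≤ @nhds G instTopologicalSpaceSubtype 0 := by
    rw [← key, hnσ]
    apply Filter.map_le_iff_le_comap.1
    have h2 : Filter.Tendsto (fun x : K => (x : K ⧸ H)) (nhds h) (nhds 0) := by
      have := (QuotientAddGroup.continuous_mk (N := H)).tendsto h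
      rwa [(QuotientAddGroup.eq_zero_iff h).2 hh] at this
    exact h2.comp Filter.tendsto_comap
  have h3 : Filter.Tendsto ((↑) : G → K) (Filter.comap ((↑) : G → K) (nhds h)) (nhds 0) :=
    (@Continuous.tendsto G K instTopologicalSpaceSubtype _ _ continuous_subtype_val 0).mono_left h1
  exact tendsto_nhds_unique Filter.tendsto_comap h3

theorem continuum_le_padicInt (p : ℕ) [Fact p.Prime] :
    Cardinal.continuum ≤ Cardinal.mk ℤ_[p] := by
  have := continuum_le_cardinal_of_isOpen ℚ_[p] (s := Metric.closedBall (0 : ℚ_[p]) 1)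
    (IsUltrametricDist.isOpen_closedBall _ one_ne_zero) ⟨0, by simp⟩
  refine this.trans (Cardinal.mk_le_of_injective (f := fun x => ⟨x.1, mem_closedBall_zero_iff.1 x.2⟩) ?_)
  intro x y h
  exact Subtype.ext (congrArg (fun z : ℤ_[p] => (z : ℚ_[p])) h)

/-- Let `p` be a prime, `K` a compact Hausdorff abelian group containing a closed
subgroup topologically isomorphic to `ℤ_p²`, and `G` a dense locally minimal subgroup of
`K`. Then the free rank of `G` (the dimension of the `ℚ`-vector space `ℚ ⊗_ℤ G`) is at
least `𝔠`; in particular `G` has cardinality at least `𝔠`. -/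
theorem freeRank_ge_continuum_of_locallyMinimal {K : Type*} [AddCommGroup K]
    [TopologicalSpace K] [IsTopologicalAddGroup K] [T2Space K] [CompactSpace K]
    (p : ℕ) [Fact p.Prime] (N : AddSubgroup K) (hN : IsClosed (N : Set K))
    (e : ↥N ≃+ (ℤ_[p] × ℤ_[p])) (he : Continuous e) (he' : Continuous e.symm)
    (G : AddSubgroup K) (hG : Dense (G : Set K)) (hmin : LocallyMinimal ↥G) :
    Cardinal.continuum ≤ Module.rank ℚ (ℚ ⊗[ℤ] ↥G) ∧
      Cardinal.continuum ≤ Cardinal.mk ↥G := by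
  obtain ⟨V, hV, hess⟩ := LM_essential G hG hmin
  let ψ : ℤ_[p] × ℤ_[p] →+ K := N.subtype.comp e.symm.toAddMonoidHom
  have hψc : Continuous ψ := continuous_subtype_val.comp he'
  have hψi : Function.Injective ψ := Subtype.val_injective.comp e.symm.injective
  have hpre : ψ ⁻¹' V ∈ nhds (0 : ℤ_[p] × ℤ_[p]) :=
    hψc.continuousAt.preimage_mem_nhds (by rwa [map_zero])
  obtain ⟨ε, hε, hball⟩ := Metric.mem_nhds_iff.1 hpre
  obtain ⟨c, hc0, hcε⟩ : ∃ c : ℤ_[p], c ≠ 0 ∧ ‖c‖ < ε := by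
    obtain ⟨n, hn⟩ := exists_pow_lt_of_lt_one hε (PadicInt.norm_lt_one_iff_dvd (p : ℤ_[p]) |>.2 dvd_rfl)
    refine ⟨(p : ℤ_[p]) ^ n, pow_ne_zero _ ?_, by rwa [norm_pow]⟩
    exact_mod_cast (Fact.out : p.Prime).ne_zero
  have hex : ∀ a : ℤ_[p], ∃ t : ℤ_[p], t ≠ 0 ∧ ψ (c * t, c * t * a) ∈ G := by
    intro a
    let φ : ℤ_[p] →+ K := ψ.comp
      ((AddMonoidHom.mulLeft c).prod ((AddMonoidHom.mulRight a).comp (AddMonoidHom.mulLeft c)))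
    have hφ : ∀ t, φ t = ψ (c * t, c * t * a) := fun t => rfl
    have hφc : Continuous φ := by
      have : Continuous fun t : ℤ_[p] => ψ (c * t, c * t * a) := by fun_prop
      exact this
    by_contra hcon
    push Not at hcon
    have := hess φ.range ?_ ?_ ?_ (φ 1) ⟨1, rfl⟩
    · rw [hφ, ← map_zero ψ] at this
      have := congrArg Prod.fst (hψi this)
      simp at this
      exact hc0 this
    · rw [AddMonoidHom.coe_range]
      exact (isCompact_range hφc).isClosed
    · rintro _ ⟨t, rfl⟩
      rw [hφ]
      apply hball
      rw [mem_ball_zero_iff, Prod.norm_def, max_lt_iff]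
      have h1 : ‖c * t‖ < ε := by
        rw [norm_mul]
        exact (mul_le_of_le_one_right (norm_nonneg _) (PadicInt.norm_le_one t)).trans_lt hcε
      refine ⟨h1, ?_⟩
      show ‖c * t * a‖ < ε
      rw [norm_mul]
      exact (mul_le_of_le_one_right (norm_nonneg _) (PadicInt.norm_le_one a)).trans_lt h1
    · rintro _ ⟨t, rfl⟩ ht
      by_cases h0 : t = 0
      · rw [h0, map_zero]
      · exact absurd ht (hcon t h0)
  choose t ht0 htG using hex
  let g : ℤ_[p] → G := fun a => ⟨_, htG a⟩
  have hkey : ∀ (n : ℤ), n ≠ 0 → ∀ a b, n • g a = n • g b → a = b := by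
    intro n hn a b hab
    have h1 : n • ψ (c * t a, c * t a * a) = n • ψ (c * t b, c * t b * b) :=
      congrArg Subtype.val hab
    rw [← map_zsmul, ← map_zsmul] at h1
    have h2 := smul_right_injective _ hn (hψi h1)
    simp only [Prod.mk.injEq] at h2
    obtain ⟨h3, h4⟩ := h2
    rw [h3] at h4
    exact mul_left_cancel₀ (mul_ne_zero hc0 (ht0 b)) h4
  have hginj : Function.Injective g := fun a b h => hkey 1 one_ne_zero a b (by rw [h])
  have hTinj : Function.Injective (fun a => (1 : ℚ) ⊗ₜ[ℤ] g a) := by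
    intro a b hab
    have : IsLocalizedModule (nonZeroDivisors ℤ) (TensorProduct.mk ℤ ℚ G 1) :=
      (isLocalizedModule_iff_isBaseChange (nonZeroDivisors ℤ) ℚ _).2 (TensorProduct.isBaseChange ℤ G ℚ)
    obtain ⟨s, hs⟩ := (IsLocalizedModule.eq_iff_exists (nonZeroDivisors ℤ)
      (TensorProduct.mk ℤ ℚ G 1)).1 hab
    exact hkey s (nonZeroDivisors.ne_zero s.2) a b hs
  have hcard : ∀ {X : Type _} (f : ℤ_[p] → X), Function.Injective f →
      Cardinal.continuum ≤ Cardinal.mk X := by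
    intro X f hf
    have h1 := Cardinal.mk_le_of_injective (f := fun x : ULift ℤ_[p] => f x.down)
      (hf.comp ULift.down_injective)
    refine le_trans ?_ h1
    rw [Cardinal.mk_uLift, ← Cardinal.lift_continuum, Cardinal.lift_le]
    exact continuum_le_padicInt p
  refine ⟨?_, hcard g hginj⟩
  have h1 := hcard _ hTinj
  by_contra hlt
  rw [not_le] at hlt
  let B := Module.Basis.ofVectorSpace ℚ (ℚ ⊗[ℤ] ↥G)
  have h2 := B.mk_eq_rank''
  have h3 := B.repr.toEquiv.cardinal_eq
  rw [h3] at h1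
  cases isEmpty_or_nonempty (Module.Basis.ofVectorSpaceIndex ℚ (ℚ ⊗[ℤ] ↥G)) with
  | inl hE =>
    rw [Cardinal.mk_eq_one] at h1
    exact absurd h1 (not_le.2 (Cardinal.one_lt_aleph0.trans Cardinal.aleph0_lt_continuum))
  | inr hE =>
    rw [Cardinal.mk_finsupp_lift_of_infinite', h2] at h1
    simp only [Cardinal.mkRat, Cardinal.lift_aleph0, Cardinal.lift_uzero] at h1
    exact absurd h1 (not_le.2 (max_lt hlt Cardinal.aleph0_lt_continuum))
end

section
/- Let p be a prime, let K be a compact Hausdorff abelian topological group containing a closed subgroup topologically isomorphic to ℤ(p)^ω (the countable power of the cyclic group of order p, with the product topology), and let G be a dense locally minimal subgroup of K. Then the cardinality of G is at least 𝔠 = 2^ℵ₀. -/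
/-- The cyclic group `ℤ(p) = ZMod p` carries the discrete topology. -/
instance (p : ℕ) : TopologicalSpace (ZMod p) := ⊥

lemma aux_mem {K : Type*} [AddCommGroup K]
    [TopologicalSpace K] [IsTopologicalAddGroup K] [T2Space K]
    (G : AddSubgroup K) (hG : Dense (G : Set K)) (hmin : LocallyMinimal ↥G) :
    ∃ W ∈ nhds (0 : K), ∀ H : AddSubgroup K, IsClosed (H : Set K) → (H : Set K) ⊆ W →
      H ⊓ G = ⊥ → H = ⊥ := by
  obtain ⟨V, hV, hmin⟩ := hmin
  obtain ⟨U, hU, hUV⟩ := mem_nhds_subtype (G : Set K) 0 V |>.1 hV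
  obtain ⟨W, hW, hWU⟩ := exists_nhds_zero_half hU
  refine ⟨W, hW, fun H hH hHW hHG => ?_⟩
  haveI : IsClosed (H : Set K) := hH
  let f : G →+ K ⧸ H := (QuotientAddGroup.mk' H).comp G.subtype
  have hf : Continuous f := QuotientAddGroup.continuous_mk.comp continuous_subtype_val
  have hinj : Function.Injective f := by
    rw [injective_iff_map_eq_zero]
    intro a ha
    have h1 : (a : K) ∈ H := (QuotientAddGroup.eq_zero_iff (a : K)).1 ha
    have h2 : (a : K) ∈ H ⊓ G := ⟨h1, a.2⟩
    rw [hHG] at h2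
    exact Subtype.ext (by simpa using h2)
  have key := hmin (TopologicalSpace.induced f inferInstance) (continuous_iff_le_induced.1 hf)
    (topologicalAddGroup_induced f) (by
      letI : TopologicalSpace G := TopologicalSpace.induced f inferInstance
      exact T2Space.of_injective_continuous hinj continuous_induced_dom) (by
      rw [nhds_induced, map_zero]
      refine ⟨QuotientAddGroup.mk '' W, ?_, ?_⟩
      · exact QuotientAddGroup.isOpenMap_coe.image_mem_nhds hW
      · rintro g ⟨w, hw, hwg⟩
        apply hUV
        have h1 : -w + (g : K) ∈ H := QuotientAddGroup.eq.1 hwg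
        have := hWU w hw _ (hHW h1)
        simpa using this)
  rw [eq_bot_iff]
  intro h hh
  have hne : (Filter.comap (Subtype.val : G → K) (nhds h)).NeBot := by
    have := hG.isDenseInducing_val.comap_nhds_neBot h
    exact this
  have t1 : Filter.Tendsto f (Filter.comap (Subtype.val : G → K) (nhds h)) (nhds 0) := by
    have h0 : (QuotientAddGroup.mk h : K ⧸ H) = 0 := (QuotientAddGroup.eq_zero_iff h).2 hh
    rw [← h0]
    exact ((QuotientAddGroup.continuous_mk (N := H)).tendsto h).comp Filter.tendsto_comap
  have t2 : Filter.comap (Subtype.val : G → K) (nhds h) ≤ nhds (0 : G) := by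
    rw [← key, nhds_induced, map_zero]
    exact t1.le_comap
  have t3 : Filter.Tendsto (Subtype.val : G → K) (Filter.comap (Subtype.val : G → K) (nhds h))
      (nhds ((0 : G) : K)) := (continuous_subtype_val.tendsto _).mono_left t2
  have := tendsto_nhds_unique Filter.tendsto_comap t3
  simpa using this

/-- Let `p` be a prime, `K` a compact Hausdorff abelian group containing a closed
subgroup topologically isomorphic to `ℤ(p)^ω` (the countable power of the cyclic group of
order `p`, with the product topology), and `G` a dense locally minimal subgroup of `K`.
Then `|G| ≥ 𝔠`. -/
theorem card_ge_continuum_of_locallyMinimal {K : Type*} [AddCommGroup K]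
    [TopologicalSpace K] [IsTopologicalAddGroup K] [T2Space K] [CompactSpace K]
    (p : ℕ) (hp : p.Prime) (N : AddSubgroup K) (hN : IsClosed (N : Set K))
    (e : ↥N ≃+ (ℕ → ZMod p)) (he : Continuous e) (he' : Continuous e.symm)
    (G : AddSubgroup K) (hG : Dense (G : Set K)) (hmin : LocallyMinimal ↥G) :
    Cardinal.continuum ≤ Cardinal.mk ↥G := by
  haveI : Fact p.Prime := ⟨hp⟩
  obtain ⟨W, hW, key⟩ := aux_mem G hG hmin
  let φ : (ℕ → ZMod p) →+ K := N.subtype.comp e.symm.toAddMonoidHom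
  have hφ : Continuous φ := continuous_subtype_val.comp he'
  have hφi : Function.Injective φ := Subtype.val_injective.comp e.symm.injective
  have hS : φ ⁻¹' W ∈ nhds (0 : ℕ → ZMod p) :=
    hφ.continuousAt.preimage_mem_nhds (by rwa [map_zero])
  rw [nhds_pi, Filter.mem_pi] at hS
  obtain ⟨I, hI, t, ht, hIt⟩ := hS
  obtain ⟨n, hn⟩ := hI.bddAbove
  have hsub : ∀ y : ℕ → ZMod p, (∀ i ≤ n, y i = 0) → φ y ∈ W := by
    intro y hy
    apply hIt
    intro i hi
    rw [hy i (hn hi)]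
    exact mem_of_mem_nhds (ht i)
  have hmem : ∀ y : ℕ → ZMod p, (∀ i ≤ n, y i = 0) → φ y ∈ G := by
    intro y hy
    by_cases hy0 : y = 0
    · simp [hy0]
    have hpy : p • φ y = 0 := by
      rw [← map_nsmul]
      have : p • y = 0 := by ext i; simp
      rw [this, map_zero]
    have hx0 : φ y ≠ 0 := fun h => hy0 (hφi (by simpa using h))
    have hord : addOrderOf (φ y) = p := addOrderOf_eq_prime hpy hx0
    have hfin : ((AddSubgroup.zmultiples (φ y) : AddSubgroup K) : Set K).Finite := by
      rw [AddSubgroup.coe_zmultiples, ← Set.finite_coe_iff]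
      apply Nat.finite_of_card_ne_zero
      have := Nat.card_zmultiples (φ y)
      rw [hord] at this
      exact fun h => hp.ne_zero (this.symm.trans h)
    by_contra hxG
    have hb := key (AddSubgroup.zmultiples (φ y)) hfin.isClosed (by
      rintro _ ⟨k, rfl⟩
      change k • φ y ∈ W
      rw [← map_zsmul]
      exact hsub _ (fun i hi => by simp [hy i hi])) (by
      rw [eq_bot_iff]
      rintro _ ⟨⟨k, rfl⟩, hk⟩
      change k • φ y ∈ G at hk
      change k • φ y = 0
      by_cases hd : (p : ℤ) ∣ k
      · obtain ⟨m, rfl⟩ := hd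
        rw [mul_comm, mul_smul, natCast_zsmul, hpy, smul_zero]
      · exfalso
        have hc : IsCoprime (p : ℤ) k :=
          ((Nat.prime_iff_prime_int.1 hp).coprime_iff_not_dvd).2 hd
        obtain ⟨a, b, hab⟩ := hc
        apply hxG
        have : φ y = b • (k • φ y) := by
          conv_lhs => rw [← one_zsmul (φ y), ← hab, add_smul, mul_smul, mul_smul,
            natCast_zsmul, hpy, smul_zero, zero_add]
        rw [this]
        exact G.zsmul_mem hk b)
    exact hx0 (AddSubgroup.zmultiples_eq_bot.1 hb)
  let F : (ℕ → ZMod p) → G := fun y =>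
    ⟨φ (fun i => if i ≤ n then 0 else y (i - (n+1))), hmem _ (fun i hi => by simp [hi])⟩
  have hF : Function.Injective F := by
    intro y z h
    have h0 := congrArg (Subtype.val : G → K) h
    have h1 := hφi h0
    ext i
    have := congrFun h1 (i + (n+1))
    have h2 : ¬ (i + (n+1) ≤ n) := by omega
    simpa only [if_neg h2, Nat.add_sub_cancel] using this
  have hc := Cardinal.lift_mk_le_lift_mk_of_injective hF
  have hcard : Cardinal.mk (ℕ → ZMod p) = Cardinal.continuum := by
    rw [← Cardinal.power_def, Cardinal.mk_fintype (ZMod p), ZMod.card, Cardinal.mk_nat]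
    exact Cardinal.nat_power_aleph0 hp.two_le
  rw [hcard] at hc
  simpa using hc
end

section
/- Let K be a torsion-free compact Hausdorff abelian topological group and let G be a subgroup of K. Then G (with the subspace topology) is locally minimal if and only if G is minimal. -/
open Topology Pointwise

lemma aux_compact {K : Type*} [AddCommGroup K] [TopologicalSpace K] [IsTopologicalAddGroup K]
    [CompactSpace K] (htf : ∀ x : K, IsOfFinAddOrder x → x = 0)
    (W : Set K) (hWc : IsClosed W) (hW : ∀ x, (∀ k : ℕ, k • x ∈ W) → x = 0)
    (O : Set K) (hO : O ∈ 𝓝 (0 : K)) (p : ℕ) (hp : 0 < p) :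
    ∃ n : ℕ, ∀ x, (∀ k ≤ n, (p * k) • x ∈ W) → x ∈ O := by
  let F : ℕ → Set K := fun n => ⋂ k ∈ Set.Iic n, {x | (p * k) • x ∈ W}
  have hF : ∀ n, IsClosed (F n) := fun n =>
    isClosed_biInter fun k _ => hWc.preimage (continuous_const_smul (p * k))
  have hmono : Directed (· ⊇ ·) F := by
    apply directed_of_isDirected_le
    intro a b hab x hx
    simp only [F, Set.mem_iInter, Set.mem_Iic] at hx ⊢
    exact fun k hk => hx k (hk.trans hab)
  obtain ⟨n, hn⟩ := exists_subset_nhds_of_isCompact' hmono (fun n => (hF n).isCompact) hF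
    (U := O) (by
      intro x hx
      have : p • x = 0 := by
        apply hW
        intro k
        have h := Set.mem_iInter.1 hx k
        simp only [F, Set.mem_iInter, Set.mem_Iic] at h
        have h2 := h k le_rfl
        simp only [Set.mem_ofPred_eq] at h2
        rwa [mul_comm, mul_smul] at h2
      have hx0 : x = 0 := htf x (isOfFinAddOrder_iff_nsmul_eq_zero.2 ⟨p, hp, this⟩)
      rw [hx0]; exact hO)
  refine ⟨n, fun x hx => hn ?_⟩
  simp only [F, Set.mem_iInter, Set.mem_Iic]
  exact hx

lemma aux_small_s11 {K : Type*} [AddCommGroup K] [TopologicalSpace K] [IsTopologicalAddGroup K]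
    [T2Space K] [CompactSpace K] (htf : ∀ x : K, IsOfFinAddOrder x → x = 0)
    (W : Set K) (hWc : IsClosed W) (hW0 : W ∈ 𝓝 (0 : K))
    (hW : ∀ x, (∀ k : ℕ, k • x ∈ W) → x = 0) (z : K) : z = 0 := by
  have key := aux_compact htf W hWc hW
  -- V
  obtain ⟨V, hV0, hV3, hV2, hV1⟩ : ∃ V ∈ 𝓝 (0 : K), (∀ a ∈ V, ∀ b ∈ V, ∀ c ∈ V, a + b + c ∈ W) ∧
      (∀ a ∈ V, ∀ b ∈ V, a + b ∈ W) ∧ V ⊆ W := by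
    obtain ⟨V, hV, h⟩ := exists_nhds_zero_quarter hW0
    have h0 := mem_of_mem_nhds hV
    refine ⟨V, hV, fun a ha b hb c hc => ?_, fun a ha b hb => ?_, fun a ha => ?_⟩
    · simpa using h ha hb hc h0
    · simpa using h ha hb h0 h0
    · simpa using h ha h0 h0 h0
  obtain ⟨p, hp1, hp⟩ : ∃ p : ℕ, 2 ≤ p ∧ ∀ x, (∀ k ≤ p, k • x ∈ W) → x ∈ V := by
    obtain ⟨n, hn⟩ := key V hV0 1 one_pos
    refine ⟨n + 2, by omega, fun x hx => hn x fun k hk => ?_⟩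
    simpa using hx k (by omega)
  have hAn : ∀ n : ℕ, {x : K | ∀ k ≤ n, k • x ∈ V} ∈ 𝓝 (0 : K) := by
    intro n
    have : ∀ k ∈ Set.Iic n, {x : K | k • x ∈ V} ∈ 𝓝 (0 : K) := by
      intro k _
      have hc : ContinuousAt (fun x : K => k • x) 0 := (continuous_const_smul k).continuousAt
      exact hc (by simpa using hV0)
    have h2 := (Filter.biInter_mem (Set.finite_Iic n)).2 this
    filter_upwards [h2] with x hx
    simpa using hx
  obtain ⟨N₀, hN₁, hN⟩ : ∃ N₀ : ℕ, 1 ≤ N₀ ∧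
      ∀ x, (∀ k ≤ N₀, (p * k) • x ∈ W) → ∀ k ≤ p, k • x ∈ V := by
    obtain ⟨n, hn⟩ := key _ (hAn p) p (by omega)
    exact ⟨n + 1, by omega, fun x hx => hn x fun k hk => hx k (by omega)⟩
  have hsm : ∀ N, N₀ ≤ N → ∀ y, (∀ k ≤ N, k • (p • y) ∈ V) → ∀ k ≤ p, k • y ∈ V := by
    intro N hNN y hy
    apply hN
    intro k hk
    rw [mul_comm, mul_smul]
    exact hV1 (hy k (by omega))
  have step1 : ∀ N, N₀ ≤ N → ∀ y, (∀ k ≤ N, k • (p • y) ∈ V) → ∀ k ≤ N, k • y ∈ V := by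
    intro N hNN y hy k hk
    apply hp
    intro j hj
    rw [← mul_smul]
    have e : j * k = ((j * k) / p) * p + (j * k) % p := by
      rw [mul_comm]; exact (Nat.div_add_mod' _ _).symm
    rw [e, add_smul, mul_smul _ p]
    refine hV2 _ (hy _ ?_) _ (hsm N hNN y hy _ (Nat.mod_lt _ (by omega)).le)
    apply Nat.div_le_of_le_mul
    exact Nat.mul_le_mul hj hk
  have step2 : ∀ N, N₀ ≤ N → ∀ y, (∀ k ≤ N, k • (p • p • y) ∈ V) → ∀ k ≤ p * N, k • y ∈ V := by
    intro N hNN y hy k hk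
    have hy1 := step1 N hNN _ hy
    have hb := hsm N hNN _ hy
    have hc := hsm N hNN _ hy1
    apply hp
    intro j hj
    rw [← mul_smul]
    have e : j * k = (((j * k) / p / p) * p + (j * k / p) % p) * p + (j * k) % p := by
      rw [Nat.div_add_mod', Nat.div_add_mod']
    rw [e, add_smul, mul_smul _ p, add_smul, mul_smul _ p]
    refine hV3 _ (hy _ ?_) _ (hb _ (Nat.mod_lt _ (by omega)).le) _
      (hc _ (Nat.mod_lt _ (by omega)).le)
    apply Nat.div_le_of_le_mul
    apply Nat.div_le_of_le_mul
    exact Nat.mul_le_mul hj hk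
  have step3 : ∀ s : ℕ, ∀ N, N₀ ≤ N → ∀ y, (∀ k ≤ N, k • (((p * p) ^ s) • y) ∈ V) →
      ∀ k ≤ p ^ s * N, k • y ∈ V := by
    intro s
    induction s with
    | zero => intro N _ y hy k hk; simpa using hy k (by simpa using hk)
    | succ s ih =>
      intro N hNN y hy
      have := ih (p * N) (hNN.trans (Nat.le_mul_of_pos_left _ (by omega))) y (by
        apply step2 N hNN
        intro k hk
        have := hy k hk
        rwa [pow_succ', mul_smul, mul_smul] at this)
      intro k hk
      exact this k (by rw [← mul_assoc, ← pow_succ]; exact hk)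
  by_contra hz
  obtain ⟨U, hU, hUU⟩ := exists_nhds_half_neg (hAn N₀)
  obtain ⟨t, ht⟩ := CompactSpace.elim_nhds_subcover (fun x : K => {y | y - x ∈ U}) (by
    intro x
    have hc : ContinuousAt (fun y : K => y - x) x := by fun_prop
    exact hc (by simpa using hU))
  have hcov : ∀ y : K, ∃ x ∈ t, y - x ∈ U := by
    intro y
    have : y ∈ (⊤ : Set K) := trivial
    rw [← ht] at this
    simpa using this
  choose f hft hfU using hcov
  obtain ⟨n, hn⟩ := key ((fun d : ℕ => d • z) '' (Set.Icc 1 t.card))ᶜ (by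
    apply IsOpen.mem_nhds
    · exact ((Set.finite_Icc 1 t.card).image _).isClosed.isOpen_compl
    · rintro ⟨d, hd, h⟩
      exact hz (htf z (isOfFinAddOrder_iff_nsmul_eq_zero.2 ⟨d, hd.1, h⟩))) 1 one_pos
  obtain ⟨a, ha, b, hb, hab, hfab⟩ := Finset.exists_ne_map_eq_of_card_lt_of_maps_to
    (s := Finset.range (t.card + 1)) (t := t) (by simp)
    (f := fun i : ℕ => f (((p * p) ^ n) • (i • z))) (fun i _ => hft _)
  wlog hlt : b < a generalizing a b
  · exact this b hb a ha hab.symm hfab.symm (by omega)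
  simp only [Finset.mem_range] at ha hb
  have h1 := hUU _ (hfU (((p * p) ^ n) • (a • z))) _ (hfU (((p * p) ^ n) • (b • z)))
  rw [hfab, sub_sub_sub_cancel_right, ← smul_sub] at h1
  have e : a • z - b • z = (a - b) • z := (sub_nsmul z hlt.le).symm ▸ (sub_eq_add_neg _ _)
  rw [e] at h1
  have h2 := step3 n N₀ le_rfl _ h1
  refine hn ((a - b) • z) ?_ ⟨a - b, ⟨by omega, by omega⟩, rfl⟩
  intro k hk
  rw [one_mul]
  apply hV1
  apply h2
  have : n < p ^ n := Nat.lt_pow_self (by omega)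
  nlinarith

lemma aux_subgroup {K : Type*}
    [AddCommGroup K] [TopologicalSpace K] [IsTopologicalAddGroup K] [T2Space K]
    [CompactSpace K] (htf : ∀ x : K, IsOfFinAddOrder x → x = 0) (N : AddSubgroup K)
    (hN : IsClosed (N : Set K)) (z : K) (hz : z ∈ N) (hz0 : z ≠ 0) (W : Set K) (hW : W ∈ 𝓝 0) :
    ∃ N' : AddSubgroup K, IsClosed (N' : Set K) ∧ N' ≤ N ∧ (N' : Set K) ⊆ W ∧
      ∃ x ∈ N', x ≠ 0 := by
  haveI : CompactSpace N := isCompact_iff_compactSpace.1 hN.isCompact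
  have hW' : W ∩ -W ∈ 𝓝 (0 : K) := by
    refine Filter.inter_mem hW ?_
    have := neg_mem_nhds_zero K hW
    exact this
  obtain ⟨C, hC, hCc, hCW⟩ := exists_mem_nhds_isClosed_subset hW'
  have : ∃ x : N, (∀ k : ℕ, k • (x : K) ∈ C) ∧ x ≠ 0 := by
    by_contra! hcon
    have h := aux_small_s11 (K := N) (fun x hx => Subtype.ext (htf x (by
        rw [isOfFinAddOrder_iff_nsmul_eq_zero] at hx ⊢
        obtain ⟨n, hn, h⟩ := hx
        exact ⟨n, hn, by simpa using congrArg Subtype.val h⟩)))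
      (Subtype.val ⁻¹' C) (hCc.preimage continuous_subtype_val)
      (continuous_subtype_val.continuousAt (by simpa using hC))
      (fun x hx => hcon x (fun k => by simpa using hx k)) ⟨z, hz⟩
    exact hz0 (congrArg Subtype.val h)
  obtain ⟨x, hx, hx0⟩ := this
  -- closed neighbourhood again to pass to closure
  refine ⟨(AddSubgroup.zmultiples (x : K)).topologicalClosure,
    AddSubgroup.isClosed_topologicalClosure _, ?_, ?_, x, ?_, by simpa using hx0⟩
  · apply AddSubgroup.topologicalClosure_minimal _ _ hN
    simp
  · have hCn : IsClosed (C ∪ -C) := hCc.union hCc.neg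
    have h1 : ((AddSubgroup.zmultiples (x : K) : AddSubgroup K) : Set K) ⊆ C ∪ -C := by
      rintro y hy
      obtain ⟨k, rfl⟩ := AddSubgroup.mem_zmultiples_iff.1 hy
      obtain ⟨n, rfl | rfl⟩ := k.eq_nat_or_neg
      · left; simpa using hx n
      · right; simpa using hx n
    refine (closure_minimal h1 hCn).trans ?_
    rintro y (hy | hy)
    · exact (hCW hy).1
    · have := (hCW hy).2
      simpa using this
  · exact AddSubgroup.le_topologicalClosure _ (AddSubgroup.mem_zmultiples _)

lemma aux_final {K : Type*}
    [AddCommGroup K] [TopologicalSpace K] [IsTopologicalAddGroup K] [T2Space K]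
    [CompactSpace K] (G : AddSubgroup K) (V : Set G) (W : Set K) (hWo : IsOpen W)
    (h0W : (0 : K) ∈ W)
    (hWV : (Subtype.val ⁻¹' W : Set G) ⊆ V)
    (hmin : ∀ σ : TopologicalSpace G, instTopologicalSpaceSubtype ≤ σ →
      @IsTopologicalAddGroup G σ _ → @T2Space G σ → V ∈ @nhds G σ 0 →
      σ = instTopologicalSpaceSubtype)
    (N : AddSubgroup K) (hN : IsClosed (N : Set K)) (hNW : (N : Set K) ⊆ W)
    (hNG : ∀ x ∈ N, x ∈ G → x = 0) (hNcl : ∀ x ∈ N, x ∈ closure (G : Set K)) :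
    ∀ x ∈ N, x = 0 := by
  intro n hn
  by_contra hn0
  let φ : G →+ K ⧸ N := (QuotientAddGroup.mk' N).comp G.subtype
  have hφc : Continuous φ := continuous_quotient_mk'.comp continuous_subtype_val
  have hφi : Function.Injective φ := by
    rw [injective_iff_map_eq_zero]
    intro g hg
    have : (g : K) ∈ N := (QuotientAddGroup.eq_zero_iff _).1 hg
    exact Subtype.ext (hNG _ this g.2)
  haveI : IsClosed (N : Set K) := hN
  have heq := hmin (TopologicalSpace.induced φ inferInstance) (continuous_iff_le_induced.1 hφc)
    (topologicalAddGroup_induced φ)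
    (by
      letI : TopologicalSpace G := TopologicalSpace.induced φ inferInstance
      exact T2Space.of_injective_continuous hφi continuous_induced_dom)
    (by
      rw [nhds_induced, map_zero]
      obtain ⟨U, hU, hNU⟩ := compact_open_separated_add_right hN.isCompact hWo hNW
      refine ⟨(QuotientAddGroup.mk : K → K ⧸ N) '' U,
        QuotientAddGroup.isOpenMap_coe.image_mem_nhds hU, ?_⟩
      rintro g ⟨u, hu, hug⟩
      apply hWV
      have h1 : -u + (g : K) ∈ N := QuotientAddGroup.eq.1 hug
      have := hNU (Set.add_mem_add h1 hu)
      simpa [add_comm] using this)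
  obtain ⟨C, hC, hCc, hCn⟩ := exists_mem_nhds_isClosed_subset
    (isOpen_compl_singleton.mem_nhds (show (0 : K) ∈ ({n} : Set K)ᶜ from fun h => hn0 h.symm))
  have hCG : (Subtype.val ⁻¹' C : Set G) ∈ 𝓝 (0 : G) :=
    continuous_subtype_val.continuousAt (by simpa using hC)
  rw [← heq, nhds_induced, map_zero] at hCG
  obtain ⟨S, hS, hSC⟩ := hCG
  have hSn : (QuotientAddGroup.mk ⁻¹' S : Set K) ∈ 𝓝 n := by
    apply (continuous_quotient_mk' (s := QuotientAddGroup.leftRel N)).continuousAt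
    have : (QuotientAddGroup.mk n : K ⧸ N) = 0 := (QuotientAddGroup.eq_zero_iff _).2 hn
    change S ∈ 𝓝 (QuotientAddGroup.mk n : K ⧸ N)
    rw [this]; exact hS
  have : n ∈ closure C := by
    rw [mem_closure_iff_nhds]
    intro T hT
    obtain ⟨g, ⟨hgT, hgS⟩, hgG⟩ := mem_closure_iff_nhds.1 (hNcl n hn) _ (Filter.inter_mem hT hSn)
    exact ⟨g, hgT, @hSC ⟨g, hgG⟩ hgS⟩
  rw [hCc.closure_eq] at this
  exact hCn this rfl

/-- The kernel of the extension of the identity to completions. -/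
def auxN {K : Type*} [AddCommGroup K] [TopologicalSpace K] [IsTopologicalAddGroup K]
    (G : AddSubgroup K) (σ : TopologicalSpace G) (hσ : @IsTopologicalAddGroup G σ _) :
    AddSubgroup K where
  carrier := {x | ∀ U ∈ @nhds G σ 0, x ∈ closure (Subtype.val '' U : Set K)}
  zero_mem' := fun U hU => subset_closure ⟨0, @mem_of_mem_nhds G σ _ _ hU, rfl⟩
  add_mem' := by
    intro a b ha hb U hU
    obtain ⟨U', hU', h⟩ := @exists_nhds_zero_half G σ _ (@IsTopologicalAddGroup.toContinuousAdd G σ _ hσ) U hU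
    refine map_mem_closure₂ continuous_add (ha U' hU') (hb U' hU') ?_
    rintro _ ⟨x, hx, rfl⟩ _ ⟨y, hy, rfl⟩
    exact ⟨x + y, h x hx y hy, rfl⟩
  neg_mem' := by
    intro a ha U hU
    have hU' : -U ∈ @nhds G σ 0 := @neg_mem_nhds_zero G σ _ hσ U hU
    refine map_mem_closure continuous_neg (ha _ hU') ?_
    rintro _ ⟨x, hx, rfl⟩
    exact ⟨-x, hx, rfl⟩

theorem subgroup_of_torsionFree_compact_locallyMinimal_iff_minimal {K : Type*}
    [AddCommGroup K] [TopologicalSpace K] [IsTopologicalAddGroup K] [T2Space K]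
    [CompactSpace K] (htf : ∀ x : K, IsOfFinAddOrder x → x = 0) (G : AddSubgroup K) :
    LocallyMinimal ↥G ↔ IsMinimal ↥G := by
  constructor
  swap
  · intro h
    exact ⟨Set.univ, Filter.univ_mem, fun σ h1 h2 h3 _ => h σ h1 h2 h3⟩
  rintro ⟨V, hV, hmin⟩ σ hle hσ hT2
  obtain ⟨W', hW', hWV'⟩ := mem_nhds_induced Subtype.val (0 : G) V |>.1 hV
  obtain ⟨W, hWW', hWo, hW0⟩ := mem_nhds_iff.1 hW'
  have hWV : (Subtype.val ⁻¹' W : Set G) ⊆ V := fun g hg => hWV' (hWW' hg)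
  have hNc : IsClosed (auxN G σ hσ : Set K) := by
    have : (auxN G σ hσ : Set K) = ⋂ U ∈ @nhds G σ 0, closure (Subtype.val '' U : Set K) := by
      ext x; simp [auxN]
    rw [this]
    exact isClosed_biInter fun U _ => isClosed_closure
  have hNG : ∀ x ∈ auxN G σ hσ, x ∈ G → x = 0 := by
    intro x hx hxG
    by_contra hx0
    have hne : (0 : G) ≠ ⟨x, hxG⟩ := fun h => hx0 (congrArg Subtype.val h).symm
    obtain ⟨A, hA, hAc, hAx⟩ : ∃ A ∈ @nhds G σ 0, IsClosed[σ] A ∧ (⟨x, hxG⟩ : G) ∉ A := by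
      letI := σ
      obtain ⟨A, hA, hAc, hAn⟩ := exists_mem_nhds_isClosed_subset
        (isOpen_compl_singleton.mem_nhds (show (0 : G) ∈ ({⟨x, hxG⟩} : Set G)ᶜ from hne))
      exact ⟨A, hA, hAc, fun h => hAn h rfl⟩
    have hAτ : IsClosed[instTopologicalSpaceSubtype] A := IsClosed.mono hAc hle
    have h1 := hx A hA
    rw [← closure_subtype (x := (⟨x, hxG⟩ : G)), @IsClosed.closure_eq G instTopologicalSpaceSubtype A hAτ] at h1
    exact hAx h1
  have hNcl : ∀ x ∈ auxN G σ hσ, x ∈ closure (G : Set K) := by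
    intro x hx
    have := hx Set.univ Filter.univ_mem
    simpa using this
  have hN0 : ∀ x ∈ auxN G σ hσ, x = 0 := by
    intro z hz
    by_contra hz0
    obtain ⟨N', hN'c, hN'N, hN'W, x, hx, hx0⟩ :=
      aux_subgroup htf _ hNc z hz hz0 W (hWo.mem_nhds hW0)
    exact hx0 (aux_final G V W hWo hW0 hWV hmin N' hN'c hN'W
      (fun y hy => hNG y (hN'N hy)) (fun y hy => hNcl y (hN'N hy)) x hx)
  refine @IsTopologicalAddGroup.ext G _ σ _ hσ inferInstance ?_
  apply le_antisymm
  swap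
  · exact (le_iff_nhds _ _).1 hle 0
  intro B hB
  obtain ⟨B', hB', hBB'⟩ := mem_nhds_induced Subtype.val (0 : G) B |>.1 hB
  obtain ⟨U, hU⟩ := exists_subset_nhds_of_isCompact'
    (V := fun U : {U // U ∈ @nhds G σ 0} => closure (Subtype.val '' U.1 : Set K)) (U := B')
    (by
      rintro ⟨A, hA⟩ ⟨B, hB⟩
      refine ⟨⟨A ∩ B, Filter.inter_mem hA hB⟩, ?_, ?_⟩
      · exact closure_mono (Set.image_mono Set.inter_subset_left)
      · exact closure_mono (Set.image_mono Set.inter_subset_right))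
    (fun U => isClosed_closure.isCompact) (fun U => isClosed_closure) (by
      intro x hx
      have : x = 0 := hN0 x (fun U hU => Set.mem_iInter.1 hx ⟨U, hU⟩)
      rw [this]; exact hB')
  exact Filter.mem_of_superset U.2 fun g hg => hBB' (hU (subset_closure ⟨g, hg, rfl⟩))
end

section
/- Let G be a precompact Hausdorff abelian topological group of square-free exponent, i.e. there is a square-free natural number n ≥ 1 with nx = 0 for all x ∈ G. Then the following are equivalent: (a) G is compact; (b) G is minimal; (c) G is locally minimal. -/
/-- A topological abelian group is *precompact* (totally bounded) if every neighborhood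
`V` of `0` admits a finite set `F` with `F + V = G`. For Hausdorff abelian groups this is
equivalent to the Raikov completion being compact. -/
def IsPrecompact (G : Type*) [AddCommGroup G] [TopologicalSpace G] : Prop :=
  ∀ V ∈ nhds (0 : G), ∃ F : Finset G, ∀ x : G, ∃ y ∈ F, x - y ∈ V

open Topology Filter

theorem aux_compact_minimal {G : Type*} [AddCommGroup G] [τ : TopologicalSpace G]
    [CompactSpace G] : IsMinimal G := by
  intro σ hle _ hT
  have hc : @Continuous G G τ σ id := continuous_id_iff_le.mpr hle
  have hcl : @IsClosedMap G G τ σ id := @Continuous.isClosedMap G G τ σ _ hT id hc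
  refine le_antisymm ?_ hle
  intro U hU
  have h1 := hcl Uᶜ (@isClosed_compl_iff G τ U |>.2 hU)
  rw [Set.image_id] at h1
  exact (@isClosed_compl_iff G σ U).1 h1

theorem aux_surj {G K : Type*} [AddCommGroup G] [τ : TopologicalSpace G]
    [AddCommGroup K] [TopologicalSpace K] [IsTopologicalAddGroup K] [T2Space K]
    (f : G →+ K) (hf : IsInducing f) (hinj : Function.Injective f) (hd : DenseRange f)
    (n : ℕ) (hn : 1 ≤ n) (hsf : Squarefree n) (hexp : ∀ x : K, n • x = 0)
    (hlm : LocallyMinimal G) : Function.Surjective f := by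
  obtain ⟨V, hV, hmin⟩ := hlm
  rw [hf.nhds_eq_comap, map_zero] at hV
  obtain ⟨V', hV', hVV⟩ := mem_comap.1 hV
  obtain ⟨O, hOV, hO, h0O⟩ := mem_nhds_iff.1 hV'
  -- the neighbourhood of elements all of whose multiples lie in O
  have hW : {x : K | ∀ k ∈ Finset.range n, k • x ∈ O} ∈ 𝓝 (0 : K) := by
    have : ∀ᶠ x in 𝓝 (0 : K), ∀ k ∈ Finset.range n, k • x ∈ O := by
      rw [Filter.eventually_all_finset]
      intro k _
      have hc : ContinuousAt (fun x : K => k • x) 0 := (continuous_nsmul k).continuousAt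
      apply hc.eventually_mem
      simpa using hO.mem_nhds h0O
    exact this
  by_cases hsub : {x : K | ∀ k ∈ Finset.range n, k • x ∈ O} ⊆ (f.range : Set K)
  · have ho : IsOpen (f.range : Set K) :=
      AddSubgroup.isOpen_of_mem_nhds f.range (mem_of_superset hW hsub)
    have hcl := AddSubgroup.isClosed_of_isOpen f.range ho
    have : (f.range : Set K) = Set.univ := by
      rw [← hcl.closure_eq, AddMonoidHom.coe_range]
      exact hd.closure_range
    intro y
    have : y ∈ (f.range : Set K) := this ▸ Set.mem_univ y
    simpa using this
  exfalso
  obtain ⟨x, hx, hxG⟩ := Set.not_subset.1 hsub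
  -- order of x modulo G
  set m := addOrderOf (x : K ⧸ f.range) with hm
  have hmem : ∀ k : ℕ, k • x ∈ f.range ↔ m ∣ k := by
    intro k
    rw [hm, addOrderOf_dvd_iff_nsmul_eq_zero, ← QuotientAddGroup.mk_nsmul,
      QuotientAddGroup.eq_zero_iff]
  have hmn : m ∣ n := (hmem n).1 (by rw [hexp]; exact zero_mem _)
  obtain ⟨m', hmm⟩ := hmn
  have hcop : Nat.Coprime m m' := Nat.coprime_of_squarefree_mul (hmm ▸ hsf)
  have hm1 : m ≠ 1 := by
    intro h
    apply hxG
    have := (hmem 1).2 (by rw [h])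
    simpa using this
  have hall : ∀ k : ℕ, k • x ∈ O := by
    intro k
    have : k • x = (k % n) • x := by
      conv_lhs => rw [← Nat.mod_add_div k n, add_nsmul, mul_nsmul, hexp, nsmul_zero, add_zero]
    rw [this]
    exact hx _ (Finset.mem_range.2 (Nat.mod_lt _ hn))
  set y := m' • x with hy
  have hyk : ∀ k : ℕ, k • y ∈ f.range → k • y = 0 := by
    intro k hk
    rw [hy, ← mul_nsmul, hmem] at hk
    obtain ⟨c, rfl⟩ := hcop.dvd_of_dvd_mul_left hk
    rw [hy, ← mul_nsmul, ← mul_assoc, mul_comm m' m, ← hmm, mul_nsmul, hexp, nsmul_zero]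
  have hyO : ∀ k : ℕ, k • y ∈ O := by
    intro k
    rw [hy, ← mul_nsmul]
    exact hall _
  have hy0 : y ≠ 0 := by
    intro h
    have : m ∣ m' := (hmem m').1 (by rw [← hy, h]; exact zero_mem _)
    exact hm1 (Nat.Coprime.eq_one_of_dvd hcop this)
  have hz : ∀ z ∈ AddSubgroup.zmultiples y, ∃ k ∈ Finset.range n, z = k • y := by
    intro z hz
    obtain ⟨j, rfl⟩ := AddSubgroup.mem_zmultiples_iff.1 hz
    have hn0 : (0 : ℤ) < n := by exact_mod_cast hn
    refine ⟨(j % n).toNat, ?_, ?_⟩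
    · rw [Finset.mem_range]
      have := Int.emod_lt_of_pos j hn0
      have := Int.emod_nonneg j hn0.ne'
      omega
    · rw [← natCast_zsmul, Int.toNat_of_nonneg (Int.emod_nonneg j hn0.ne')]
      conv_lhs => rw [← Int.emod_add_mul_ediv j n, add_zsmul, mul_zsmul', natCast_zsmul, hexp,
        zsmul_zero, add_zero]
  have hfin : (AddSubgroup.zmultiples y : Set K).Finite := by
    refine ((Finset.range n).finite_toSet.image (fun k => k • y)).subset ?_
    intro z hz'
    obtain ⟨k, hk, rfl⟩ := hz z hz'
    exact ⟨k, hk, rfl⟩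
  haveI hclosed : IsClosed (AddSubgroup.zmultiples y : Set K) := hfin.isClosed
  let g : G →+ K ⧸ AddSubgroup.zmultiples y :=
    (QuotientAddGroup.mk' (AddSubgroup.zmultiples y)).comp f
  have hg : ∀ a, g a = ((f a : K) : K ⧸ AddSubgroup.zmultiples y) := fun _ => rfl
  have hqc : Continuous (fun a : K => (a : K ⧸ AddSubgroup.zmultiples y)) :=
    QuotientAddGroup.continuous_mk
  have hgc : Continuous g := hqc.comp hf.continuous
  have hginj : Function.Injective g := by
    rw [injective_iff_map_eq_zero]
    intro a ha
    rw [hg, QuotientAddGroup.eq_zero_iff] at ha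
    obtain ⟨k, _, hk⟩ := hz _ ha
    have h0 := hyk k (hk ▸ ⟨a, rfl⟩)
    apply hinj
    rw [hk, h0, map_zero]
  have key := hmin (TopologicalSpace.induced g inferInstance) (continuous_iff_le_induced.1 hgc)
    (topologicalAddGroup_induced g) ?_ ?_
  · have hgi : IsInducing g := ⟨key.symm⟩
    haveI : NeBot (comap f (𝓝 y)) :=
      (IsDenseInducing.mk hf hd).comap_nhds_neBot y
    have t1 : Tendsto f (comap f (𝓝 y)) (𝓝 y) := tendsto_comap
    have t2 : Tendsto g (comap f (𝓝 y)) (𝓝 (g 0)) := by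
      have := (hqc.tendsto y).comp t1
      have e : ((y : K) : K ⧸ AddSubgroup.zmultiples y) = g 0 := by
        rw [map_zero, QuotientAddGroup.eq_zero_iff]
        exact AddSubgroup.mem_zmultiples y
      rw [e] at this
      exact this
    have t3 : Tendsto (fun a : G => a) (comap f (𝓝 y)) (𝓝 0) := hgi.tendsto_nhds_iff.2 t2
    have t4 : Tendsto f (comap f (𝓝 y)) (𝓝 (f 0)) := (hf.continuous.tendsto 0).comp t3
    apply hy0
    rw [tendsto_nhds_unique t1 t4, map_zero]
  · letI : TopologicalSpace G := TopologicalSpace.induced g inferInstance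
    exact T2Space.of_injective_continuous hginj continuous_induced_dom
  · rw [nhds_induced, map_zero]
    have hS : {z : K | ∀ k ∈ Finset.range n, z + k • y ∈ O} ∈ 𝓝 (0 : K) := by
      have : ∀ᶠ z in 𝓝 (0 : K), ∀ k ∈ Finset.range n, z + k • y ∈ O := by
        rw [Filter.eventually_all_finset]
        intro k _
        have hc : ContinuousAt (fun z : K => z + k • y) 0 :=
          (continuous_id.add continuous_const).continuousAt
        apply hc.eventually_mem
        simpa using hO.mem_nhds (hyO k)
      exact this
    have hI := (QuotientAddGroup.isOpenMap_coe (N := AddSubgroup.zmultiples y)).image_mem_nhds hS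
    refine ⟨_, hI, ?_⟩
    rintro a ⟨s, hs, hsa⟩
    rw [hg, QuotientAddGroup.eq] at hsa
    obtain ⟨k, hk, hk2⟩ := hz _ hsa
    apply hVV
    have := hs k hk
    rw [← hk2, add_neg_cancel_left] at this
    exact hOV this

theorem aux_lm_compact {G : Type*}
    [AddCommGroup G] [TopologicalSpace G] [IsTopologicalAddGroup G] [T2Space G]
    (hpre : IsPrecompact G) (n : ℕ) (hn : 1 ≤ n) (hsf : Squarefree n)
    (hexp : ∀ x : G, n • x = 0) (hlm : LocallyMinimal G) : CompactSpace G := by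
  letI : UniformSpace G := IsTopologicalAddGroup.rightUniformSpace G
  haveI : IsUniformAddGroup G := isUniformAddGroup_of_addCommGroup
  have hde := UniformSpace.Completion.isDenseEmbedding_coe (α := G)
  have htb : TotallyBounded (Set.univ : Set G) := by
    intro d hd
    rw [uniformity_eq_comap_nhds_zero_swapped] at hd
    obtain ⟨V, hV, hVd⟩ := mem_comap.1 hd
    obtain ⟨F, hF⟩ := hpre V hV
    refine ⟨F, F.finite_toSet, ?_⟩
    intro x _
    obtain ⟨y, hy, hxy⟩ := hF x
    simp only [Set.mem_iUnion]
    exact ⟨y, hy, hVd hxy⟩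
  have hcK : IsCompact (Set.univ : Set (UniformSpace.Completion G)) := by
    rw [isCompact_iff_totallyBounded_isComplete]
    refine ⟨?_, isClosed_univ.isComplete⟩
    have := (htb.image (UniformSpace.Completion.uniformContinuous_coe G)).closure
    rwa [Set.image_univ, hde.dense.closure_range] at this
  have hexpK : ∀ x : UniformSpace.Completion G, n • x = 0 := by
    intro x
    refine UniformSpace.Completion.induction_on x
      (isClosed_eq (continuous_nsmul n) continuous_const) ?_
    intro a
    have := map_nsmul (UniformSpace.Completion.toCompl (α := G)) n a
    rw [hexp, map_zero] at this
    exact this.symm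
  have hs := aux_surj (UniformSpace.Completion.toCompl (α := G)) hde.isInducing hde.injective
    hde.dense n hn hsf hexpK hlm
  rw [← isCompact_univ_iff, hde.isInducing.isCompact_iff, Set.image_univ]
  have : Set.range ((↑) : G → UniformSpace.Completion G) = Set.univ :=
    Set.range_eq_univ.2 hs
  rwa [this]

/-- For a precompact Hausdorff abelian group of square-free exponent, compactness,
minimality and local minimality are equivalent. -/
theorem squarefree_exponent_compact_iff_minimal_iff_locallyMinimal {G : Type*}
    [AddCommGroup G] [TopologicalSpace G] [IsTopologicalAddGroup G] [T2Space G]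
    (hpre : IsPrecompact G) (n : ℕ) (hn : 1 ≤ n) (hsf : Squarefree n)
    (hexp : ∀ x : G, n • x = 0) :
    (CompactSpace G ↔ IsMinimal G) ∧ (IsMinimal G ↔ LocallyMinimal G) := by
  have h1 : CompactSpace G → IsMinimal G := fun _ => aux_compact_minimal
  have h2 : IsMinimal G → LocallyMinimal G := fun h =>
    ⟨Set.univ, Filter.univ_mem, fun σ a b c _ => h σ a b c⟩
  have h3 : LocallyMinimal G → CompactSpace G := aux_lm_compact hpre n hn hsf hexp
  exact ⟨⟨h1, fun h => h3 (h2 h)⟩, ⟨h2, fun h => h1 (h3 h)⟩⟩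
end

section
/- Every complete Hausdorff locally quasi-convex locally minimal abelian topological group is almost minimal. In particular, every locally compact Hausdorff abelian topological group is almost minimal. -/
universe u

/-- `(1/n)U = {x : kx ∈ U for all 1 ≤ k ≤ n}`. -/
def invDiv {G : Type*} [AddGroup G] (n : ℕ) (U : Set G) : Set G :=
  {x | ∀ k : ℕ, 1 ≤ k → k ≤ n → k • x ∈ U}

/-- A Hausdorff topological abelian group is *UFSS* if there is a symmetric neighborhood
`U` of `0` such that the sets `(1/n)U`, `n ∈ ℕ`, form a neighborhood basis at `0`. -/
def IsUFSS (G : Type*) [AddGroup G] [TopologicalSpace G] : Prop :=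
  ∃ U ∈ nhds (0 : G), (∀ x ∈ U, -x ∈ U) ∧
    (∀ n : ℕ, 1 ≤ n → invDiv n U ∈ nhds (0 : G)) ∧
    (∀ V ∈ nhds (0 : G), ∃ n : ℕ, 1 ≤ n ∧ invDiv n U ⊆ V)

/-- A Hausdorff topological abelian group is *almost minimal* if it has a closed minimal
subgroup `N` such that `G/N` is UFSS. -/
def IsAlmostMinimal (G : Type*) [AddCommGroup G] [TopologicalSpace G] : Prop :=
  ∃ N : AddSubgroup G, IsClosed (N : Set G) ∧ IsMinimal ↥N ∧ IsUFSS (G ⧸ N)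

/-- `𝕋₊`, the image of `[-1/4, 1/4]` in `𝕋 = ℝ/ℤ`. -/
noncomputable def Tplus : Set UnitAddCircle :=
  (fun r : ℝ => (r : UnitAddCircle)) '' Set.Icc (-(1/4) : ℝ) (1/4)

/-- The polar of a subset `A` of a topological abelian group: all continuous characters
`χ : G → 𝕋` with `χ(A) ⊆ 𝕋₊`. -/
def polar {G : Type*} [AddGroup G] [TopologicalSpace G] (A : Set G) :
    Set (G →+ UnitAddCircle) :=
  {χ | Continuous χ ∧ ∀ x ∈ A, χ x ∈ Tplus}

/-- A subset `A` is *quasi-convex* if it coincides with its quasi-convex hull. -/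
def IsQuasiConvex {G : Type*} [AddGroup G] [TopologicalSpace G] (A : Set G) : Prop :=
  A = {x | ∀ χ ∈ polar A, χ x ∈ Tplus}

/-- A topological abelian group is *locally quasi-convex* if it has a neighborhood basis
at `0` consisting of quasi-convex sets. -/
def IsLocallyQuasiConvex (G : Type*) [AddGroup G] [TopologicalSpace G] : Prop :=
  ∀ V ∈ nhds (0 : G), ∃ A : Set G, IsQuasiConvex A ∧ A ∈ nhds (0 : G) ∧ A ⊆ V


section Helpers

open MeasureTheory Filter Topology Set
open scoped Pointwise


theorem exists_char_cstar {B : Type*} [CStarAlgebra B] [Nontrivial B] (S : Set B)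
    (h1 : ∀ a ∈ S, ∀ b ∈ S, a * b = b * a)
    (h2 : ∀ a ∈ S, ∀ b ∈ S, a * star b = star b * a)
    (a : StarAlgebra.adjoin ℂ S) (ha : a ≠ 0) :
    ∃ φ : StarAlgebra.adjoin ℂ S →ₐ[ℂ] ℂ, φ a ≠ 0 ∧ ∀ b, ‖φ b‖ ≤ ‖(b : B)‖ := by
  have hc := StarAlgebra.isMulCommutative_adjoin ℂ h1 h2
  let A := (StarAlgebra.adjoin ℂ S).topologicalClosure
  have hcl : IsClosed (A : Set B) := StarSubalgebra.isClosed_topologicalClosure _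
  have hmc : ∀ x y : A, x * y = y * x :=
    (StarSubalgebra.commRingTopologicalClosure (StarAlgebra.adjoin ℂ S)
      (fun x y => hc.is_comm.comm x y)).mul_comm
  let _ : CommCStarAlgebra A :=
    { (StarSubalgebra.cstarAlgebra A) with mul_comm := hmc }
  let i : StarAlgebra.adjoin ℂ S →⋆ₐ[ℂ] A :=
    StarSubalgebra.inclusion (StarSubalgebra.le_topologicalClosure _)
  have hne : i a ≠ 0 := by
    intro h
    apply ha
    have := congrArg (Subtype.val) h
    exact Subtype.ext this
  have hg : WeakDual.gelfandTransform ℂ A (i a) ≠ 0 := by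
    intro h
    exact hne ((gelfandTransform_isometry A).injective (h.trans (map_zero _).symm))
  obtain ⟨φ, hφ⟩ : ∃ φ : WeakDual.characterSpace ℂ A, φ (i a) ≠ 0 := by
    by_contra hcon
    push Not at hcon
    exact hg (ContinuousMap.ext hcon)
  refine ⟨(WeakDual.CharacterSpace.toAlgHom φ).comp (i : StarAlgebra.adjoin ℂ S →ₐ[ℂ] A), hφ, ?_⟩
  intro b
  exact AlgHom.norm_apply_le_self (WeakDual.CharacterSpace.toAlgHom φ) (i b)

theorem exists_bump {G : Type*} [AddCommGroup G] [TopologicalSpace G]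
    [IsTopologicalAddGroup G] [T2Space G] [LocallyCompactSpace G] [MeasurableSpace G] [BorelSpace G]
    (μ : Measure G) [μ.IsAddHaarMeasure] (W : Set G) (hW : W ∈ 𝓝 (0 : G)) :
    ∃ f : G → ℝ, Continuous f ∧ HasCompactSupport f ∧
      (∀ x, 0 ≤ f x) ∧ (∀ x, f x ≠ 0 → x ∈ W) ∧ ∫ x, f x ∂μ = 1 := by
  obtain ⟨f, h1, h0, hc, hI⟩ := exists_continuous_one_zero_of_isCompact (isCompact_singleton (x := (0 : G)))
    (isOpen_interior (s := W)).isClosed_compl (by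
      rw [Set.disjoint_singleton_left]; simpa using mem_interior_iff_mem_nhds.2 hW)
  have hf0 : f 0 = 1 := h1 (by simp)
  have hpos : 0 < ∫ x, f x ∂μ :=
    f.continuous.integral_pos_of_hasCompactSupport_nonneg_nonzero hc (fun x => (hI x).1)
      (x := 0) (by rw [hf0]; norm_num)
  refine ⟨fun x => (∫ x, f x ∂μ)⁻¹ * f x, by fun_prop, hc.mul_left, 
    fun x => mul_nonneg (by positivity) (hI x).1, ?_, ?_⟩
  · intro x hx
    by_contra hxW
    exact hx (by simp [h0 (show x ∈ (interior W)ᶜ from fun h => hxW (interior_subset h))])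
  · rw [integral_const_mul, inv_mul_cancel₀ hpos.ne']

/-- averaging operator -/
theorem exists_avg {G : Type*} [AddCommGroup G] [TopologicalSpace G]
    [IsTopologicalAddGroup G] [T2Space G] [LocallyCompactSpace G] [MeasurableSpace G] [BorelSpace G]
    (μ : Measure G) [μ.IsAddHaarMeasure]
    {H : Type*} [NormedAddCommGroup H] [InnerProductSpace ℂ H] [CompleteSpace H]
    (L : G → H →L[ℂ] H) 
    (hnorm : ∀ x v, ‖L x v‖ = ‖v‖) (hcont : ∀ v, Continuous fun x => L x v)
    (f : G → ℝ) (hfc : Continuous f) (hfs : HasCompactSupport f) :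
    ∃ T : H →L[ℂ] H, (∀ v, T v = ∫ x, (f x) • L x v ∂μ) ∧ ‖T‖ ≤ ∫ x, ‖f x‖ ∂μ := by
  have hint : ∀ v, Integrable (fun x => f x • L x v) μ := fun v =>
    (hfc.smul (hcont v)).integrable_of_hasCompactSupport hfs.smul_right
  let T₀ : H →ₗ[ℂ] H :=
    { toFun := fun v => ∫ x, (f x) • L x v ∂μ
      map_add' := fun v w => by
        simp only [map_add, smul_add]
        exact integral_add (hint v) (hint w)
      map_smul' := fun c v => by
        simp only [map_smul, RingHom.id_apply, smul_comm _ c]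
        exact integral_smul c _ }
  have hb : ∀ v, ‖T₀ v‖ ≤ (∫ x, ‖f x‖ ∂μ) * ‖v‖ := by
    intro v
    calc ‖T₀ v‖ ≤ ∫ x, ‖f x • L x v‖ ∂μ := norm_integral_le_integral_norm _
      _ = (∫ x, ‖f x‖ ∂μ) * ‖v‖ := by
        simp only [norm_smul, hnorm]
        exact integral_mul_const _ _
  exact ⟨T₀.mkContinuous _ hb, fun v => rfl,
    LinearMap.mkContinuous_norm_le _ (integral_nonneg fun _ => norm_nonneg _) _⟩

theorem tendsto_transl {G : Type*} [AddCommGroup G] [TopologicalSpace G]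
    [IsTopologicalAddGroup G] [T2Space G] [LocallyCompactSpace G] [MeasurableSpace G] [BorelSpace G]
    (μ : Measure G) [μ.IsAddHaarMeasure]
    (f : G → ℝ) (hfc : Continuous f) (hfs : HasCompactSupport f) :
    Tendsto (fun y => ∫ x, ‖f (x - y) - f x‖ ∂μ) (𝓝 0) (𝓝 0) := by
  obtain ⟨s, hs, hs0⟩ := exists_compact_mem_nhds (0 : G)
  have := continuousOn_integral_of_compact_support (μ := μ) (s := s) 
    (f := fun y x => ‖f (x - y) - f x‖) ((IsCompact.add hfs hs).union hfs)
    (by apply Continuous.continuousOn; unfold Function.uncurry; fun_prop) (by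
      intro y x hy hx
      have h1 : f x = 0 := by
        apply image_eq_zero_of_notMem_tsupport
        exact fun h => hx (Or.inr h)
      have h2 : f (x - y) = 0 := by
        apply image_eq_zero_of_notMem_tsupport
        exact fun h => hx (Or.inl ⟨x - y, h, y, hy, by simp⟩)
      simp [h1, h2])
  have := (this.continuousAt hs0).tendsto
  simpa using this

theorem exists_char_of_rep {G : Type*} [AddCommGroup G] [TopologicalSpace G]
    [IsTopologicalAddGroup G] [T2Space G] [LocallyCompactSpace G]
    {H : Type*} [NormedAddCommGroup H] [InnerProductSpace ℂ H] [CompleteSpace H]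
    (L : G → H →L[ℂ] H) (h0 : L 0 = 1) (hadd : ∀ x y, L (x + y) = L x * L y)
    (hnorm : ∀ x v, ‖L x v‖ = ‖v‖) (hcont : ∀ v, Continuous fun x => L x v)
    (x₀ : G) (v₀ : H) (hv : L x₀ v₀ ≠ v₀) :
    ∃ χ : G → ℂ, Continuous χ ∧ (∀ x y, χ (x + y) = χ x * χ y) ∧ (∀ x, ‖χ x‖ = 1) ∧
      χ x₀ ≠ 1 := by
  borelize G
  let μ : Measure G := Measure.addHaar
  set ε := ‖L x₀ v₀ - v₀‖ with hε
  have hεpos : 0 < ε := norm_pos_iff.2 (sub_ne_zero.2 hv)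
  have hW : {x | ‖L x v₀ - v₀‖ < ε / 3} ∈ 𝓝 (0 : G) := by
    have hc : Continuous fun x => ‖L x v₀ - v₀‖ := ((hcont v₀).sub continuous_const).norm
    exact (isOpen_lt hc continuous_const).mem_nhds (by simp [h0, hεpos])
  obtain ⟨f, hfc, hfs, hfn, hfW, hf1⟩ := exists_bump μ _ hW
  obtain ⟨T, hT, -⟩ := exists_avg μ L hnorm hcont f hfc hfs
  have hint : ∀ v, Integrable (fun x => f x • L x v) μ := fun v =>
    (hfc.smul (hcont v)).integrable_of_hasCompactSupport hfs.smul_right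
  have hLcomm : ∀ x y, L x * L y = L y * L x := fun x y => by
    rw [← hadd, ← hadd, add_comm]
  -- anything commuting with all `L x` commutes with `T`
  have hTcomm : ∀ B : H →L[ℂ] H, (∀ x, B * L x = L x * B) → B * T = T * B := by
    intro B hB
    ext v
    simp only [mul_apply_eq_comp, hT]
    rw [← ContinuousLinearMap.integral_comp_comm B (hint v)]
    congr 1
    ext x
    have : B (L x v) = L x (B v) := congrArg (fun (C : H →L[ℂ] H) => C v) (hB x)
    rw [← this]
    exact map_real_smul B B.continuous (f x) (L x v)
  have hLT : ∀ x, L x * T = T * L x := fun x => hTcomm _ (fun y => hLcomm x y)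
  have hstarL : ∀ x, star (L x) = L (-x) := by
    intro x
    symm
    rw [ContinuousLinearMap.star_eq_adjoint, ContinuousLinearMap.eq_adjoint_iff]
    intro v w
    let J : H →ₗᵢ[ℂ] H := ⟨(L x : H →ₗ[ℂ] H), hnorm x⟩
    have h := J.inner_map_map (L (-x) v) w
    have h3 : J (L (-x) v) = v := by
      change (L x * L (-x)) v = v
      rw [← hadd]; simp [h0]
    rw [h3] at h
    exact h.symm
  have hstarT : ∀ x, star T * L x = L x * star T := by
    intro x
    have := congrArg star (hLT (-x))
    rw [star_mul, star_mul, hstarL, neg_neg] at this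
    exact this
  let S : Set (H →L[ℂ] H) := insert T (range L)
  have h1 : ∀ a ∈ S, ∀ b ∈ S, a * b = b * a := by
    rintro a (rfl | ⟨x, rfl⟩) b (rfl | ⟨y, rfl⟩)
    · rfl
    · exact (hLT _).symm
    · exact hLT _
    · exact hLcomm _ _
  have h2 : ∀ a ∈ S, ∀ b ∈ S, a * star b = star b * a := by
    rintro a (rfl | ⟨x, rfl⟩) b (rfl | ⟨y, rfl⟩)
    · exact (hTcomm _ hstarT).symm
    · rw [hstarL]; exact (hLT _).symm
    · exact (hstarT _).symm
    · rw [hstarL]; exact hLcomm _ _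
  let A := StarAlgebra.adjoin ℂ S
  let t : A := ⟨T, StarAlgebra.subset_adjoin ℂ S (mem_insert _ _)⟩
  let l : G → A := fun x => ⟨L x, StarAlgebra.subset_adjoin ℂ S (mem_insert_of_mem _ ⟨x, rfl⟩)⟩
  have hl0 : l 0 = 1 := Subtype.ext h0
  have hladd : ∀ x y, l (x + y) = l x * l y := fun x y => Subtype.ext (hadd x y)
  -- T v₀ is close to v₀
  have hTv : ‖T v₀ - v₀‖ ≤ ε / 3 := by
    have e1 : v₀ = ∫ x, f x • v₀ ∂μ := by
      rw [integral_smul_const, hf1, one_smul]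
    have i2 : Integrable (fun x => f x • v₀) μ :=
      (hfc.smul continuous_const).integrable_of_hasCompactSupport hfs.smul_right
    have e2 : T v₀ - v₀ = ∫ x, f x • (L x v₀ - v₀) ∂μ := by
      simp only [smul_sub]
      rw [integral_sub (hint v₀) i2, ← hT, ← e1]
    rw [e2]
    calc ‖∫ x, f x • (L x v₀ - v₀) ∂μ‖ ≤ ∫ x, f x * (ε / 3) ∂μ := by
          apply norm_integral_le_of_norm_le
          · exact (hfc.integrable_of_hasCompactSupport hfs).mul_const _
          · refine Eventually.of_forall fun x => ?_
            rw [norm_smul, Real.norm_of_nonneg (hfn x)]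
            by_cases hx : f x = 0
            · simp [hx]
            · exact mul_le_mul_of_nonneg_left (hfW x hx).le (hfn x)
      _ = ε / 3 := by rw [integral_mul_const, hf1, one_mul]
  have hne : l x₀ * t - t ≠ 0 := by
    intro h
    have h' : L x₀ * T - T = 0 := congrArg Subtype.val h
    have h'' : L x₀ (T v₀) = T v₀ := by
      have := congrArg (fun (C : H →L[ℂ] H) => C v₀) h'
      simpa [sub_eq_zero] using this
    have h3 : L x₀ v₀ - v₀ = (T v₀ - v₀) - L x₀ (T v₀ - v₀) := by
      rw [map_sub, h'']; abel
    have h4 : ε ≤ ε / 3 + ε / 3 := by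
      calc ε = ‖(T v₀ - v₀) - L x₀ (T v₀ - v₀)‖ := by rw [hε, h3]
        _ ≤ ‖T v₀ - v₀‖ + ‖L x₀ (T v₀ - v₀)‖ := norm_sub_le _ _
        _ ≤ _ := by rw [hnorm]; linarith
    linarith
  have : Nontrivial H := ⟨_, _, hv⟩
  obtain ⟨φ, hφ, hφn⟩ := exists_char_cstar S h1 h2 (l x₀ * t - t) hne
  have hφe : φ (l x₀ * t - t) = (φ (l x₀) - 1) * φ t := by
    rw [map_sub, map_mul]; ring
  rw [hφe] at hφ
  have hφt : φ t ≠ 0 := right_ne_zero_of_mul hφ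
  have hmul : ∀ x y, φ (l (x + y)) = φ (l x) * φ (l y) := fun x y => by rw [hladd, map_mul]
  have hle : ∀ x, ‖φ (l x)‖ ≤ 1 := fun x => (hφn _).trans (by
    refine ContinuousLinearMap.opNorm_le_bound _ zero_le_one fun v => ?_
    rw [one_mul]; exact (hnorm x v).le)
  have hone : ∀ x, φ (l x) * φ (l (-x)) = 1 := fun x => by
    rw [← hmul, add_neg_cancel, hl0, map_one]
  have hn1 : ∀ x, ‖φ (l x)‖ = 1 := by
    intro x
    apply le_antisymm (hle x)
    have h := congrArg norm (hone x)
    rw [norm_mul, norm_one] at h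
    nlinarith [hle (-x), norm_nonneg (φ (l x)), norm_nonneg (φ (l (-x)))]
  refine ⟨fun x => φ (l x), ?_, hmul, hn1, fun h => hφ (by
    simp only at h
    rw [h, sub_self, zero_mul])⟩
  -- continuity
  have hbd : ∀ y, ‖L y * T - T‖ ≤ ∫ x, ‖f (x - y) - f x‖ ∂μ := by
    intro y
    have hc' : Continuous fun x => f (x - y) := hfc.comp (continuous_id.sub continuous_const)
    have hs' : HasCompactSupport fun x => f (x - y) := 
      hfs.comp_homeomorph (Homeomorph.subRight y)
    obtain ⟨T', hT', hn'⟩ := exists_avg μ L hnorm hcont (fun x => f (x - y) - f x)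
      (hc'.sub hfc) (hs'.sub hfs)
    have : L y * T - T = T' := by
      ext v
      rw [hT']
      simp only [sub_smul]
      have hi' : Integrable (fun x => f (x - y) • L x v) μ :=
        (hc'.smul (hcont v)).integrable_of_hasCompactSupport hs'.smul_right
      rw [integral_sub hi' (hint v), sub_apply, hT v]
      congr 1
      rw [mul_apply_eq_comp, hT v,
        ← ContinuousLinearMap.integral_comp_comm (L y) (hint v),
        ← integral_add_right_eq_self (fun x => f (x - y) • L x v) y]
      congr 1
      ext x
      rw [add_sub_cancel_right, add_comm x y, hadd]
      exact map_real_smul (L y) (L y).continuous (f x) (L x v)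
    rw [this]; exact hn'
  have hlim : Tendsto (fun y => φ (l y) * φ t - φ t) (𝓝 0) (𝓝 0) := by
    apply squeeze_zero_norm _ (tendsto_transl μ f hfc hfs)
    intro y
    have : φ (l y) * φ t - φ t = φ (l y * t - t) := by rw [map_sub, map_mul]
    rw [this]
    exact (hφn _).trans (hbd y)
  have hlim2 : Tendsto (fun y => φ (l y)) (𝓝 0) (𝓝 1) := by
    have h := (hlim.add_const (φ t)).mul_const (φ t)⁻¹
    simp only [sub_add_cancel, zero_add, mul_inv_cancel₀ hφt] at h
    refine h.congr fun y => ?_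
    field_simp
  rw [continuous_iff_continuousAt]
  intro x
  have h := (hlim2.comp (show Tendsto (fun y => y - x) (𝓝 x) (𝓝 0) by
    have : Continuous fun y : G => y - x := by fun_prop
    simpa using this.tendsto x)).const_mul (φ (l x))
  rw [mul_one] at h
  refine h.congr fun y => ?_
  simp only [Function.comp]
  rw [← hmul]; congr 2; abel


theorem exists_char_ne_one {G : Type*} [AddCommGroup G] [TopologicalSpace G]
    [IsTopologicalAddGroup G] [T2Space G] [LocallyCompactSpace G] (x₀ : G) (hx₀ : x₀ ≠ 0) :
    ∃ χ : G → ℂ, Continuous χ ∧ (∀ x y, χ (x + y) = χ x * χ y) ∧ (∀ x, ‖χ x‖ = 1) ∧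
      χ x₀ ≠ 1 := by
  borelize G
  let μ : Measure G := Measure.addHaar
  have hmp : ∀ x : G, MeasurePreserving (fun y => y + x) μ μ :=
    fun x => measurePreserving_add_right μ x
  let L : G → Lp ℂ 2 μ →L[ℂ] Lp ℂ 2 μ := fun x =>
    (Lp.compMeasurePreservingₗᵢ ℂ (fun y => y + x) (hmp x)).toContinuousLinearMap
  have hL : ∀ x v, L x v = Lp.compMeasurePreserving (fun y => y + x) (hmp x) v := fun _ _ => rfl
  -- a nonfixed vector
  obtain ⟨U, V, hU, hV, h0U, hxV, hUV⟩ := t2_separation hx₀.symm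
  obtain ⟨K, hK, hK0, hKs⟩ : ∃ K : Set G, IsCompact K ∧ K ∈ 𝓝 (0 : G) ∧ K ⊆ U ∩ (fun y => y + x₀) ⁻¹' V := by
    obtain ⟨K, h1, h2, h3⟩ := local_compact_nhds (x := (0 : G)) (n := U ∩ (fun y => y + x₀) ⁻¹' V)
      (inter_mem (hU.mem_nhds h0U)
        ((continuous_add_const x₀).continuousAt.preimage_mem_nhds (hV.mem_nhds (by simpa using hxV))))
    exact ⟨K, h3, h1, h2⟩
  have hKpos : μ K ≠ 0 := (Measure.measure_pos_of_mem_nhds μ hK0).ne'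
  have hKm : MeasurableSet K := hK.measurableSet
  let v : Lp ℂ 2 μ := indicatorConstLp 2 hKm hK.measure_lt_top.ne 1
  refine exists_char_of_rep L ?_ ?_ ?_ ?_ x₀ v ?_
  · ext1 v
    rw [hL]
    have : (fun y : G => y + 0) = id := by ext; simp
    simp only [this]
    exact Lp.compMeasurePreserving_id_apply v
  · intro x y
    ext1 v
    rw [mul_apply_eq_comp, hL, hL, hL, ← Lp.compMeasurePreserving_comp_apply]
    congr 2
    ext z
    simp [add_assoc]
  · intro x v
    rw [hL]; simp
  · intro v
    simp only [hL]
    let g : C(G, C(G, G)) := (ContinuousMap.mk (fun a : G × G ↦ a.2 + a.1) (by fun_prop)).curry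
    exact (continuous_const (y := v)).compMeasurePreservingLp g.continuous hmp (by simp)
  · intro h
    rw [hL, Lp.indicatorConstLp_compMeasurePreserving] at h
    have h1 := (indicatorConstLp_coeFn (p := 2) (hs := (hmp x₀).measurable hKm)
      (hμs := by rw [(hmp x₀).measure_preimage hKm.nullMeasurableSet]; exact hK.measure_lt_top.ne)
      (c := (1 : ℂ)) (μ := μ))
    have h2 := (indicatorConstLp_coeFn (p := 2) (μ := μ) (hs := hKm) (hμs := hK.measure_lt_top.ne)
      (c := (1 : ℂ)))
    rw [h] at h1
    have h3 := h1.symm.trans h2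
    apply hKpos
    rw [Filter.EventuallyEq, ae_iff] at h3
    refine measure_mono_null ?_ h3
    intro z hz
    have hz' : z + x₀ ∉ K := fun hk =>
      Set.disjoint_left.1 hUV (hKs hk).1 (hKs hz).2
    simp [Set.indicator, hz, hz']


theorem two_pow_mul_le (m : ℕ) : ∀ z : ℂ, ‖z‖ = 1 → (∀ k : ℕ, 1 ≤ k → 0 ≤ (z ^ k).re) →
    2 ^ m * (1 - z.re) ≤ 1 := by
  induction m with
  | zero => intro z hz h; have := h 1 le_rfl; simp at this ⊢; linarith
  | succ m ih =>
    intro z hz h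
    have h1 := ih (z ^ 2) (by simp [hz]) (fun k hk => by rw [← pow_mul]; exact h _ (by omega))
    have h2 : (z ^ 2).re = 2 * z.re ^ 2 - 1 := by
      have : z.re ^ 2 + z.im ^ 2 = 1 := by
        have := Complex.sq_norm z
        rw [hz, Complex.normSq_apply] at this; nlinarith
      rw [pow_two, Complex.mul_re]; nlinarith
    have h3 : 0 ≤ z.re := by simpa using h 1 le_rfl
    have h4 : z.re ≤ 1 := hz ▸ Complex.re_le_norm z
    rw [h2] at h1
    have h5 : (0 : ℝ) < 2 ^ m := by positivity
    have h6 : 0 ≤ z.re * (1 - z.re) := mul_nonneg h3 (by linarith)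
    have h7 := mul_nonneg h5.le h6
    rw [pow_succ]
    nlinarith

theorem eq_one_of_re_pow_nonneg (z : ℂ) (hz : ‖z‖ = 1) (h : ∀ k : ℕ, 1 ≤ k → 0 ≤ (z ^ k).re) :
    z = 1 := by
  have h4 : z.re ≤ 1 := hz ▸ Complex.re_le_norm z
  have h5 : z.re = 1 := by
    by_contra hne
    have hlt : 0 < 1 - z.re := by
      have := lt_of_le_of_ne h4 hne
      linarith
    obtain ⟨m, hm⟩ := pow_unbounded_of_one_lt (1 / (1 - z.re)) (one_lt_two (α := ℝ))
    rw [div_lt_iff₀ hlt] at hm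
    linarith [two_pow_mul_le m z hz h]
  have h6 : z.re ^ 2 + z.im ^ 2 = 1 := by
    have := Complex.sq_norm z
    rw [hz, Complex.normSq_apply] at this; nlinarith
  apply Complex.ext
  · simpa using h5
  · rw [h5] at h6
    simp only [Complex.one_im]
    nlinarith

theorem invDiv_mem_nhds' {G : Type*} [AddCommGroup G] [TopologicalSpace G]
    [IsTopologicalAddGroup G] (U : Set G) (hU : U ∈ 𝓝 (0 : G)) (n : ℕ) : invDiv n U ∈ 𝓝 (0 : G) := by
  have : invDiv n U = ⋂ k ∈ Finset.Icc 1 n, (fun x : G => k • x) ⁻¹' U := by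
    ext x; simp [invDiv]
  rw [this, biInter_finset_mem]
  intro k _
  have hc : Continuous fun x : G => k • x := continuous_nsmul k
  exact hc.continuousAt.preimage_mem_nhds (by simpa using hU)

theorem isMinimal_of_compact (N : Type*) [AddCommGroup N] [τ : TopologicalSpace N] [CompactSpace N] :
    IsMinimal N := by
  intro σ hle _ hT2
  refine le_antisymm ?_ hle
  have hc : @Continuous N N τ σ id := continuous_id_iff_le.2 hle
  have hcl : @IsClosedMap N N τ σ id := @Continuous.isClosedMap N N τ σ _ hT2 id hc
  rw [← continuous_id_iff_le]
  refine (@continuous_iff_isClosed N N σ τ id).2 fun s hs => ?_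
  have := hcl s hs
  rwa [image_id] at this

theorem lca_almostMinimal {G : Type*} [AddCommGroup G] [TopologicalSpace G]
    [IsTopologicalAddGroup G] [T2Space G] [LocallyCompactSpace G] : IsAlmostMinimal G := by
  obtain ⟨V, hVc, hV0, hVs⟩ : ∃ V : Set G, IsCompact V ∧ V ∈ 𝓝 (0 : G) ∧ ∀ x ∈ V, -x ∈ V := by
    obtain ⟨s, hs, hs0⟩ := exists_compact_mem_nhds (0 : G)
    refine ⟨s ∩ -s, hs.inter_right hs.neg.isClosed, inter_mem hs0 (neg_mem_nhds_zero G hs0), ?_⟩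
    rintro x ⟨h1, h2⟩
    exact ⟨h2, by simpa using h1⟩
  have h0V : (0 : G) ∈ V := mem_of_mem_nhds hV0
  choose! χ hχc hχa hχn hχ1 using fun (x : G) (hx : x ≠ 0) => exists_char_ne_one x hx
  have hKc : IsCompact ((V + V) \ interior V) := (hVc.add hVc).diff isOpen_interior
  have hKne : ∀ x ∈ (V + V) \ interior V, x ≠ 0 := by
    rintro x hx rfl
    exact hx.2 (mem_interior_iff_mem_nhds.2 hV0)
  obtain ⟨t, htK, ht⟩ := hKc.elim_nhds_subcover (fun i => {x | χ i x ≠ 1}) (fun i hi =>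
    (isOpen_ne_fun (hχc i (hKne i hi)) continuous_const).mem_nhds (hχ1 i (hKne i hi)))
  have ht0 : ∀ i ∈ t, i ≠ 0 := fun i hi => hKne i (htK i hi)
  have hz : ∀ i ∈ t, χ i 0 = 1 := by
    intro i hi
    have h1 := hχa i (ht0 i hi) 0 0
    have h2 : χ i 0 ≠ 0 := fun h => by
      have := hχn i (ht0 i hi) 0
      rw [h] at this; simp at this
    rw [add_zero] at h1
    exact (mul_eq_left₀ h2).1 h1.symm
  have hneg : ∀ i ∈ t, ∀ x, χ i x * χ i (-x) = 1 := fun i hi x => by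
    rw [← hχa i (ht0 i hi), add_neg_cancel, hz i hi]
  have hpow : ∀ i ∈ t, ∀ x, ∀ k : ℕ, χ i (k • x) = χ i x ^ k := by
    intro i hi x k
    induction k with
    | zero => simp [hz i hi]
    | succ k ih => rw [succ_nsmul, hχa i (ht0 i hi), ih, pow_succ]
  have hker : ∀ x ∈ V + V, (∀ i ∈ t, χ i x = 1) → x ∈ V := by
    intro x hx h
    by_contra hxV
    have := ht ⟨hx, fun h => hxV (interior_subset h)⟩
    simp only [mem_iUnion] at this
    obtain ⟨i, hi, hne⟩ := this
    exact hne (h i hi)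
  let N : AddSubgroup G :=
    { carrier := {x | x ∈ V ∧ ∀ i ∈ t, χ i x = 1}
      zero_mem' := ⟨h0V, hz⟩
      add_mem' := by
        rintro a b ⟨ha, ha'⟩ ⟨hb, hb'⟩
        have h : ∀ i ∈ t, χ i (a + b) = 1 := fun i hi => by
          rw [hχa i (ht0 i hi), ha' i hi, hb' i hi, one_mul]
        exact ⟨hker _ (add_mem_add ha hb) h, h⟩
      neg_mem' := by
        rintro a ⟨ha, ha'⟩
        refine ⟨hVs a ha, fun i hi => ?_⟩
        have := hneg i hi a
        rwa [ha' i hi, one_mul] at this }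
  have hNmem : ∀ x, x ∈ N ↔ x ∈ V ∧ ∀ i ∈ t, χ i x = 1 := fun x => Iff.rfl
  have hNcl : IsClosed (N : Set G) := by
    have : (N : Set G) = V ∩ ⋂ i ∈ t, {x | χ i x = 1} := by
      ext x; simp [hNmem]
    rw [this]
    exact hVc.isClosed.inter (isClosed_biInter fun i hi =>
      isClosed_eq (hχc i (ht0 i hi)) continuous_const)
  have hNc : IsCompact (N : Set G) := hVc.of_isClosed_subset hNcl (fun x hx => hx.1)
  have : CompactSpace N := isCompact_iff_compactSpace.1 hNc
  refine ⟨N, hNcl, isMinimal_of_compact N, ?_⟩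
  let W : Set G := V ∩ ⋂ i ∈ t, {x | 0 ≤ (χ i x).re}
  have hW0 : W ∈ 𝓝 (0 : G) := by
    refine inter_mem hV0 ((biInter_finset_mem t).2 fun i hi => ?_)
    have hc : Continuous fun x => (χ i x).re := Complex.continuous_re.comp (hχc i (ht0 i hi))
    filter_upwards [(isOpen_lt continuous_const hc).mem_nhds
      (show (0 : ℝ) < (χ i 0).re by simp [hz i hi])] with x hx
    exact le_of_lt hx
  let π : G → G ⧸ N := QuotientAddGroup.mk
  have hπ0 : π '' W ∈ 𝓝 (0 : G ⧸ N) :=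
    (QuotientAddGroup.isOpenMap_coe (N := N)).image_mem_nhds hW0
  have hπW : ∀ x, π x ∈ π '' W → x ∈ V + V ∧ ∀ i ∈ t, 0 ≤ (χ i x).re := by
    rintro x ⟨w, hw, hwx⟩
    have hn : -w + x ∈ N := QuotientAddGroup.eq.1 hwx
    refine ⟨⟨w, hw.1, -w + x, hn.1, by simp⟩, fun i hi => ?_⟩
    have hx : x = w + (-w + x) := by abel
    rw [hx, hχa i (ht0 i hi), hn.2 i hi, mul_one]
    have := hw.2
    simp only [mem_iInter] at this
    exact this i hi
  refine ⟨π '' W, hπ0, ?_, fun n _ => invDiv_mem_nhds' _ hπ0 n, ?_⟩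
  · rintro _ ⟨w, hw, rfl⟩
    refine ⟨-w, ⟨hVs w hw.1, ?_⟩, rfl⟩
    have hw2 := hw.2
    simp only [mem_iInter] at hw2 ⊢
    intro i hi
    have h1 := hneg i hi w
    have h2 := hw2 i hi
    have h3 : χ i (-w) = (χ i w)⁻¹ := eq_inv_of_mul_eq_one_right h1
    simp only [mem_ofPred_eq] at h2 ⊢
    rw [h3, Complex.inv_re]
    exact div_nonneg h2 (Complex.normSq_nonneg _)
  · intro O hO
    let K : ℕ → Set G := fun n => (V + V) ∩ ⋂ k ∈ Finset.Icc 1 (n + 1), ⋂ i ∈ t,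
      {x | 0 ≤ (χ i x ^ k).re}
    have hKcl : ∀ n, IsClosed (K n) := fun n => by
      refine (hVc.add hVc).isClosed.inter (isClosed_biInter fun k _ => isClosed_biInter fun i hi => ?_)
      exact isClosed_le continuous_const
        (Complex.continuous_re.comp ((hχc i (ht0 i hi)).pow k))
    have hKcp : ∀ n, IsCompact (K n) := fun n =>
      (hVc.add hVc).of_isClosed_subset (hKcl n) inter_subset_left
    have hdir : Directed (· ⊇ ·) K := by
      apply Antitone.directed_ge
      intro m n hmn
      refine inter_subset_inter_right _ (biInter_subset_biInter_left ?_)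
      intro k hk
      simp at hk ⊢
      omega
    have hO' : ∀ x ∈ ⋂ n, K n, π ⁻¹' O ∈ 𝓝 x := by
      intro x hx
      have hxN : x ∈ N := by
        have hxK : ∀ n, x ∈ K n := mem_iInter.1 hx
        have h1 : ∀ i ∈ t, χ i x = 1 := by
          intro i hi
          refine eq_one_of_re_pow_nonneg _ (hχn i (ht0 i hi) x) fun k hk => ?_
          have := (hxK k).2
          simp only [mem_iInter] at this
          exact this k (by simp; omega) i hi
        exact ⟨hker x (hxK 0).1 h1, h1⟩
      have hπx : π x = 0 := (QuotientAddGroup.eq_zero_iff x).2 hxN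
      exact (QuotientAddGroup.continuous_mk (N := N)).continuousAt.preimage_mem_nhds
        (by change O ∈ 𝓝 (π x); rwa [hπx])
    obtain ⟨n, hn⟩ := exists_subset_nhds_of_isCompact' hdir hKcp hKcl hO'
    refine ⟨n + 1, by omega, fun y hy => ?_⟩
    obtain ⟨x, rfl⟩ := QuotientAddGroup.mk_surjective y
    apply hn
    have hy1 := hπW x (by simpa using hy 1 le_rfl (by omega))
    refine ⟨hy1.1, ?_⟩
    simp only [mem_iInter, Finset.mem_Icc]
    intro k hk i hi
    have := (hπW (k • x) (hy k hk.1 hk.2)).2 i hi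
    rwa [hpow i hi] at this


theorem mem_Tplus_iff (t : UnitAddCircle) : t ∈ Tplus ↔ ‖t‖ ≤ 1 / 4 := by
  constructor
  · rintro ⟨r, hr, rfl⟩
    have h : |r| ≤ 1 / 4 := abs_le.2 hr
    have := (AddCircle.norm_coe_eq_abs_iff (1 : ℝ) (x := r) one_ne_zero).2 (by
      rw [abs_one]; linarith)
    exact this.trans_le h
  · intro h
    induction t using QuotientAddGroup.induction_on with
    | H r =>
      have h' : |r - round r| ≤ 1 / 4 := by
        rwa [← UnitAddCircle.norm_eq]
      refine ⟨r - round r, abs_le.1 h', ?_⟩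
      simp

theorem norm_nsmul_of_small (t : UnitAddCircle) (n : ℕ) (hn : 1 ≤ n)
    (h : ∀ k : ℕ, 1 ≤ k → k ≤ n → k • t ∈ Tplus) : n * ‖t‖ ≤ 1 / 4 := by
  obtain ⟨r, hr, rfl⟩ : t ∈ Tplus := by simpa using h 1 le_rfl hn
  have hr' : |r| ≤ 1 / 4 := abs_le.2 hr
  have key : ∀ x : ℝ, |x| ≤ 1 / 2 → ‖(x : UnitAddCircle)‖ = |x| := fun x hx =>
    (AddCircle.norm_coe_eq_abs_iff (1 : ℝ) (x := x) one_ne_zero).2 (by rwa [abs_one])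
  have main : ∀ k : ℕ, k ≤ n → k * |r| ≤ 1 / 4 := by
    intro k
    induction k with
    | zero => intro _; norm_num
    | succ k ih =>
      intro hk
      have h1 := ih (by omega)
      have h2 : |((k + 1 : ℕ) : ℝ) * r| = ((k + 1 : ℕ) : ℝ) * |r| := by
        rw [abs_mul, Nat.abs_cast]
      have h3 : ((k + 1 : ℕ) : ℝ) * |r| ≤ 1 / 2 := by push_cast; linarith
      have h4 := (mem_Tplus_iff _).1 (h (k + 1) (by omega) hk)
      have h5 : (k + 1) • (r : UnitAddCircle) = ((((k + 1 : ℕ) : ℝ) * r : ℝ) : UnitAddCircle) := by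
        rw [← nsmul_eq_mul, AddCircle.coe_nsmul]
      rw [h5, key _ (by rw [h2]; exact h3), h2] at h4
      exact h4
  rw [show ‖(fun r : ℝ => (r : UnitAddCircle)) r‖ = |r| from key r (by linarith)]
  exact main n le_rfl

theorem minimal_aux {G : Type*} [AddCommGroup G] [τ : TopologicalSpace G]
    [IsTopologicalAddGroup G] (N : AddSubgroup G) (hN : IsClosed (N : Set G))
    (U : Set G) (hU : U ∈ 𝓝 (0 : G)) (hUN : ∀ x ∈ U, ∀ n ∈ N, n + x ∈ U)
    (hmin : ∀ σ : TopologicalSpace G, τ ≤ σ →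
      @IsTopologicalAddGroup G σ _ → @T2Space G σ → U ∈ @nhds G σ 0 → σ = τ)
    {N' : Type*} [AddCommGroup N'] [TopologicalSpace N'] [IsTopologicalAddGroup N'] [T2Space N']
    (e : N ≃+ N') (he : Continuous e) : Continuous e.symm := by
  let Φ : N' × G →+ G :=
    (N.subtype.comp (e.symm : N' →+ N)).coprod (AddMonoidHom.id G)
  have hΦ : ∀ w g, Φ (w, g) = (e.symm w : G) + g := fun w g => rfl
  have hsurj : Function.Surjective Φ := fun g => ⟨(0, g), by simp [hΦ]⟩
  have hcl : IsClosed (Φ.ker : Set (N' × G)) := by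
    have h1 : IsClosed {p : N' × N | p.1 = - e p.2} :=
      isClosed_eq continuous_fst (he.comp continuous_snd).neg
    have h2 : IsClosedEmbedding (Prod.map id Subtype.val : N' × N → N' × G) :=
      IsClosedEmbedding.id.prodMap hN.isClosedEmbedding_subtypeVal
    have h3 := h2.isClosedMap _ h1
    convert! h3 using 1
    ext ⟨w, g⟩
    simp only [SetLike.mem_coe, AddMonoidHom.mem_ker, hΦ, mem_image]
    constructor
    · intro h
      have hg : g = ((-(e.symm w) : N) : G) := by
        rw [AddSubgroup.coe_neg]; exact eq_neg_of_add_eq_zero_right h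
      refine ⟨(w, -(e.symm w)), ?_, ?_⟩
      · change w = - e (-(e.symm w)); simp
      · simp [Prod.map, hg]
    · rintro ⟨⟨w', n⟩, h, h'⟩
      simp only [Prod.map, id, Prod.mk.injEq] at h'
      obtain ⟨rfl, rfl⟩ := h'
      have h : w' = - e n := h
      rw [h]; simp
  let E : (N' × G) ⧸ Φ.ker ≃+ G := QuotientAddGroup.quotientKerEquivOfSurjective Φ hsurj
  have hE : ∀ p, E (QuotientAddGroup.mk p) = Φ p := fun p => rfl
  have : IsClosed (Φ.ker : Set (N' × G)) := hcl
  have hσ : TopologicalSpace.induced E.symm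
      inferInstance = τ := by
    apply hmin
    · rw [← continuous_iff_le_induced]
      have : (E.symm : G → (N' × G) ⧸ Φ.ker) = fun g => QuotientAddGroup.mk ((0 : N'), g) := by
        ext g
        rw [AddEquiv.symm_apply_eq, hE, hΦ]; simp
      rw [this]
      exact QuotientAddGroup.continuous_mk.comp (by fun_prop)
    · exact topologicalAddGroup_induced E.symm
    · exact @T2Space.of_injective_continuous _ _ (TopologicalSpace.induced E.symm
        inferInstance) _ _ E.symm E.symm.injective
        continuous_induced_dom
    · rw [nhds_induced, map_zero]
      refine ⟨QuotientAddGroup.mk '' ((univ : Set N') ×ˢ U), ?_, ?_⟩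
      · exact QuotientAddGroup.isOpenMap_coe.image_mem_nhds (x := (0 : N' × G))
          (prod_mem_nhds univ_mem hU)
      · rintro g ⟨⟨w, u⟩, hu, h⟩
        have : g = Φ (w, u) := by
          rw [← hE, h]; simp
        rw [this, hΦ]
        exact hUN u hu.2 _ (e.symm w).2
  have hc : Continuous fun w : N' => (e.symm w : G) := by
    rw [← hσ, continuous_induced_rng]
    have : (E.symm ∘ fun w : N' => (e.symm w : G)) = fun w => QuotientAddGroup.mk (w, (0 : G)) := by
      ext w
      simp only [Function.comp]
      rw [AddEquiv.symm_apply_eq, hE, hΦ]; simp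
    rw [this]
    exact QuotientAddGroup.continuous_mk.comp (by fun_prop)
  exact Continuous.subtype_mk hc fun w => (e.symm w).2

theorem lqc_almostMinimal {G : Type*} [AddCommGroup G] [τ : TopologicalSpace G]
    [IsTopologicalAddGroup G] [T2Space G]
    (hcomp : @CompleteSpace G (IsTopologicalAddGroup.rightUniformSpace G))
    (hlqc : IsLocallyQuasiConvex G) (hlm : LocallyMinimal G) : IsAlmostMinimal G := by
  obtain ⟨V, hV, hVmin⟩ := hlm
  obtain ⟨U, hUq, hU, hUV⟩ := hlqc V hV
  have hmin : ∀ σ : TopologicalSpace G, τ ≤ σ →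
      @IsTopologicalAddGroup G σ _ → @T2Space G σ → U ∈ @nhds G σ 0 → σ = τ :=
    fun σ h1 h2 h3 h4 => hVmin σ h1 h2 h3 (mem_of_superset h4 hUV)
  have hUmem : ∀ x, x ∈ U ↔ ∀ χ ∈ polar U, ‖χ x‖ ≤ 1 / 4 := by
    intro x
    conv_lhs => rw [hUq]
    simp only [mem_ofPred_eq, mem_Tplus_iff]
  let N : AddSubgroup G := ⨅ χ ∈ polar U, χ.ker
  have hNmem : ∀ x, x ∈ N ↔ ∀ χ ∈ polar U, χ x = 0 := by
    intro x; simp [N, AddSubgroup.mem_iInf]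
  have hNcl : IsClosed (N : Set G) := by
    have : (N : Set G) = ⋂ χ ∈ polar U, {x | χ x = 0} := by
      ext x; simp [hNmem]
    rw [this]
    exact isClosed_biInter fun χ hχ => isClosed_eq hχ.1 continuous_const
  have hUN : ∀ x ∈ U, ∀ n ∈ N, n + x ∈ U := by
    intro x hx n hn
    rw [hUmem] at hx ⊢
    intro χ hχ
    rw [map_add, (hNmem n).1 hn χ hχ, zero_add]
    exact hx χ hχ
  refine ⟨N, hNcl, ?_, ?_⟩
  · intro σ hle hg ht
    refine le_antisymm ?_ hle
    have := @minimal_aux G _ τ _ N hNcl U hU hUN hmin N _ σ hg ht (AddEquiv.refl N)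
      (continuous_id_iff_le.2 hle)
    exact continuous_id_iff_le.1 this
  -- the UFSS part
  let Φ₁ : G →+ UniformFun (polar U) UnitAddCircle :=
    { toFun := fun x => UniformFun.ofFun fun χ => χ.1 x
      map_zero' := congrArg UniformFun.ofFun (funext fun χ => map_zero χ.1)
      map_add' := fun x y => congrArg UniformFun.ofFun (funext fun χ => map_add χ.1 x y) }
  let Φ₂ : G →+ ({χ : G →+ UnitAddCircle // Continuous χ} → UnitAddCircle) :=
    { toFun := fun x χ => χ.1 x
      map_zero' := by ext χ; exact map_zero χ.1
      map_add' := fun x y => by ext χ; exact map_add χ.1 x y }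
  have hbasis : (comap Φ₁ (𝓝 0)).HasBasis (fun ε : ℝ => 0 < ε)
      (fun ε => {x | ∀ χ ∈ polar U, ‖χ x‖ < ε}) := by
    have h := (UniformFun.hasBasis_nhds_of_basis (polar U) UnitAddCircle 0
      Metric.uniformity_basis_dist).comap Φ₁
    refine h.to_hasBasis' (fun ε hε => ⟨ε, hε, ?_⟩) (fun ε hε => ?_)
    · intro x hx χ
      change dist (0 : UnitAddCircle) (χ.1 x) < ε
      rw [dist_zero_left]
      exact hx _ χ.2
    · refine mem_of_superset (h.mem_of_mem hε) ?_
      intro x hx χ hχ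
      have : dist (0 : UnitAddCircle) (χ x) < ε := hx ⟨χ, hχ⟩
      rwa [dist_zero_left] at this
  have hsmall : ∀ ε : ℝ, 0 < ε → ∃ n : ℕ, 1 ≤ n ∧ 
      ∀ x, x ∈ invDiv n U → ∀ χ ∈ polar U, ‖χ x‖ < ε := by
    intro ε hε
    obtain ⟨n, hn⟩ := exists_nat_gt (1 / ε)
    have hn0 : 0 < (n : ℝ) := lt_trans (by positivity) hn
    have hn1 : 1 ≤ n := by exact_mod_cast hn0
    refine ⟨n, hn1, fun x hx χ hχ => ?_⟩
    have h1 := norm_nsmul_of_small (χ x) n hn1 (fun k hk hk' => by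
      rw [← map_nsmul]
      exact hχ.2 _ (hx k hk hk'))
    rw [div_lt_iff₀ hε] at hn
    by_contra hcon
    push Not at hcon
    nlinarith
  have hΦ₁c : Continuous Φ₁ := by
    apply continuous_of_continuousAt_zero
    rw [ContinuousAt, map_zero, tendsto_iff_comap]
    rw [hbasis.ge_iff]
    intro ε hε
    obtain ⟨n, hn, h⟩ := hsmall ε hε
    exact mem_of_superset (invDiv_mem_nhds' U hU n) h
  have hΦ₂c : Continuous Φ₂ := continuous_pi fun χ => χ.2
  have hsep : ∀ x, x ≠ 0 → ∃ χ : G →+ UnitAddCircle, Continuous χ ∧ χ x ≠ 0 := by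
    intro x hx
    obtain ⟨A, hAq, hA, hAx⟩ := hlqc {x}ᶜ (isOpen_compl_singleton.mem_nhds (by simpa using hx.symm))
    have hxA : x ∉ A := fun h => hAx h rfl
    rw [hAq] at hxA
    simp only [mem_ofPred_eq, not_forall] at hxA
    obtain ⟨χ, hχ, h⟩ := hxA
    refine ⟨χ, hχ.1, fun h0 => h ?_⟩
    rw [mem_Tplus_iff, h0]; norm_num
  let Φ := Φ₁.prod Φ₂
  have hinj : Function.Injective Φ := by
    rw [injective_iff_map_eq_zero]
    intro x hx
    by_contra hne
    obtain ⟨χ, hχ, h⟩ := hsep x hne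
    exact h (congrFun (congrArg Prod.snd hx) ⟨χ, hχ⟩)
  have hτ : TopologicalSpace.induced Φ inferInstance = τ := by
    apply hmin
    · rw [← continuous_iff_le_induced]
      exact hΦ₁c.prodMk hΦ₂c
    · exact topologicalAddGroup_induced Φ
    · exact @T2Space.of_injective_continuous _ _ (TopologicalSpace.induced Φ inferInstance) _ _ Φ hinj continuous_induced_dom
    · rw [nhds_induced, map_zero]
      have h1 : comap Φ (𝓝 0) ≤ comap Φ₁ (𝓝 0) := by
        rw [← tendsto_iff_comap]
        have : Tendsto (Prod.fst ∘ Φ) (comap Φ (𝓝 0)) (𝓝 0) :=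
          (continuous_fst.tendsto 0).comp tendsto_comap
        exact this
      apply h1
      refine mem_of_superset (hbasis.mem_of_mem (show (0 : ℝ) < 1 / 4 by norm_num)) ?_
      intro x hx
      rw [hUmem]
      exact fun χ hχ => (hx χ hχ).le
  have hnhds : 𝓝 (0 : G) = comap Φ (𝓝 0) := by
    conv_lhs => rw [← hτ]
    rw [nhds_induced, map_zero]
  -- completeness argument
  have hconv : ∀ F : Ultrafilter G, ↑F ≤ comap Φ₁ (𝓝 0) → ∃ x ∈ N, ↑F ≤ 𝓝 x := by
    intro F hF
    have hF1 : Tendsto Φ₁ F (𝓝 0) := tendsto_iff_comap.2 hF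
    have hF2 : ∃ y, Tendsto Φ₂ F (𝓝 y) := by
      obtain ⟨y, -, hy⟩ := isCompact_univ.ultrafilter_le_nhds (F.map Φ₂) (by simp)
      exact ⟨y, hy⟩
    obtain ⟨y, hy⟩ := hF2
    have hlim : Tendsto (fun p : G × G => p.2 - p.1) ((F : Filter G) ×ˢ F) (𝓝 0) := by
      rw [hnhds, tendsto_comap_iff]
      have h1 : Tendsto (fun p : G × G => Φ₁ p.2 - Φ₁ p.1) ((F : Filter G) ×ˢ F) (𝓝 0) := by
        simpa using (hF1.comp tendsto_snd).sub (hF1.comp tendsto_fst)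
      have h2 : Tendsto (fun p : G × G => Φ₂ p.2 - Φ₂ p.1) ((F : Filter G) ×ˢ F) (𝓝 0) := by
        simpa using (hy.comp tendsto_snd).sub (hy.comp tendsto_fst)
      refine (h1.prodMk_nhds h2).congr fun p => ?_
      simp only [Function.comp, Φ, map_sub]
      rfl
    let _ : UniformSpace G := IsTopologicalAddGroup.rightUniformSpace G
    have hcau : Cauchy (F : Filter G) := by
      refine ⟨F.neBot, ?_⟩
      change _ ≤ comap (fun p : G × G => p.2 + -p.1) (𝓝 0)
      rw [← tendsto_iff_comap]
      simpa only [sub_eq_add_neg] using hlim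
    obtain ⟨x, hx⟩ := CompleteSpace.complete hcau
    refine ⟨x, ?_, hx⟩
    have h0 : Φ₁ x = 0 := tendsto_nhds_unique ((hΦ₁c.tendsto x).mono_left hx) hF1
    rw [hNmem]
    intro χ hχ
    exact congrFun (congrArg UniformFun.toFun h0) ⟨χ, hχ⟩
  let π : G → G ⧸ N := QuotientAddGroup.mk
  have hπ0 : π '' U ∈ 𝓝 (0 : G ⧸ N) :=
    (QuotientAddGroup.isOpenMap_coe (N := N)).image_mem_nhds hU
  have hπU : ∀ x, π x ∈ π '' U → x ∈ U := by
    rintro x ⟨u, hu, hux⟩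
    have hn : -u + x ∈ N := QuotientAddGroup.eq.1 hux
    have := hUN u hu _ hn
    rwa [show -u + x + u = x by abel] at this
  refine ⟨π '' U, hπ0, ?_, fun n _ => invDiv_mem_nhds' _ hπ0 n, ?_⟩
  · rintro _ ⟨u, hu, rfl⟩
    refine ⟨-u, ?_, rfl⟩
    rw [hUmem] at hu ⊢
    intro χ hχ
    rw [map_neg, norm_neg]
    exact hu χ hχ
  · intro O hO
    have hO' : π ⁻¹' O ∈ comap Φ₁ (𝓝 0) := by
      rw [mem_iff_ultrafilter]
      intro F hF
      obtain ⟨x, hxN, hx⟩ := hconv F hF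
      apply hx
      have hπx : π x = 0 := (QuotientAddGroup.eq_zero_iff x).2 hxN
      exact (QuotientAddGroup.continuous_mk (N := N)).continuousAt.preimage_mem_nhds
        (by change O ∈ 𝓝 (π x); rwa [hπx])
    obtain ⟨ε, hε, hεO⟩ := hbasis.mem_iff.1 hO'
    obtain ⟨n, hn, h⟩ := hsmall ε hε
    refine ⟨n, hn, fun y hy => ?_⟩
    obtain ⟨x, rfl⟩ := QuotientAddGroup.mk_surjective y
    apply hεO
    exact h x fun k hk hk' => hπU _ (hy k hk hk')



end Helpers

/-- Every complete Hausdorff locally quasi-convex locally minimal abelian topological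
group is almost minimal; in particular, every locally compact Hausdorff abelian
topological group is almost minimal. (Completeness is taken with respect to the
two-sided (Raikov) uniformity, which for abelian groups is the canonical group
uniformity.) -/
theorem complete_lqc_locallyMinimal_isAlmostMinimal :
    (∀ (G : Type u) [AddCommGroup G] [TopologicalSpace G] [IsTopologicalAddGroup G]
      [T2Space G], @CompleteSpace G (IsTopologicalAddGroup.rightUniformSpace G) →
        IsLocallyQuasiConvex G → LocallyMinimal G → IsAlmostMinimal G) ∧
    (∀ (G : Type u) [AddCommGroup G] [TopologicalSpace G] [IsTopologicalAddGroup G]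
      [T2Space G] [LocallyCompactSpace G], IsAlmostMinimal G) := by
  exact ⟨fun G _ _ _ _ h1 h2 h3 => lqc_almostMinimal h1 h2 h3, fun G _ _ _ _ _ => lca_almostMinimal⟩
end

section
/- Let G be a precompact Hausdorff locally minimal abelian topological group. Then G has a closed subgroup N such that N (with the subspace topology) is minimal and there exist n ∈ ℕ and a continuous injective group homomorphism from G/N into the torus 𝕋^n, where 𝕋 = ℝ/ℤ. -/
theorem aux_char_of_cstar {K B : Type*} [AddCommGroup K] [TopologicalSpace K]
    [CStarAlgebra B] (U : K → B) (hU0 : U 0 = 1) (hUadd : ∀ x y, U (x + y) = U x * U y)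
    (hUstar : ∀ x, star (U x) = U (-x)) (T : B) (hTU : ∀ y, T * U y = U y * T)
    (hc : Continuous fun y => T * U y) (x : K) (hx : T * U x ≠ T) :
    ∃ χ : K →+ UnitAddCircle, Continuous χ ∧ χ x ≠ 0 := by
  classical
  set S : B := star T * T with hS
  have hTU' : ∀ y, star T * U y = U y * star T := by
    intro y
    have := congrArg star (hTU (-y))
    rw [star_mul, star_mul, hUstar, neg_neg] at this
    exact this.symm
  have hSU : ∀ y, S * U y = U y * S := by
    intro y
    rw [hS, mul_assoc, hTU, ← mul_assoc, hTU', mul_assoc]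
  have hUU : ∀ y z, U y * U z = U z * U y := fun y z => by rw [← hUadd, ← hUadd, add_comm]
  have hSS : star S = S := by simp [hS]
  set s : Set B := insert S (Set.range U) with hs
  have hcomm : ∀ a ∈ s, ∀ b ∈ s, a * b = b * a := by
    rintro a (rfl | ⟨y, rfl⟩) b (rfl | ⟨z, rfl⟩)
    · rfl
    · exact hSU z
    · exact (hSU y).symm
    · exact hUU y z
  have hstar : ∀ a ∈ s, star a ∈ s := by
    rintro a (rfl | ⟨y, rfl⟩)
    · rw [hSS]; exact Set.mem_insert _ _
    · rw [hUstar]; exact Set.mem_insert_of_mem _ ⟨_, rfl⟩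
  let A : StarSubalgebra ℂ B := (StarAlgebra.adjoin ℂ s).topologicalClosure
  have hsA : s ⊆ A := (StarAlgebra.subset_adjoin ℂ s).trans
    (StarSubalgebra.le_topologicalClosure _)
  letI I0 : CommRing (StarAlgebra.adjoin ℂ s) :=
    StarAlgebra.adjoinCommRingOfComm ℂ hcomm (fun a ha b hb => hcomm a ha _ (hstar b hb))
  have hAcl : IsClosed (A : Set B) := StarSubalgebra.isClosed_topologicalClosure _
  have hAc : ∀ a b : A, a * b = b * a :=
    (StarSubalgebra.commRingTopologicalClosure (StarAlgebra.adjoin ℂ s)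
      (fun a b => I0.mul_comm a b)).mul_comm
  haveI : IsClosed (A : Set B) := hAcl
  letI I1 : CStarAlgebra A := StarSubalgebra.cstarAlgebra A
  letI I2 : CommCStarAlgebra A := { I1 with mul_comm := hAc }
  let u : K → A := fun y => ⟨U y, hsA (Set.mem_insert_of_mem _ ⟨_, rfl⟩)⟩
  let t : A := ⟨S, hsA (Set.mem_insert _ _)⟩
  have hne : t * u x - t ≠ 0 := by
    intro h
    have h1 : S * U x - S = 0 := congrArg Subtype.val h
    apply hx
    have h2 : star (T * U x - T) * (T * U x - T) = 0 := by
      have : star (T * U x - T) * (T * U x - T) = star (U x - 1) * (S * U x - S) := by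
        rw [hS]; simp only [star_sub, star_mul, star_one]; noncomm_ring
      rw [this, h1, mul_zero]
    exact sub_eq_zero.1 (CStarRing.star_mul_self_eq_zero_iff _ |>.1 h2)
  obtain ⟨φ, hφ⟩ : ∃ φ : WeakDual.characterSpace ℂ A, φ (t * u x - t) ≠ 0 := by
    by_contra! hcon
    apply hne
    apply (gelfandTransform_isometry A).injective
    ext φ
    simpa using hcon φ
  have hu0 : u 0 = 1 := Subtype.ext hU0
  have huadd : ∀ y z, u (y + z) = u y * u z := fun y z => Subtype.ext (hUadd y z)
  have hustar : ∀ y, star (u y) = u (-y) := fun y => Subtype.ext (hUstar y)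
  have hφ' : φ t * (φ (u x) - 1) ≠ 0 := by
    rw [map_sub, map_mul] at hφ
    rwa [mul_sub, mul_one]
  have hφt : φ t ≠ 0 := left_ne_zero_of_mul hφ'
  have hφx : φ (u x) ≠ 1 := sub_ne_zero.1 (right_ne_zero_of_mul hφ')
  have hnorm : ∀ y, φ (u y) ∈ Submonoid.unitSphere ℂ := by
    intro y
    have h1 : φ (u y) * star (φ (u y)) = 1 := by
      rw [← map_star, hustar, ← map_mul, ← huadd, add_neg_cancel, hu0, map_one]
    show φ (u y) ∈ Metric.sphere (0 : ℂ) 1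
    rw [mem_sphere_zero_iff_norm]
    have h2 := congrArg norm h1
    rw [norm_mul, norm_star, norm_one] at h2
    nlinarith [norm_nonneg (φ (u y))]
  have hcφ : Continuous fun y => φ (u y) := by
    have h1 : Continuous fun y => t * u y := by
      refine Continuous.subtype_mk (f := fun y => S * U y) ?_ _
      have : (fun y => S * U y) = fun y => star T * (T * U y) := by
        ext y; rw [hS, mul_assoc]
      rw [this]
      exact continuous_const.mul hc
    have h2 : Continuous fun y => φ (t * u y) := (map_continuous φ).comp h1
    have h3 : (fun y => φ (u y)) = fun y => (φ t)⁻¹ * φ (t * u y) := by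
      ext y; rw [map_mul, inv_mul_cancel_left₀ hφt]
    rw [h3]
    exact continuous_const.mul h2
  let c : K → Circle := fun y => ⟨φ (u y), hnorm y⟩
  have hcc : Continuous c := hcφ.subtype_mk _
  have hcadd : ∀ y z, c (y + z) = c y * c z := fun y z => Subtype.ext (by
    show φ (u (y + z)) = φ (u y) * φ (u z)
    rw [huadd, map_mul])
  let e := AddCircle.homeomorphCircle (T := 1) one_ne_zero
  have he : ∀ a b, e.symm (a * b) = e.symm a + e.symm b := by
    intro a b
    apply e.injective
    have : ∀ z, e z = AddCircle.toCircle z := fun z => AddCircle.homeomorphCircle_apply _ z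
    rw [this (_ + _), AddCircle.toCircle_add, ← this, ← this]
    simp
  refine ⟨AddMonoidHom.mk' (fun y => e.symm (c y)) ?_, ?_, ?_⟩
  · intro y z; simp only [hcadd, he]
  · exact e.symm.continuous.comp hcc
  · intro h
    have h1 : e.symm (c x) = e.symm 1 := by
      have h1 : e.symm 1 = 0 := by
        have := he 1 1
        rw [mul_one] at this
        simpa using this
      rw [h1]; exact h
    have h2 := e.symm.injective h1
    exact hφx (congrArg Subtype.val h2)

section
open MeasureTheory
open scoped ENNReal InnerProductSpace

theorem aux_comp_toLp {K : Type*} [TopologicalSpace K] [CompactSpace K] [MeasurableSpace K]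
    [BorelSpace K] (μ : Measure K) [IsFiniteMeasure μ] (m : C(K, K))
    (hm : MeasurePreserving m μ μ) (f : C(K, ℂ)) :
    Lp.compMeasurePreserving m hm (ContinuousMap.toLp 2 μ ℂ f) =
      ContinuousMap.toLp 2 μ ℂ (f.comp m) := by
  apply Lp.ext
  refine (Lp.coeFn_compMeasurePreserving _ _).trans ?_
  have h1 : (ContinuousMap.toLp 2 μ ℂ f : K → ℂ) =ᵐ[μ] f := ContinuousMap.coeFn_toLp μ f
  have h2 : (ContinuousMap.toLp 2 μ ℂ (f.comp m) : K → ℂ) =ᵐ[μ] f.comp m :=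
    ContinuousMap.coeFn_toLp μ (f.comp m)
  exact (hm.quasiMeasurePreserving.ae_eq_comp h1).trans h2.symm

set_option maxHeartbeats 400000 in
theorem aux_exists_char {K : Type*} [AddCommGroup K] [TopologicalSpace K]
    [IsTopologicalAddGroup K] [T2Space K] [CompactSpace K] (x : K) (hx : x ≠ 0) :
    ∃ χ : K →+ UnitAddCircle, Continuous χ ∧ χ x ≠ 0 := by
  classical
  letI : MeasurableSpace K := borel K
  haveI : BorelSpace K := ⟨rfl⟩
  let μ : Measure K := Measure.addHaar
  haveI : IsFiniteMeasure μ := inferInstance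
  haveI : μ.InnerRegularCompactLTTop := inferInstance
  have hmp : ∀ y : K, MeasurePreserving (fun z => y + z) μ μ := fun y =>
    measurePreserving_add_left μ y
  let V : K → (Lp ℂ 2 μ) →ₗᵢ[ℂ] (Lp ℂ 2 μ) := fun y => Lp.compMeasurePreservingₗᵢ ℂ (fun z => y + z) (hmp y)
  have hV : ∀ y (h : (Lp ℂ 2 μ)), V y h = Lp.compMeasurePreserving (fun z => y + z) (hmp y) h :=
    fun _ _ => rfl
  have hV0 : ∀ h, V 0 h = h := by
    intro h
    rw [hV]
    apply Lp.ext
    refine (Lp.coeFn_compMeasurePreserving _ _).trans ?_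
    simp [Function.comp_def]
  have hVadd : ∀ y z h, V (y + z) h = V y (V z h) := by
    intro y z h
    rw [hV, hV, hV, ← Lp.compMeasurePreserving_comp_apply]
    congr 1
    ext w; simp [add_assoc, add_left_comm]
  have hVc : ∀ h, Continuous fun y => V y h := by
    intro h
    let g : C(K, C(K, K)) := (ContinuousMap.mk (fun a : K × K ↦ a.1 + a.2) continuous_add).curry
    exact (continuous_const (y := h)).compMeasurePreservingLp g.continuous (fun y => hmp y)
      (by simp)
  have hVneg : ∀ y h, V (-y) (V y h) = h := fun y h => by rw [← hVadd, neg_add_cancel, hV0]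
  have hVneg' : ∀ y h, V y (V (-y) h) = h := fun y h => by rw [← hVadd, add_neg_cancel, hV0]
  have hVinner : ∀ y a b, ⟪a, V y b⟫_ℂ = ⟪V (-y) a, b⟫_ℂ := by
    intro y a b
    rw [← (V (-y)).inner_map_map, hVneg]
  have hVtoLp : ∀ y (f : C(K, ℂ)), V y (ContinuousMap.toLp 2 μ ℂ f) =
      ContinuousMap.toLp 2 μ ℂ (f.comp ⟨fun z => y + z, by fun_prop⟩) := by
    intro y f
    exact aux_comp_toLp μ ⟨fun z => y + z, by fun_prop⟩ (hmp y) f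
  -- the convolution-like operator
  let C0 : (Lp ℂ 2 μ) → (Lp ℂ 2 μ) →ₗ[ℂ] C(K, ℂ) := fun h =>
    { toFun := fun g => ⟨fun z => ⟪V (-z) h, g⟫_ℂ,
        ((hVc h).comp continuous_neg).inner continuous_const⟩
      map_add' := fun a b => by ext z; exact inner_add_right (𝕜 := ℂ) (V (-z) h) a b
      map_smul' := fun a b => by ext z; exact inner_smul_right (𝕜 := ℂ) (V (-z) h) b a }
  have hC0 : ∀ h g, ‖C0 h g‖ ≤ ‖h‖ * ‖g‖ := by
    intro h g
    rw [ContinuousMap.norm_le _ (by positivity)]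
    intro z
    refine (norm_inner_le_norm (𝕜 := ℂ) (V (-z) h) g).trans ?_
    rw [LinearIsometry.norm_map]
  let C : (Lp ℂ 2 μ) → (Lp ℂ 2 μ) →L[ℂ] C(K, ℂ) := fun h => (C0 h).mkContinuous ‖h‖ (hC0 h)
  have hCn : ∀ h, ‖C h‖ ≤ ‖h‖ := fun h => LinearMap.mkContinuous_norm_le _ (norm_nonneg _) _
  have hCa : ∀ h g z, C h g z = ⟪V (-z) h, g⟫_ℂ := fun _ _ _ => rfl
  let L : C(K, ℂ) →L[ℂ] (Lp ℂ 2 μ) := ContinuousMap.toLp 2 μ ℂ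
  let U : K → (Lp ℂ 2 μ) →L[ℂ] (Lp ℂ 2 μ) := fun y => (V y).toContinuousLinearMap
  have hU : ∀ y h, U y h = V y h := fun _ _ => rfl
  obtain ⟨f0, hf0, hf1, -⟩ := exists_continuous_zero_one_of_isClosed
    (isClosed_singleton (x := -x)) (isClosed_singleton (x := (0 : K)))
    (by simpa using hx)
  let f : C(K, ℂ) := ⟨fun z => (f0 z : ℂ), by fun_prop⟩
  let h : (Lp ℂ 2 μ) := L f
  let T : (Lp ℂ 2 μ) →L[ℂ] (Lp ℂ 2 μ) := L ∘L C h
  have hCU : ∀ y h, C h ∘L U y = C (V (-y) h) := by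
    intro y h
    ext g z
    show C h (V y g) z = _
    rw [hCa, hCa, hVinner, ← hVadd, ← hVadd, add_comm]
  refine aux_char_of_cstar U ?_ ?_ ?_ T ?_ ?_ x ?_
  · ext1 h; exact hV0 h
  · intro y z; ext1 h; exact hVadd y z h
  · intro y
    rw [ContinuousLinearMap.star_eq_adjoint, eq_comm, ContinuousLinearMap.eq_adjoint_iff]
    intro a b
    rw [hU, hU, hVinner]
  · intro y
    ext1 g
    show L (C h (V y g)) = V y (L (C h g))
    rw [hVtoLp]
    congr 1
    ext z
    show C h (V y g) z = C h g (y + z)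
    rw [hCa, hCa, hVinner, ← hVadd, neg_add]
  · have h1 : ∀ y, T * U y = L ∘L C (V (-y) h) := by
      intro y
      rw [← hCU]; rfl
    have hCsub : ∀ a b, C a - C b = C (a - b) := by
      intro a b; ext g z
      show C a g z - C b g z = C (a - b) g z
      rw [hCa, hCa, hCa, map_sub, inner_sub_left]
    have hCc : Continuous C := by
      refine LipschitzWith.continuous (K := 1) (LipschitzWith.of_dist_le_mul fun a b => ?_)
      rw [dist_eq_norm, dist_eq_norm, hCsub]
      simpa using hCn (a - b)
    simp_rw [h1]
    have := hCc.comp ((hVc h).comp continuous_neg)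
    exact continuous_const.clm_comp this
  · intro heq
    have h1 : ∀ g, C h (V x g) = C h g := by
      intro g
      apply ContinuousMap.toLp_injective (p := 2) (𝕜 := ℂ) μ
      exact congrArg (fun A : (Lp ℂ 2 μ) →L[ℂ] (Lp ℂ 2 μ) => A g) heq
    have h2 : ∀ g, ⟪V (-x) h, g⟫_ℂ = ⟪h, g⟫_ℂ := by
      intro g
      have := congrArg (fun k : C(K, ℂ) => k 0) (h1 g)
      simp only [hCa, neg_zero, hV0] at this
      rw [← hVinner, this]
    have h3 : V (-x) h = h := ext_inner_right ℂ h2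
    have h4 : f.comp ⟨fun z => -x + z, by fun_prop⟩ = f := by
      apply ContinuousMap.toLp_injective (p := 2) (𝕜 := ℂ) μ
      rw [← hVtoLp]; exact h3
    have h5 := congrArg (fun k : C(K, ℂ) => k 0) h4
    have h6 : f0 (-x) = f0 0 := by simpa [f] using h5
    have h7 := hf0 (Set.mem_singleton (-x))
    have h8 := hf1 (Set.mem_singleton (0 : K))
    rw [h7, h8] at h6
    simp at h6

end

theorem aux_torus {G : Type*} [AddCommGroup G]
    [TopologicalSpace G] [IsTopologicalAddGroup G] [T2Space G]
    (hpre : IsPrecompact G) (V : Set G) (hV : V ∈ nhds (0 : G)) :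
    ∃ (n : ℕ) (f : G →+ (Fin n → UnitAddCircle)), Continuous f ∧
      ∃ O ∈ nhds (0 : G), ∀ a, f a = 0 → ∀ o ∈ O, a + o ∈ V := by
  classical
  letI : UniformSpace G := IsTopologicalAddGroup.rightUniformSpace G
  haveI : IsUniformAddGroup G := isUniformAddGroup_of_addCommGroup
  have htb : TotallyBounded (Set.univ : Set G) := by
    rw [totallyBounded_iff_subset_finite_iUnion_nhds_zero]
    intro W hW
    obtain ⟨F, hF⟩ := hpre W hW
    refine ⟨F, F.finite_toSet, fun x _ => ?_⟩
    obtain ⟨y, hy, hxy⟩ := hF x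
    refine Set.mem_iUnion₂.2 ⟨y, hy, ?_⟩
    exact Set.mem_vadd_set.2 ⟨x - y, hxy, by simp⟩
  let K := UniformSpace.Completion G
  let i : G →+ K := UniformSpace.Completion.toCompl
  have hi : IsDenseInducing i := UniformSpace.Completion.isDenseInducing_toCompl G
  haveI : CompactSpace K := by
    constructor
    have h1 : TotallyBounded (closure (i '' Set.univ)) :=
      (htb.image (UniformSpace.Completion.uniformContinuous_coe G)).closure
    rw [Set.image_univ, hi.dense.closure_range] at h1
    exact h1.isCompact_of_isClosed isClosed_univ
  obtain ⟨U', hU', hUV⟩ : ∃ U' ∈ nhds (0 : K), i ⁻¹' U' ⊆ V := by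
    have := hi.nhds_eq_comap 0
    rw [this, map_zero] at hV
    exact hV
  obtain ⟨U, hUU', hUo, h0U⟩ := mem_nhds_iff.1 hU'
  have hcpt : IsCompact (Uᶜ : Set K) := hUo.isClosed_compl.isCompact
  have hch : ∀ x : K, x ∈ Uᶜ → ∃ χ : K →+ UnitAddCircle, Continuous χ ∧ χ x ≠ 0 :=
    fun x hx => aux_exists_char x (by rintro rfl; exact hx h0U)
  choose! χ hχc hχ using hch
  obtain ⟨t, htU, ht⟩ := hcpt.elim_nhds_subcover (fun x => {z | χ x z ≠ 0}) (fun x hx =>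
    (isOpen_ne.preimage (hχc x hx)).mem_nhds (hχ x hx))
  let e := t.equivFin
  let F : K →+ (Fin t.card → UnitAddCircle) := AddMonoidHom.pi fun j => χ (e.symm j)
  have hFc : Continuous F := continuous_pi fun j => hχc _ (htU _ (e.symm j).2)
  let L : Set K := {z | F z = 0}
  have hL : IsClosed L := isClosed_singleton.preimage hFc
  have hLU : L ⊆ U := by
    intro z hz
    by_contra hzU
    obtain ⟨x, hx, hzx⟩ := Set.mem_iUnion₂.1 (ht hzU)
    apply hzx
    have := congrFun hz (e ⟨x, hx⟩)
    simpa [F] using this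
  obtain ⟨O, hO, hLO⟩ := compact_open_separated_add_right hL.isCompact hUo hLU
  refine ⟨t.card, F.comp i, hFc.comp hi.continuous, i ⁻¹' O, ?_, ?_⟩
  · apply hi.continuous.continuousAt.preimage_mem_nhds
    rwa [map_zero]
  · intro a ha o ho
    apply hUV
    apply hUU'
    apply hLO
    show i (a + o) ∈ _
    rw [map_add]
    exact Set.add_mem_add ha ho

theorem aux_le_of_nhds {A : Type*} [AddGroup A] (s t : TopologicalSpace A)
    (hs : @IsTopologicalAddGroup A s _) (ht : @IsTopologicalAddGroup A t _)
    (h : @nhds A s 0 ≤ @nhds A t 0) : s ≤ t := by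
  rw [← continuous_id_iff_le]
  exact @continuous_of_continuousAt_zero A s _ hs A (A →+ A) _ t (@IsTopologicalAddGroup.toContinuousAdd A t _ ht) _ _ (AddMonoidHom.id A) h

theorem aux_nbhd_add {A : Type*} [AddGroup A] [TopologicalSpace A] [IsTopologicalAddGroup A]
    (W : Set A) (hW : W ∈ nhds (0 : A)) :
    ∃ W' ∈ nhds (0 : A), ∀ a ∈ W', ∀ b ∈ W', a + b ∈ W := by
  obtain ⟨W', h1, h2⟩ := exists_nhds_zero_half hW
  exact ⟨W', h1, h2⟩

/-- Basic neighbourhoods `W + O`. -/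
def auxSet {G : Type*} [AddCommGroup G] (N : AddSubgroup G) (W : Set N) (O : Set G) : Set G :=
  {a | ∃ w ∈ W, ∃ o ∈ O, (w : G) + o = a}

theorem aux_minimal {G : Type*} [AddCommGroup G]
    [τ : TopologicalSpace G] [IsTopologicalAddGroup G] [T2Space G]
    (V : Set G) (hV : ∀ σ : TopologicalSpace G, τ ≤ σ →
      @IsTopologicalAddGroup G σ _ → @T2Space G σ → V ∈ @nhds G σ 0 → σ = τ)
    (N : AddSubgroup G) (hN : IsClosed (N : Set G))
    (O : Set G) (hO : O ∈ nhds (0 : G)) (hNO : ∀ a ∈ N, ∀ o ∈ O, a + o ∈ V) :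
    IsMinimal N := by
  have hNg : IsTopologicalAddGroup N := inferInstance
  intro σ hσ hσg hσ2
  let B : AddGroupFilterBasis G := addGroupFilterBasisOfComm
    {S | ∃ W ∈ @nhds N σ 0, ∃ P ∈ nhds (0 : G), S = auxSet N W P}
    ⟨_, Set.univ, Filter.univ_mem, Set.univ, Filter.univ_mem, rfl⟩
    (by
      rintro _ _ ⟨W, hW, P, hP, rfl⟩ ⟨W', hW', P', hP', rfl⟩
      refine ⟨_, ⟨W ∩ W', Filter.inter_mem hW hW', P ∩ P', Filter.inter_mem hP hP', rfl⟩, ?_⟩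
      rintro _ ⟨w, hw, o, ho, rfl⟩
      exact ⟨⟨w, hw.1, o, ho.1, rfl⟩, ⟨w, hw.2, o, ho.2, rfl⟩⟩)
    (by
      rintro _ ⟨W, hW, P, hP, rfl⟩
      exact ⟨0, @mem_of_mem_nhds N σ _ _ hW, 0, mem_of_mem_nhds hP, by simp⟩)
    (by
      rintro _ ⟨W, hW, P, hP, rfl⟩
      obtain ⟨W', hW', hWW⟩ := @aux_nbhd_add N _ σ hσg W hW
      obtain ⟨P', hP', hPP⟩ := aux_nbhd_add P hP
      refine ⟨_, ⟨W', hW', P', hP', rfl⟩, ?_⟩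
      rintro _ ⟨_, ⟨w, hw, o, ho, rfl⟩, _, ⟨w', hw', o', ho', rfl⟩, rfl⟩
      refine ⟨w + w', hWW _ hw _ hw', o + o', hPP _ ho _ ho', ?_⟩
      push_cast
      show _ = ((w : G) + o) + (w' + o')
      abel)
    (by
      rintro _ ⟨W, hW, P, hP, rfl⟩
      have hW' : (Neg.neg ⁻¹' W) ∈ @nhds N σ 0 := by
        letI := σ
        exact continuous_neg.continuousAt.preimage_mem_nhds (by simpa using hW)
      have hP' : (Neg.neg ⁻¹' P) ∈ nhds (0 : G) :=
        continuous_neg.continuousAt.preimage_mem_nhds (by simpa using hP)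
      refine ⟨_, ⟨_, hW', _, hP', rfl⟩, ?_⟩
      rintro _ ⟨w, hw, o, ho, rfl⟩
      exact ⟨-w, hw, -o, ho, by push_cast; abel⟩)
  have hmem : ∀ S, S ∈ @nhds G B.topology 0 ↔
      ∃ W ∈ @nhds N σ 0, ∃ P ∈ nhds (0 : G), auxSet N W P ⊆ S := by
    intro S
    rw [B.nhds_zero_hasBasis.mem_iff]
    constructor
    · rintro ⟨_, ⟨W, hW, P, hP, rfl⟩, h⟩
      exact ⟨W, hW, P, hP, h⟩
    · rintro ⟨W, hW, P, hP, h⟩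
      exact ⟨_, ⟨W, hW, P, hP, rfl⟩, h⟩
  have hBg : @IsTopologicalAddGroup G B.topology _ := B.isTopologicalAddGroup
  have hσ0 : ∀ W ∈ @nhds N σ 0, ∃ P ∈ nhds (0 : G), ∀ n : N, (n : G) ∈ P → n ∈ W := by
    intro W hW
    have h1 : W ∈ @nhds N instTopologicalSpaceSubtype 0 := nhds_mono hσ hW
    rw [nhds_subtype, Filter.mem_comap] at h1
    obtain ⟨P, hP, h⟩ := h1
    exact ⟨P, hP, fun n hn => h hn⟩
  have hB : B.topology = τ := by
    apply hV _ _ hBg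
    · apply @IsTopologicalAddGroup.t2Space_of_zero_sep G B.topology _ hBg
      intro x hx
      by_cases hxN : x ∈ N
      · have hx' : (⟨x, hxN⟩ : N) ≠ 0 := fun h => hx (congrArg Subtype.val h)
        have hW : {(⟨x, hxN⟩ : N)}ᶜ ∈ @nhds N σ 0 := by
          letI := σ
          exact isOpen_compl_singleton.mem_nhds (by simpa using hx'.symm)
        obtain ⟨W', hW', hWW⟩ := @aux_nbhd_add N _ σ hσg _ hW
        obtain ⟨P, hP, hPW⟩ := hσ0 W' hW'
        refine ⟨auxSet N W' P, (hmem _).2 ⟨W', hW', P, hP, subset_rfl⟩, ?_⟩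
        rintro ⟨w, hw, o, ho, hwo⟩
        have hoN : o ∈ N := by
          have : o = x - w := by rw [← hwo]; abel
          rw [this]; exact N.sub_mem hxN w.2
        exact hWW w hw ⟨o, hoN⟩ (hPW ⟨o, hoN⟩ ho) (Subtype.ext hwo)
      · let P : Set G := {o | x - o ∉ N}
        have hP : P ∈ nhds (0 : G) := by
          have hc : Continuous fun o : G => x - o := by fun_prop
          exact (hN.isOpen_compl.preimage hc).mem_nhds (by simpa using hxN)
        refine ⟨auxSet N Set.univ P, (hmem _).2 ⟨_, Filter.univ_mem, P, hP, subset_rfl⟩, ?_⟩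
        rintro ⟨w, hw, o, ho, hwo⟩
        apply ho
        have : x - o = w := by rw [← hwo]; abel
        rw [this]; exact w.2
    · rw [hmem]
      refine ⟨Set.univ, Filter.univ_mem, O, hO, ?_⟩
      rintro _ ⟨w, -, o, ho, rfl⟩
      exact hNO w w.2 o ho
    · apply aux_le_of_nhds _ _ inferInstance hBg
      intro S hS
      obtain ⟨W, hW, P, hP, h⟩ := (hmem S).1 hS
      filter_upwards [hP] with o ho
      exact h ⟨0, @mem_of_mem_nhds N σ _ _ hW, o, ho, by simp⟩
  refine le_antisymm ?_ hσ
  apply aux_le_of_nhds σ instTopologicalSpaceSubtype hσg hNg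
  intro S hS
  rw [nhds_subtype, Filter.mem_comap] at hS
  obtain ⟨Q, hQ, hQS⟩ := hS
  have hQ' : Q ∈ @nhds G B.topology 0 := by rw [hB]; exact hQ
  obtain ⟨W, hW, P, hP, h⟩ := (hmem Q).1 hQ'
  refine Filter.mem_of_superset hW fun w hw => hQS (h ⟨w, hw, 0, mem_of_mem_nhds hP, by simp⟩)

/-- A precompact Hausdorff locally minimal abelian topological group `G` has a closed
minimal subgroup `N` such that `G/N` admits a continuous injective homomorphism into a
finite-dimensional torus `𝕋^n`. -/
theorem precompact_locallyMinimal_quotient_into_torus {G : Type*} [AddCommGroup G]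
    [TopologicalSpace G] [IsTopologicalAddGroup G] [T2Space G]
    (hpre : IsPrecompact G) (hlm : LocallyMinimal G) :
    ∃ N : AddSubgroup G, IsClosed (N : Set G) ∧ IsMinimal ↥N ∧
      ∃ (n : ℕ) (f : G ⧸ N →+ (Fin n → UnitAddCircle)),
        Continuous f ∧ Function.Injective f := by
  obtain ⟨V, hV, hmin⟩ := hlm
  obtain ⟨n, f, hf, O, hO, hfO⟩ := aux_torus hpre V hV
  have hcl : IsClosed (f.ker : Set G) := isClosed_singleton.preimage hf
  refine ⟨f.ker, hcl, aux_minimal V hmin f.ker hcl O hO (fun a ha => hfO a ha), n,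
    QuotientAddGroup.kerLift f, ?_, QuotientAddGroup.kerLift_injective f⟩
  exact Continuous.quotient_lift hf _
end
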